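/- Assume f satisfies (f1) and (f2). Then any nonnegative nontrivial weak solution v of the extension problem (P) is radially symmetric in the y-variable with respect to some point y₀ ∈ ℝ^N: there exists y₀ ∈ ℝ^N such that v(x,y) = v(x,y′) whenever |y − y₀| = |y′ − y₀|. -/

import Mathlib

open MeasureTheory Real Set Filter Topology
open scoped ENNReal NNReal

noncomputable section

abbrev EN (N : ℕ) := EuclideanSpace ℝ (Fin N)

/-- The open upper half-space `(0,∞) × ℝ^N`. -/
def upperHalf (N : ℕ) : Set (ℝ × EN N) := {p | 0 < p.1}

/-- The closed upper half-space `[0,∞) × ℝ^N`. -/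
def closedHalf (N : ℕ) : Set (ℝ × EN N) := {p | 0 ≤ p.1}

/-- The unit vector in the `x` direction. -/
def ex (N : ℕ) : ℝ × EN N := (1, 0)

/-- The unit vector in the `yᵢ` direction. -/
def ey {N : ℕ} (i : Fin N) : ℝ × EN N := (0, EuclideanSpace.single i 1)

/-- Pointwise dot product of the gradients of `u` and `v`. -/
def gradDot {N : ℕ} (u v : ℝ × EN N → ℝ) (p : ℝ × EN N) : ℝ :=
  fderiv ℝ u p (ex N) * fderiv ℝ v p (ex N)
    + ∑ i : Fin N, fderiv ℝ u p (ey i) * fderiv ℝ v p (ey i)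

/-- `|∇u|²`. -/
def gradSq {N : ℕ} (u : ℝ × EN N → ℝ) (p : ℝ × EN N) : ℝ := gradDot u u p

/-- The Laplacian in the `N+1` variables. -/
def lap {N : ℕ} (u : ℝ × EN N → ℝ) (p : ℝ × EN N) : ℝ :=
  fderiv ℝ (fun q => fderiv ℝ u q (ex N)) p (ex N)
    + ∑ i : Fin N, fderiv ℝ (fun q => fderiv ℝ u q (ey i)) p (ey i)

/-- Membership in `H¹(ℝ^{N+1}_+)` (with the weak gradient realized as the pointwise
gradient on the open half-space, and continuity up to the boundary so that the trace
`γ(u)(y) = u(0,y)` is meaningful). -/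
structure MemH1 {N : ℕ} (u : ℝ × EN N → ℝ) : Prop where
  contOn : ContinuousOn u (closedHalf N)
  diff : ∀ p ∈ upperHalf N, DifferentiableAt ℝ u p
  memL2 : Integrable (fun p => u p ^ 2) (volume.restrict (upperHalf N))
  gradL2 : Integrable (fun p => gradSq u p) (volume.restrict (upperHalf N))

/-- The squared `H¹(ℝ^{N+1}_+)`-norm `‖u‖² = ∬ (|∇u|² + u²)`. -/
def H1normSq {N : ℕ} (u : ℝ × EN N → ℝ) : ℝ :=
  ∫ p in upperHalf N, (gradSq u p + u p ^ 2)

/-- `u` is a weak solution of the extension problem (P):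
`−Δu + m²u = 0` in `ℝ^{N+1}_+`, `−∂u/∂x(0,y) = f(u(0,y))` on `ℝ^N`. -/
def IsWeakSolution {N : ℕ} (m : ℝ) (f : ℝ → ℝ) (u : ℝ × EN N → ℝ) : Prop :=
  MemH1 u ∧
  ∀ φ : ℝ × EN N → ℝ, MemH1 φ →
    ∫ p in upperHalf N, (gradDot u φ p + m ^ 2 * u p * φ p)
      = ∫ y : EN N, f (u (0, y)) * φ (0, y)

/-- The primitive `F(t) = ∫₀ᵗ f(s) ds`. -/
def Fprim (f : ℝ → ℝ) (t : ℝ) : ℝ := ∫ s in (0:ℝ)..t, f s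

/-- Hypotheses on the nonlinearity `f`: `f` is `C¹`, vanishes on `(−∞,0]`, and satisfies
`(f1)` `lim_{t→0} f(t)/t = 0` and `(f2)` `lim_{t→∞} f(t)/tᵖ = 0` for some
`p ∈ (1, (N+1)/(N−1))`. -/
structure HypF (N : ℕ) (f : ℝ → ℝ) : Prop where
  smooth : ContDiff ℝ 1 f
  nonpos : ∀ t ≤ (0:ℝ), f t = 0
  f1 : Tendsto (fun t => f t / t) (𝓝[≠] (0:ℝ)) (𝓝 0)
  f2 : ∃ p : ℝ, 1 < p ∧ p < ((N : ℝ) + 1) / ((N : ℝ) - 1) ∧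
    Tendsto (fun t => f t / t ^ p) atTop (𝓝 0)

/-- The energy functional `J`. -/
def J {N : ℕ} (m : ℝ) (f : ℝ → ℝ) (u : ℝ × EN N → ℝ) : ℝ :=
  (1 / 2) * (∫ p in upperHalf N, (gradSq u p + m ^ 2 * u p ^ 2))
    - ∫ y : EN N, Fprim f (u (0, y))

/-- The derivative of the energy functional, `J′(u)·φ`. -/
def Jder {N : ℕ} (m : ℝ) (f : ℝ → ℝ) (u φ : ℝ × EN N → ℝ) : ℝ :=
  (∫ p in upperHalf N, (gradDot u φ p + m ^ 2 * u p * φ p))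
    - ∫ y : EN N, f (u (0, y)) * φ (0, y)

/-!
Testing the weak formulation against explicit Bessel-type solutions of `-Δφ + m²φ = 0` turns the
problem into an equation for the trace `u = v(0, ·)` alone: `√(-Δ + m²) u = f(u)`, in the integral
form `C u = G * (f(u) + K u)` with a positive kernel `G`, integrable and strictly decreasing in
`|y|`. The growth condition on `f`, the trace inequality and a bootstrap on the integral equation
give `u` bounded, so for `K` large `t ↦ f(t) + K t` is increasing on the range of `u`.

Now move planes in the integral equation. In the half-space `⟪y, e⟫ > l` the difference of `u` and
its reflection is an integral over that half-space against the positive kernel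
`G(y - z) - G(y - z*)`, where `z*` is the reflection of `z`. Where `u` is small the nonlinearity is
a contraction because `f'(0) = 0`, and the set where `u` is not small has finite measure, so the
reflection dominates for large `l`; the plane stops at a position of symmetry. Doing this in every
direction gives hyperplanes of symmetry, and they pass through a common point because `u` is square
integrable, hence not periodic.

Finally, if the trace is symmetric in a hyperplane, the odd part of `v` is a test function with zero
trace; its energy then vanishes, so `v` is symmetric as well.
-/

/-! ### Calculus on the half-space -/

section HalfSpace

variable {N : ℕ}

lemma upperHalf_subset_closedHalf (N : ℕ) : upperHalf N ⊆ closedHalf N :=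
  fun p hp => le_of_lt (show (0 : ℝ) < p.1 from hp)

lemma zero_mk_mem_closedHalf (y : EN N) : ((0 : ℝ), y) ∈ closedHalf N :=
  le_refl (0 : ℝ)

lemma isOpen_upperHalf (N : ℕ) : IsOpen (upperHalf N) :=
  isOpen_lt continuous_const continuous_fst

lemma measurableSet_upperHalf (N : ℕ) : MeasurableSet (upperHalf N) :=
  (isOpen_upperHalf N).measurableSet

lemma volume_restrict_upperHalf (N : ℕ) :
    (volume : Measure (ℝ × EN N)).restrict (upperHalf N)
      = (volume.restrict (Ioi (0 : ℝ))).prod (volume : Measure (EN N)) := by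
  have h : upperHalf N = Ioi (0 : ℝ) ×ˢ (univ : Set (EN N)) := by
    ext p; simp [upperHalf]
  rw [h, Measure.volume_eq_prod, ← Measure.prod_restrict, Measure.restrict_univ]

lemma hasDerivAt_slice_fst {w : ℝ × EN N → ℝ} {x : ℝ} {y : EN N}
    (h : DifferentiableAt ℝ w (x, y)) :
    HasDerivAt (fun r => w (r, y)) (fderiv ℝ w (x, y) (ex N)) x :=
  h.hasFDerivAt.comp_hasDerivAt x ((hasDerivAt_id x).prodMk (hasDerivAt_const x y))

lemma hasLineDerivAt_slice_snd {w : ℝ × EN N → ℝ} {x : ℝ} {y : EN N} (e : EN N)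
    (h : DifferentiableAt ℝ w (x, y)) :
    HasLineDerivAt ℝ (fun y' => w (x, y')) (fderiv ℝ w (x, y) (0, e)) y e := by
  have h1 : HasLineDerivAt ℝ w (fderiv ℝ w (x, y) (0, e)) (x, y) (0, e) :=
    h.hasFDerivAt.hasLineDerivAt _
  simpa [HasLineDerivAt] using h1

lemma integral_fderiv_ex_upperHalf {w : ℝ × EN N → ℝ} (hc : ContinuousOn w (closedHalf N))
    (hd : ∀ p ∈ upperHalf N, DifferentiableAt ℝ w p) (hw : IntegrableOn w (upperHalf N))
    (hw' : IntegrableOn (fun p => fderiv ℝ w p (ex N)) (upperHalf N)) :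
    Integrable (fun y => w (0, y)) ∧
      ∫ p in upperHalf N, fderiv ℝ w p (ex N) = -∫ y, w (0, y) := by
  rw [IntegrableOn, volume_restrict_upperHalf] at hw hw'
  have hslice : ∀ᵐ y : EN N, ∫ x in Ioi (0 : ℝ), fderiv ℝ w (x, y) (ex N) = -w (0, y) := by
    filter_upwards [hw.prod_left_ae, hw'.prod_left_ae] with y hwy hwy'
    have hderiv : ∀ x ∈ Ioi (0 : ℝ), HasDerivAt (fun r => w (r, y)) _ x :=
      fun x hx => hasDerivAt_slice_fst (hd (x, y) hx)
    have hcy : ContinuousWithinAt (fun x => w (x, y)) (Ici 0) 0 :=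
      ContinuousWithinAt.comp (t := closedHalf N) (f := fun x : ℝ => (x, y))
        (hc _ (zero_mk_mem_closedHalf y)) (by fun_prop) fun x hx => hx
    have htop := tendsto_zero_of_hasDerivAt_of_integrableOn_Ioi hderiv hwy' hwy
    simpa using integral_Ioi_of_hasDerivAt_of_tendsto hcy hderiv hwy' htop
  constructor
  · simpa using (hw'.integral_prod_right.congr hslice).neg
  · rw [volume_restrict_upperHalf, integral_prod_symm _ hw', ← integral_neg]
    exact integral_congr_ae hslice

lemma integral_fderiv_snd_upperHalf {w : ℝ × EN N → ℝ} (e : EN N)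
    (hd : ∀ p ∈ upperHalf N, DifferentiableAt ℝ w p) (hw : IntegrableOn w (upperHalf N))
    (hw' : IntegrableOn (fun p => fderiv ℝ w p (0, e)) (upperHalf N)) :
    ∫ p in upperHalf N, fderiv ℝ w p (0, e) = 0 := by
  rw [IntegrableOn, volume_restrict_upperHalf] at hw hw'
  have hslice : ∀ᵐ x ∂(volume.restrict (Ioi (0 : ℝ))),
      ∫ y : EN N, fderiv ℝ w (x, y) (0, e) = 0 := by
    filter_upwards [hw.prod_right_ae, hw'.prod_right_ae, ae_restrict_mem measurableSet_Ioi]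
      with x hwx hwx' hx
    have := integral_bilinear_hasLineDerivAt_right_eq_neg_left_of_integrable
      (μ := (volume : Measure (EN N))) (f := fun y => w (x, y))
      (f' := fun y => fderiv ℝ w (x, y) (0, e)) (g := fun _ => (1 : ℝ)) (g' := fun _ => 0)
      (v := e) (B := ContinuousLinearMap.mul ℝ ℝ)
      (by simpa using hwx') (by simp) (by simpa using hwx)
      (fun y _ => hasLineDerivAt_slice_snd e (hd (x, y) hx))
      (fun y _ => by simpa [HasLineDerivAt] using hasDerivAt_const (0 : ℝ) (1 : ℝ))
    simpa using this
  rw [volume_restrict_upperHalf, integral_prod _ hw', integral_congr_ae hslice,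
    integral_zero]

lemma measurable_gradSq (v : ℝ × EN N → ℝ) : Measurable (gradSq v) := by
  unfold gradSq gradDot
  exact ((measurable_fderiv_apply_const ℝ v _).mul (measurable_fderiv_apply_const ℝ v _)).add
    (Finset.measurable_fun_sum _ fun i _ =>
      (measurable_fderiv_apply_const ℝ v _).mul (measurable_fderiv_apply_const ℝ v _))

lemma sq_fderiv_ex_le_gradSq (v : ℝ × EN N → ℝ) (p : ℝ × EN N) :
    fderiv ℝ v p (ex N) ^ 2 ≤ gradSq v p := by
  have : 0 ≤ ∑ i : Fin N, fderiv ℝ v p (ey i) * fderiv ℝ v p (ey i) :=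
    Finset.sum_nonneg fun i _ => mul_self_nonneg _
  simp only [gradSq, gradDot]
  nlinarith

lemma sq_fderiv_ey_le_gradSq (v : ℝ × EN N → ℝ) (p : ℝ × EN N) (i : Fin N) :
    fderiv ℝ v p (ey i) ^ 2 ≤ gradSq v p := by
  have := Finset.single_le_sum (f := fun i => fderiv ℝ v p (ey i) * fderiv ℝ v p (ey i))
    (fun i _ => mul_self_nonneg _) (Finset.mem_univ i)
  simp only [gradSq, gradDot]
  nlinarith [mul_self_nonneg (fderiv ℝ v p (ex N))]

lemma gradSq_nonneg (v : ℝ × EN N → ℝ) (p : ℝ × EN N) : 0 ≤ gradSq v p :=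
  (sq_nonneg _).trans (sq_fderiv_ex_le_gradSq v p)

lemma integrable_mul_of_integrable_sq {α : Type*} [MeasurableSpace α] {μ : Measure α}
    {a b : α → ℝ} (ha : AEStronglyMeasurable a μ) (hb : AEStronglyMeasurable b μ)
    (ha2 : Integrable (fun p => a p ^ 2) μ) (hb2 : Integrable (fun p => b p ^ 2) μ) :
    Integrable (fun p => a p * b p) μ :=
  ((memLp_two_iff_integrable_sq ha).2 ha2).integrable_mul ((memLp_two_iff_integrable_sq hb).2 hb2)

end HalfSpace

namespace MemH1

variable {N : ℕ} {u v : ℝ × EN N → ℝ}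

lemma aestronglyMeasurable (hv : MemH1 v) :
    AEStronglyMeasurable v (volume.restrict (upperHalf N)) :=
  (hv.contOn.mono (upperHalf_subset_closedHalf N)).aestronglyMeasurable
    (measurableSet_upperHalf N)

lemma continuous_trace (hv : MemH1 v) : Continuous (fun y => v (0, y)) :=
  hv.contOn.comp_continuous (by fun_prop) zero_mk_mem_closedHalf

lemma integrableOn_mul (hu : MemH1 u) (hv : MemH1 v) :
    IntegrableOn (fun p => u p * v p) (upperHalf N) :=
  integrable_mul_of_integrable_sq hu.aestronglyMeasurable hv.aestronglyMeasurable hu.memL2 hv.memL2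

lemma integrableOn_sq_fderiv_ex (hv : MemH1 v) :
    IntegrableOn (fun p => fderiv ℝ v p (ex N) ^ 2) (upperHalf N) :=
  hv.gradL2.mono' ((measurable_fderiv_apply_const ℝ v _).pow_const 2).aestronglyMeasurable
    (Eventually.of_forall fun p => by simpa using sq_fderiv_ex_le_gradSq v p)

lemma integrableOn_sq_fderiv_ey (hv : MemH1 v) (i : Fin N) :
    IntegrableOn (fun p => fderiv ℝ v p (ey i) ^ 2) (upperHalf N) :=
  hv.gradL2.mono' ((measurable_fderiv_apply_const ℝ v _).pow_const 2).aestronglyMeasurable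
    (Eventually.of_forall fun p => by simpa using sq_fderiv_ey_le_gradSq v p i)

lemma integrableOn_mul_fderiv (hv : MemH1 v) {e : ℝ × EN N}
    (he : IntegrableOn (fun p => fderiv ℝ u p e ^ 2) (upperHalf N)) :
    IntegrableOn (fun p => v p * fderiv ℝ u p e) (upperHalf N) :=
  integrable_mul_of_integrable_sq hv.aestronglyMeasurable
    (measurable_fderiv_apply_const ℝ u _).aestronglyMeasurable hv.memL2 he

lemma integrableOn_gradDot (hu : MemH1 u) (hv : MemH1 v) :
    IntegrableOn (gradDot u v) (upperHalf N) := by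
  have hm : ∀ (w : ℝ × EN N → ℝ) (e : ℝ × EN N), AEStronglyMeasurable (fun p => fderiv ℝ w p e)
      (volume.restrict (upperHalf N)) :=
    fun w e => (measurable_fderiv_apply_const ℝ w e).aestronglyMeasurable
  exact (integrable_mul_of_integrable_sq (hm u _) (hm v _) hu.integrableOn_sq_fderiv_ex
    hv.integrableOn_sq_fderiv_ex).add (integrable_finsetSum _ fun i _ =>
      integrable_mul_of_integrable_sq (hm u _) (hm v _) (hu.integrableOn_sq_fderiv_ey i)
        (hv.integrableOn_sq_fderiv_ey i))

lemma fderiv_sq_apply (hv : MemH1 v) {p : ℝ × EN N} (hp : p ∈ upperHalf N) (e : ℝ × EN N) :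
    fderiv ℝ (fun q => v q ^ 2) p e = 2 * (v p * fderiv ℝ v p e) := by
  simp [fderiv_fun_pow 2 (hv.diff p hp), mul_assoc]

lemma integrableOn_fderiv_sq (hv : MemH1 v) {e : ℝ × EN N}
    (he : IntegrableOn (fun p => fderiv ℝ v p e ^ 2) (upperHalf N)) :
    IntegrableOn (fun p => fderiv ℝ (fun q => v q ^ 2) p e) (upperHalf N) :=
  IntegrableOn.congr_fun ((hv.integrableOn_mul_fderiv he).const_mul 2)
    (fun _ hp => (hv.fderiv_sq_apply hp e).symm) (measurableSet_upperHalf N)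

lemma integrable_trace_sq (hv : MemH1 v) : Integrable (fun y => v (0, y) ^ 2) :=
  (integral_fderiv_ex_upperHalf (hv.contOn.pow 2) (fun p hp => (hv.diff p hp).pow 2) hv.memL2
    (hv.integrableOn_fderiv_sq hv.integrableOn_sq_fderiv_ex)).1

end MemH1

section Displacement

variable {N : ℕ} (a : ℝ) (z : EN N) (p : ℝ × EN N)

/-- The squared Euclidean distance from `p` to the point `(-a, z)`, where `ℝ × EN N` itself carries
the sup norm. -/
def sqDist : ℝ := (p.1 + a) ^ 2 + ‖p.2 - z‖ ^ 2

/-- The Euclidean pairing with the displacement from `(-a, z)` to `p`, which is half the derivative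
of `sqDist a z` at `p`. -/
def dispForm : (ℝ × EN N) →L[ℝ] ℝ :=
  (p.1 + a) • ContinuousLinearMap.fst ℝ ℝ (EN N)
    + (innerSL ℝ (p.2 - z)).comp (ContinuousLinearMap.snd ℝ ℝ (EN N))

lemma sqDist_nonneg : 0 ≤ sqDist a z p := by
  unfold sqDist; positivity

lemma dispForm_apply (w : ℝ × EN N) :
    dispForm a z p w = (p.1 + a) * w.1 + inner ℝ (p.2 - z) w.2 := by
  rfl

lemma dispForm_ex : dispForm a z p (ex N) = p.1 + a := by
  simp [dispForm_apply, ex]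

lemma dispForm_ey (i : Fin N) : dispForm a z p (ey i) = p.2 i - z i := by
  simp [dispForm_apply, ey, EuclideanSpace.inner_single_right]

lemma sq_dispForm_ex_add_sum :
    dispForm a z p (ex N) ^ 2 + ∑ i, dispForm a z p (ey i) ^ 2 = sqDist a z p := by
  simp [dispForm_ex, dispForm_ey, sqDist, EuclideanSpace.norm_sq_eq]

lemma sq_dispForm_le (w : ℝ × EN N) :
    dispForm a z p w ^ 2 ≤ (w.1 ^ 2 + ‖w.2‖ ^ 2) * sqDist a z p := by
  have hinner : |inner ℝ (p.2 - z) w.2| ≤ ‖p.2 - z‖ * ‖w.2‖ := abs_real_inner_le_norm _ _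
  calc dispForm a z p w ^ 2
      ≤ (|p.1 + a| * |w.1| + ‖p.2 - z‖ * ‖w.2‖) ^ 2 := by
        rw [dispForm_apply, ← sq_abs]
        gcongr
        exact (abs_add_le _ _).trans (by rw [abs_mul]; gcongr)
    _ ≤ (|w.1| ^ 2 + ‖w.2‖ ^ 2) * (|p.1 + a| ^ 2 + ‖p.2 - z‖ ^ 2) := by
        nlinarith [sq_nonneg (|p.1 + a| * ‖w.2‖ - |w.1| * ‖p.2 - z‖)]
    _ = (w.1 ^ 2 + ‖w.2‖ ^ 2) * sqDist a z p := by simp only [sq_abs, sqDist]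

lemma hasFDerivAt_sqDist : HasFDerivAt (sqDist a z) ((2 : ℝ) • dispForm a z p) p := by
  refine (((hasFDerivAt_fst.add_const a).pow 2).add
    ((hasFDerivAt_snd.sub_const z).norm_sq)).congr_fderiv ?_
  ext w
  · simp [dispForm_apply]; ring
  · simp [dispForm_apply, inner_sub_left]

lemma continuous_sqDist : Continuous (sqDist a z) := by
  unfold sqDist; fun_prop

end Displacement

/-! ### A Hardy-type trace inequality -/

section TraceInequality

variable {N : ℕ}

/-- Bounded differentiable functions with bounded derivative in the direction `e`: the
components of the vector fields along which the divergence theorem is applied. -/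
structure BoundedAlong (e : ℝ × EN N) (a : ℝ × EN N → ℝ) : Prop where
  diff : Differentiable ℝ a
  bdd : ∃ C, ∀ p, |a p| ≤ C
  bdd_fderiv : ∃ C, ∀ p, |fderiv ℝ a p e| ≤ C

lemma MemH1.fderiv_sq_mul_apply {v a : ℝ × EN N → ℝ} (hv : MemH1 v) {p : ℝ × EN N}
    (hp : p ∈ upperHalf N) (ha : DifferentiableAt ℝ a p) (e : ℝ × EN N) :
    fderiv ℝ (fun q => v q ^ 2 * a q) p e
      = 2 * (v p * fderiv ℝ v p e) * a p + v p ^ 2 * fderiv ℝ a p e := by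
  rw [fderiv_fun_mul ((hv.diff p hp).fun_pow 2) ha]
  simp only [add_apply, smul_apply, smul_eq_mul, hv.fderiv_sq_apply hp e]
  ring

lemma BoundedAlong.integrableOn_sq_mul {v a : ℝ × EN N → ℝ} {e : ℝ × EN N}
    (ha : BoundedAlong e a) (hv : MemH1 v) :
    IntegrableOn (fun p => v p ^ 2 * a p) (upperHalf N) := by
  obtain ⟨C, hC⟩ := ha.bdd
  exact hv.memL2.mul_bdd (c := C) ha.diff.continuous.aestronglyMeasurable (Eventually.of_forall hC)

lemma BoundedAlong.integrableOn_fderiv_sq_mul {v a : ℝ × EN N → ℝ} {e : ℝ × EN N}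
    (ha : BoundedAlong e a) (hv : MemH1 v)
    (he : IntegrableOn (fun p => fderiv ℝ v p e ^ 2) (upperHalf N)) :
    IntegrableOn (fun p => fderiv ℝ (fun q => v q ^ 2 * a q) p e) (upperHalf N) := by
  obtain ⟨C, hC⟩ := ha.bdd
  obtain ⟨C', hC'⟩ := ha.bdd_fderiv
  have h1 := ((hv.integrableOn_mul_fderiv he).const_mul 2).mul_bdd (c := C)
    ha.diff.continuous.aestronglyMeasurable (Eventually.of_forall hC)
  have h2 := hv.memL2.mul_bdd (c := C')
    (measurable_fderiv_apply_const ℝ a e).aestronglyMeasurable (Eventually.of_forall hC')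
  exact IntegrableOn.congr_fun (h1.add h2)
    (fun p hp => (hv.fderiv_sq_mul_apply hp (ha.diff p) e).symm) (measurableSet_upperHalf N)

lemma neg_two_mul_mul_le {c : ℝ} (hc : 0 < c) (w g a : ℝ) :
    -(2 * (w * g) * a) ≤ c * (g * g) + w ^ 2 * (a ^ 2 / c) := by
  have h : c * (g * g) + w ^ 2 * (a ^ 2 / c) + 2 * (w * g) * a = (c * g + w * a) ^ 2 / c := by
    field_simp
    ring
  have : 0 ≤ (c * g + w * a) ^ 2 / c := by positivity
  linarith

lemma MemH1.neg_div_sq_mul_le {v : ℝ × EN N → ℝ} (hv : MemH1 v) {A : ℝ × EN N → ℝ}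
    {B : Fin N → ℝ × EN N → ℝ} {c : ℝ} (hc : 0 < c) {p : ℝ × EN N} (hp : p ∈ upperHalf N)
    (hA : DifferentiableAt ℝ A p) (hB : ∀ i, DifferentiableAt ℝ (B i) p)
    (hdiv : A p ^ 2 + ∑ i, B i p ^ 2
      ≤ c * (fderiv ℝ A p (ex N) + ∑ i, fderiv ℝ (B i) p (ey i))) :
    -(fderiv ℝ (fun q => v q ^ 2 * A q) p (ex N)
      + ∑ i, fderiv ℝ (fun q => v q ^ 2 * B i q) p (ey i)) ≤ c * gradSq v p := by
  have young_ey := Finset.sum_le_sum fun i (_ : i ∈ Finset.univ) =>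
    neg_two_mul_mul_le hc (v p) (fderiv ℝ v p (ey i)) (B i p)
  have hΦ : v p ^ 2 * ((A p ^ 2 + ∑ i, B i p ^ 2) / c)
      ≤ v p ^ 2 * (fderiv ℝ A p (ex N) + ∑ i, fderiv ℝ (B i) p (ey i)) :=
    mul_le_mul_of_nonneg_left ((div_le_iff₀' hc).2 hdiv) (sq_nonneg _)
  simp only [hv.fderiv_sq_mul_apply hp hA,
    fun i => hv.fderiv_sq_mul_apply hp (hB i), gradSq, gradDot]
  simp only [Finset.sum_add_distrib, Finset.sum_neg_distrib, ← Finset.mul_sum,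
    ← Finset.sum_div] at young_ey ⊢
  have young_ex := neg_two_mul_mul_le hc (v p) (fderiv ℝ v p (ex N)) (A p)
  have hsplit : v p ^ 2 * ((A p ^ 2 + ∑ i, B i p ^ 2) / c)
    = v p ^ 2 * (A p ^ 2 / c) + v p ^ 2 * ((∑ i, B i p ^ 2) / c) := by ring
  linarith

/-- The divergence theorem for `v² Φ`, `Φ = (A, B)`: Young's inequality absorbs
`2 v ∇v · Φ` into `c |∇v|² + v² |Φ|² / c`, and the last term is dominated by `v² div Φ`. -/
lemma MemH1.integral_trace_sq_mul_le {v : ℝ × EN N → ℝ} (hv : MemH1 v) {A : ℝ × EN N → ℝ}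
    {B : Fin N → ℝ × EN N → ℝ} {c : ℝ} (hc : 0 < c) (hA : BoundedAlong (ex N) A)
    (hB : ∀ i, BoundedAlong (ey i) (B i))
    (hdiv : ∀ p ∈ upperHalf N, A p ^ 2 + ∑ i, B i p ^ 2
      ≤ c * (fderiv ℝ A p (ex N) + ∑ i, fderiv ℝ (B i) p (ey i))) :
    Integrable (fun y => v (0, y) ^ 2 * A (0, y)) ∧
      ∫ y, v (0, y) ^ 2 * A (0, y) ≤ c * ∫ p in upperHalf N, gradSq v p := by
  have hint_ex := hA.integrableOn_fderiv_sq_mul hv hv.integrableOn_sq_fderiv_ex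
  have hint_ey := fun i =>
    (hB i).integrableOn_fderiv_sq_mul hv (hv.integrableOn_sq_fderiv_ey i)
  obtain ⟨htrace, hflux⟩ := integral_fderiv_ex_upperHalf (w := fun p => v p ^ 2 * A p)
    ((hv.contOn.pow 2).mul hA.diff.continuous.continuousOn)
    (fun p hp => ((hv.diff p hp).pow 2).mul (hA.diff p)) (hA.integrableOn_sq_mul hv) hint_ex
  have htangential : ∀ i, ∫ p in upperHalf N, fderiv ℝ (fun q => v q ^ 2 * B i q) p (ey i) = 0 :=
    fun i => integral_fderiv_snd_upperHalf _
      (fun p hp => ((hv.diff p hp).pow 2).mul ((hB i).diff p))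
      ((hB i).integrableOn_sq_mul hv) (hint_ey i)
  have hint := hint_ex.add (integrable_finsetSum Finset.univ fun i _ => hint_ey i)
  have hdivergence : ∫ y, v (0, y) ^ 2 * A (0, y)
      = ∫ p in upperHalf N, -(fderiv ℝ (fun q => v q ^ 2 * A q) p (ex N)
        + ∑ i, fderiv ℝ (fun q => v q ^ 2 * B i q) p (ey i)) := by
    rw [integral_neg, integral_add hint_ex (integrable_finsetSum _ fun i _ => hint_ey i),
      integral_finsetSum _ fun i _ => hint_ey i, hflux]
    simp [htangential]
  refine ⟨htrace, ?_⟩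
  rw [hdivergence, ← integral_const_mul]
  exact setIntegral_mono_on hint.neg (hv.gradL2.const_mul c) (measurableSet_upperHalf N)
    fun p hp => hv.neg_div_sq_mul_le hc hp (hA.diff p) (fun i => (hB i).diff p) (hdiv p hp)

lemma sum_sq_sub (y z : EN N) : ∑ i, (y i - z i) ^ 2 = ‖y - z‖ ^ 2 := by
  simp [EuclideanSpace.norm_sq_eq]

/-- The inverse of the distance to the boundary point `(0, z)`, regularized by `d > 0`. -/
def invRegDist (d : ℝ) (z : EN N) (p : ℝ × EN N) : ℝ := (√(p.1 ^ 2 + ‖p.2 - z‖ ^ 2 + d))⁻¹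

section InvRegDist

variable {d : ℝ} (hd : 0 < d) (z : EN N) (p : ℝ × EN N)

include hd

lemma invRegDist_pos : 0 < invRegDist d z p := by
  unfold invRegDist; positivity

lemma invRegDist_sq_mul : invRegDist d z p ^ 2 * (p.1 ^ 2 + ‖p.2 - z‖ ^ 2 + d) = 1 := by
  have : 0 < p.1 ^ 2 + ‖p.2 - z‖ ^ 2 + d := by positivity
  rw [invRegDist, inv_pow, Real.sq_sqrt this.le, inv_mul_cancel₀ this.ne']

lemma invRegDist_le : invRegDist d z p ≤ (√d)⁻¹ := by
  have : d ≤ p.1 ^ 2 + ‖p.2 - z‖ ^ 2 + d := by linarith [sq_nonneg p.1, sq_nonneg ‖p.2 - z‖]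
  exact inv_anti₀ (Real.sqrt_pos.2 hd) (Real.sqrt_le_sqrt this)

lemma abs_fst_mul_invRegDist_le : |p.1 * invRegDist d z p| ≤ 1 := by
  have := invRegDist_sq_mul hd z p
  rw [← sq_le_one_iff_abs_le_one]
  nlinarith [mul_nonneg (sq_nonneg (invRegDist d z p)) (add_nonneg (sq_nonneg ‖p.2 - z‖) hd.le)]

lemma abs_coord_mul_invRegDist_le (i : Fin N) : |(p.2 i - z i) * invRegDist d z p| ≤ 1 := by
  have h1 := invRegDist_sq_mul hd z p
  have h2 := Finset.single_le_sum (f := fun i => (p.2 i - z i) ^ 2) (fun i _ => sq_nonneg _)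
    (Finset.mem_univ i)
  rw [sum_sq_sub] at h2
  rw [← sq_le_one_iff_abs_le_one]
  nlinarith [mul_nonneg (sq_nonneg (invRegDist d z p)) (sub_nonneg.2 h2),
    mul_nonneg (sq_nonneg (invRegDist d z p)) (add_nonneg (sq_nonneg p.1) hd.le)]

lemma hasFDerivAt_invRegDist :
    HasFDerivAt (invRegDist d z) (-invRegDist d z p ^ 3 •
      (p.1 • ContinuousLinearMap.fst ℝ ℝ (EN N)
        + (innerSL ℝ (p.2 - z)).comp (ContinuousLinearMap.snd ℝ ℝ (EN N)))) p := by
  have hpos : 0 < p.1 ^ 2 + ‖p.2 - z‖ ^ 2 + d := by positivity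
  have hq : HasFDerivAt (fun q : ℝ × EN N => q.1 ^ 2 + ‖q.2 - z‖ ^ 2 + d) _ p :=
    ((hasFDerivAt_fst.pow 2).add ((hasFDerivAt_snd.sub_const z).norm_sq)).add_const d
  refine (((hasDerivAt_inv (Real.sqrt_ne_zero'.2 hpos)).comp_hasFDerivAt p
    (hq.sqrt hpos.ne'))).congr_fderiv ?_
  ext w <;> simp [invRegDist] <;> field_simp

lemma fderiv_fst_mul_invRegDist_sq_add :
    fderiv ℝ (fun q => q.1 * invRegDist d z q ^ 2 + invRegDist d z q * 2⁻¹) p (ex N)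
      = invRegDist d z p ^ 2
        * (1 - 2 * (p.1 * invRegDist d z p) ^ 2 - p.1 * invRegDist d z p * 2⁻¹) := by
  have hs := hasFDerivAt_invRegDist hd z p
  rw [((hasFDerivAt_fst.fun_mul (hs.pow 2)).fun_add (hs.mul_const 2⁻¹)).fderiv]
  simp [ex]
  ring

lemma fderiv_coord_mul_invRegDist_sq (i : Fin N) :
    fderiv ℝ (fun q => (q.2 i - z i) * invRegDist d z q ^ 2) p (ey i)
      = invRegDist d z p ^ 2 * (1 - 2 * ((p.2 i - z i) * invRegDist d z p) ^ 2) := by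
  have hcoord : HasFDerivAt (fun q : ℝ × EN N => q.2 i - z i)
      ((EuclideanSpace.proj i).comp (ContinuousLinearMap.snd ℝ ℝ (EN N))) p :=
    ((EuclideanSpace.proj i).comp (ContinuousLinearMap.snd ℝ ℝ (EN N))).hasFDerivAt.sub_const _
  rw [(hcoord.fun_mul ((hasFDerivAt_invRegDist hd z p).pow 2)).fderiv]
  simp [ey, EuclideanSpace.inner_single_right]
  ring

lemma abs_invRegDist_pow_mul_le {t C : ℝ} (ht : |t| ≤ C) (k : ℕ) :
    |invRegDist d z p ^ k * t| ≤ (√d)⁻¹ ^ k * C := by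
  have hs0 := (invRegDist_pos hd z p).le
  rw [abs_mul, abs_of_nonneg (pow_nonneg hs0 k)]
  have := invRegDist_le hd z p
  gcongr

omit p

lemma differentiable_invRegDist : Differentiable ℝ (invRegDist d z) :=
  fun p => (hasFDerivAt_invRegDist hd z p).differentiableAt

lemma boundedAlong_fst_mul_invRegDist_sq_add :
    BoundedAlong (ex N) (fun p => p.1 * invRegDist d z p ^ 2 + invRegDist d z p * 2⁻¹) where
  diff := by
    have := differentiable_invRegDist hd z
    fun_prop
  bdd := by
    refine ⟨(√d)⁻¹ ^ 1 * (3 / 2), fun p => ?_⟩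
    obtain ⟨h1, h2⟩ := abs_le.1 (abs_fst_mul_invRegDist_le hd z p)
    convert abs_invRegDist_pow_mul_le hd z p (t := p.1 * invRegDist d z p + 2⁻¹)
      (C := 3 / 2)      (abs_le.2 ⟨by linarith, by linarith⟩) 1 using 2
    ring
  bdd_fderiv := by
    refine ⟨(√d)⁻¹ ^ 2 * 4, fun p => ?_⟩
    have h := abs_fst_mul_invRegDist_le hd z p
    rw [fderiv_fst_mul_invRegDist_sq_add hd]
    refine abs_invRegDist_pow_mul_le hd z p (abs_le.2 ?_) 2
    obtain ⟨h1, h2⟩ := abs_le.1 h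
    constructor <;> nlinarith

lemma boundedAlong_coord_mul_invRegDist_sq (i : Fin N) :
    BoundedAlong (ey i) (fun p => (p.2 i - z i) * invRegDist d z p ^ 2) where
  diff := by
    have := differentiable_invRegDist hd z
    fun_prop
  bdd := by
    refine ⟨(√d)⁻¹ ^ 1 * 1, fun p => ?_⟩
    convert abs_invRegDist_pow_mul_le hd z p (abs_coord_mul_invRegDist_le hd z p i) 1 using 2
    ring
  bdd_fderiv := by
    refine ⟨(√d)⁻¹ ^ 2 * 1, fun p => ?_⟩
    have h := (sq_le_one_iff_abs_le_one _).2 (abs_coord_mul_invRegDist_le hd z p i)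
    rw [fderiv_coord_mul_invRegDist_sq hd]
    refine abs_invRegDist_pow_mul_le hd z p (abs_le.2 ⟨?_, ?_⟩) 2 <;>
      nlinarith [sq_nonneg ((p.2 i - z i) * invRegDist d z p)]

lemma sq_hardyField_le (hN : 2 ≤ N) {p : ℝ × EN N} (hp : p ∈ upperHalf N) :
    (p.1 * invRegDist d z p ^ 2 + invRegDist d z p * 2⁻¹) ^ 2
        + ∑ i, ((p.2 i - z i) * invRegDist d z p ^ 2) ^ 2
      ≤ 9 / 2 * (fderiv ℝ (fun q => q.1 * invRegDist d z q ^ 2 + invRegDist d z q * 2⁻¹) p (ex N)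
        + ∑ i, fderiv ℝ (fun q => (q.2 i - z i) * invRegDist d z q ^ 2) p (ey i)) := by
  simp only [fderiv_fst_mul_invRegDist_sq_add hd, fderiv_coord_mul_invRegDist_sq hd]
  set s := invRegDist d z p
  have hs0 : 0 < s := invRegDist_pos hd z p
  have hx1 : p.1 * s ≤ 1 := (abs_le.1 (abs_fst_mul_invRegDist_le hd z p)).2
  have hx0 : 0 ≤ p.1 * s := mul_nonneg (le_of_lt hp) hs0.le
  have hle : (p.1 * s) ^ 2 + s ^ 2 * ‖p.2 - z‖ ^ 2 ≤ 1 := by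
    nlinarith [invRegDist_sq_mul hd z p, mul_nonneg (sq_nonneg s) hd.le]
  have hN' : (2 : ℝ) ≤ N := by exact_mod_cast hN
  have hsum1 : ∑ i, ((p.2 i - z i) * s ^ 2) ^ 2 = s ^ 2 * (s ^ 2 * ‖p.2 - z‖ ^ 2) := by
    simp only [← sum_sq_sub, Finset.mul_sum]
    exact Finset.sum_congr rfl fun i _ => by ring
  have hsum2 : ∑ i, s ^ 2 * (1 - 2 * ((p.2 i - z i) * s) ^ 2)
      = s ^ 2 * (N - 2 * (s ^ 2 * ‖p.2 - z‖ ^ 2)) := by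
    simp only [mul_pow, ← Finset.mul_sum, Finset.sum_sub_distrib, ← Finset.sum_mul, sum_sq_sub]
    simp [mul_comm]
  rw [hsum1, hsum2]
  nlinarith [mul_nonneg (sq_nonneg s) (sub_nonneg.2 hle),
    mul_nonneg (sq_nonneg s) (sub_nonneg.2 hx1), mul_nonneg (sq_nonneg s) (sub_nonneg.2 hN'),
    mul_nonneg (sq_nonneg s) hx0, mul_nonneg (sq_nonneg s) (sq_nonneg (p.1 * s)), sq_nonneg s,
    mul_nonneg (sq_nonneg s) (mul_nonneg hx0 (sub_nonneg.2 hx1))]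

end InvRegDist

/-- Regularized form of `hardy_trace`: the field `Φ = (x / r² + 1 / (2r), (y - z) / r²)`, with `r`
the regularized distance to `(0, z)`, satisfies `r² |Φ|² ≤ 9/4` and `r² div Φ ≥ N - 3/2`. -/
lemma MemH1.hardy_trace_reg (hN : 2 ≤ N) {v : ℝ × EN N → ℝ} (hv : MemH1 v) (z : EN N)
    {d : ℝ} (hd : 0 < d) :
    Integrable (fun y => v (0, y) ^ 2 / √(‖y - z‖ ^ 2 + d)) ∧
      ∫ y, v (0, y) ^ 2 / √(‖y - z‖ ^ 2 + d) ≤ 9 * ∫ p in upperHalf N, gradSq v p := by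
  obtain ⟨hint, hle⟩ := hv.integral_trace_sq_mul_le (by norm_num)
    (boundedAlong_fst_mul_invRegDist_sq_add hd z) (boundedAlong_coord_mul_invRegDist_sq hd z)
    (fun p hp => sq_hardyField_le hd z hN hp)
  have hfield : ∀ y : EN N, v (0, y) ^ 2
      * ((0 : ℝ) * invRegDist d z (0, y) ^ 2 + invRegDist d z (0, y) * 2⁻¹)
      = 2⁻¹ * (v (0, y) ^ 2 / √(‖y - z‖ ^ 2 + d)) := fun y => by
    simp [invRegDist, div_eq_mul_inv]; ring
  simp only [hfield, integral_const_mul] at hint hle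
  exact ⟨by simpa using hint.const_mul 2, by linarith⟩

theorem MemH1.hardy_trace (hN : 2 ≤ N) {v : ℝ × EN N → ℝ} (hv : MemH1 v) (z : EN N) :
    ∫⁻ y, ENNReal.ofReal (v (0, y) ^ 2 / ‖y - z‖)
      ≤ ENNReal.ofReal (9 * ∫ p in upperHalf N, gradSq v p) := by
  have hd (n : ℕ) : (0 : ℝ) < 1 / ((n : ℝ) + 1) := Nat.one_div_pos_of_nat
  have hlim (y : EN N) : ENNReal.ofReal (v (0, y) ^ 2 / ‖y - z‖) ≤ liminf (fun n : ℕ =>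
      ENNReal.ofReal (v (0, y) ^ 2 / √(‖y - z‖ ^ 2 + 1 / ((n : ℝ) + 1)))) atTop := by
    rcases eq_or_ne y z with rfl | hyz
    · simp
    have hpos : 0 < ‖y - z‖ := norm_pos_iff.2 (sub_ne_zero.2 hyz)
    have h1 : Tendsto (fun n : ℕ => √(‖y - z‖ ^ 2 + 1 / ((n : ℝ) + 1))) atTop
        (𝓝 √(‖y - z‖ ^ 2 + 0)) :=
      (tendsto_one_div_add_atTop_nhds_zero_nat.const_add _).sqrt
    rw [add_zero, Real.sqrt_sq hpos.le] at h1
    exact (ENNReal.tendsto_ofReal (tendsto_const_nhds.div h1 hpos.ne')).liminf_eq.ge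
  calc ∫⁻ y, ENNReal.ofReal (v (0, y) ^ 2 / ‖y - z‖)
      ≤ ∫⁻ y, liminf (fun n : ℕ =>
          ENNReal.ofReal (v (0, y) ^ 2 / √(‖y - z‖ ^ 2 + 1 / ((n : ℝ) + 1)))) atTop :=
        lintegral_mono hlim
    _ ≤ liminf (fun n : ℕ => ∫⁻ y,
          ENNReal.ofReal (v (0, y) ^ 2 / √(‖y - z‖ ^ 2 + 1 / ((n : ℝ) + 1)))) atTop :=
        lintegral_liminf_le' fun n =>
          (hv.hardy_trace_reg hN z (hd n)).1.1.aemeasurable.ennreal_ofReal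
    _ ≤ _ := by
        refine liminf_le_of_frequently_le' (Eventually.of_forall fun n => ?_).frequently
        obtain ⟨hint, hle⟩ := hv.hardy_trace_reg hN z (hd n)
        rw [← ofReal_integral_eq_lintegral_ofReal hint
          (Eventually.of_forall fun y => by positivity)]
        exact ENNReal.ofReal_le_ofReal hle

end TraceInequality

/-! ### Integrability of powers of the trace -/

lemma enorm_le_lintegral_add_deriv {w w' : ℝ → ℝ} {a : ℝ}
    (hw : ∀ t ≥ a, HasDerivAt w (w' t) t) :
    ‖w a‖ₑ ≤ ∫⁻ t in Ioi a, (‖w t‖ₑ + ‖w' t‖ₑ) := by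
  by_cases htop : ∫⁻ t in Ioi a, (‖w t‖ₑ + ‖w' t‖ₑ) = ⊤
  · rw [htop]; exact le_top
  have hab : a ≤ a + 1 := by linarith
  set ψ' : ℝ → ℝ := fun t => w' t * (t - (a + 1)) + w t * 1 with hψ'
  have hderiv : ∀ t ∈ uIcc a (a + 1), HasDerivAt (fun t => w t * (t - (a + 1))) (ψ' t) t := by
    intro t ht
    rw [uIcc_of_le hab] at ht
    exact (hw t ht.1).mul ((hasDerivAt_id t).sub_const _)
  have hmeas : AEStronglyMeasurable ψ' (volume.restrict (Ioc a (a + 1))) := by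
    refine (measurable_deriv (fun t => w t * (t - (a + 1)))).aestronglyMeasurable.congr ?_
    filter_upwards [ae_restrict_mem measurableSet_Ioc] with t ht
    exact (hderiv t (by rw [uIcc_of_le hab]; exact Ioc_subset_Icc_self ht)).deriv
  have hpointwise : ∀ t ∈ Ioc a (a + 1), ‖ψ' t‖ₑ ≤ ‖w t‖ₑ + ‖w' t‖ₑ := by
    intro t ht
    rw [hψ', add_comm ‖w t‖ₑ]
    refine (enorm_add_le _ _).trans (add_le_add ?_ (by simp))
    rw [enorm_mul]
    refine mul_le_of_le_one_right' ?_
    rw [Real.enorm_eq_ofReal_abs, abs_of_nonpos (by linarith [ht.2])]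
    exact ENNReal.ofReal_le_one.2 (by linarith [ht.1])
  have hle : ∫⁻ t in Ioc a (a + 1), ‖ψ' t‖ₑ ≤ ∫⁻ t in Ioi a, (‖w t‖ₑ + ‖w' t‖ₑ) :=
    (setLIntegral_mono' measurableSet_Ioc hpointwise).trans
      (lintegral_mono_set Ioc_subset_Ioi_self)
  have hint : IntervalIntegrable ψ' volume a (a + 1) := by
    rw [intervalIntegrable_iff_integrableOn_Ioc_of_le hab]
    exact ⟨hmeas, hle.trans_lt (lt_top_iff_ne_top.2 htop)⟩
  have hftc : w a = ∫ t in Ioc a (a + 1), ψ' t := by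
    rw [← intervalIntegral.integral_of_le hab,
      intervalIntegral.integral_eq_sub_of_hasDerivAt hderiv hint]
    ring
  rw [hftc]
  exact (enorm_integral_le_lintegral_enorm _).trans hle

lemma sq_lintegral_mul_le {α : Type*} [MeasurableSpace α] {μ : Measure α} {a b : α → ℝ≥0∞}
    (ha : AEMeasurable a μ) (hb : AEMeasurable b μ) :
    (∫⁻ x, a x * b x ∂μ) ^ 2 ≤ (∫⁻ x, a x ^ 2 ∂μ) * ∫⁻ x, b x ^ 2 ∂μ := by
  have h := pow_le_pow_left'
    (ENNReal.lintegral_mul_le_Lp_mul_Lq μ Real.HolderConjugate.two_two ha hb) 2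
  simp only [Pi.mul_apply] at h
  refine h.trans (le_of_eq ?_)
  rw [mul_pow, ← ENNReal.rpow_natCast, ← ENNReal.rpow_mul, ← ENNReal.rpow_natCast,
    ← ENNReal.rpow_mul]
  norm_num

section GagliardoNirenberg

variable {N : ℕ} {W : EN N → ℝ} {D : Fin N → EN N → ℝ} {g : EN N → ℝ≥0∞}

lemma enorm_le_lintegral_update
    (hD : ∀ i y, HasLineDerivAt ℝ W (D i y) y (EuclideanSpace.single i 1))
    (hle : ∀ i y, ‖W y‖ₑ + ‖D i y‖ₑ ≤ g y) (y : Fin N → ℝ) (i : Fin N) :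
    ‖W (WithLp.toLp 2 y)‖ₑ ≤ ∫⁻ t, g (WithLp.toLp 2 (Function.update y i t)) := by
  have hderiv : ∀ t ≥ y i, HasDerivAt (fun t => W (WithLp.toLp 2 (Function.update y i t)))
      (D i (WithLp.toLp 2 (Function.update y i t))) t := by
    intro t _
    have h1 : HasDerivAt (fun s : ℝ => W (WithLp.toLp 2 (Function.update y i t)
        + s • EuclideanSpace.single i (1 : ℝ))) (D i (WithLp.toLp 2 (Function.update y i t)))
        (t - t) := by rw [sub_self]; exact hD i _
    refine (HasDerivAt.comp_sub_const t t h1).congr_of_eventuallyEq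
      (Eventually.of_forall fun s => congrArg W ?_)
    ext j
    rcases eq_or_ne j i with rfl | hj
    · simp
    · simp [hj]
  have h := enorm_le_lintegral_add_deriv (a := y i) hderiv
  rw [Function.update_eq_self] at h
  exact h.trans ((setLIntegral_le_lintegral _ _).trans (lintegral_mono fun t => hle i _))

/-- The Gagliardo-Nirenberg inequality for functions without compact support, whence the zeroth
order term. -/
lemma lintegral_enorm_rpow_le {p : ℝ} (hp : (N : ℝ).HolderConjugate p)
    (hD : ∀ i y, HasLineDerivAt ℝ W (D i y) y (EuclideanSpace.single i 1))
    (hg : Measurable g) (hle : ∀ i y, ‖W y‖ₑ + ‖D i y‖ₑ ≤ g y) :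
    ∫⁻ y, ‖W y‖ₑ ^ p ≤ (∫⁻ y, g y) ^ p := by
  have hmp := (EuclideanSpace.volume_preserving_symm_measurableEquiv_toLp (Fin N)).symm
  have htoLp : ∀ h : EN N → ℝ≥0∞, ∫⁻ y, h y = ∫⁻ y : Fin N → ℝ, h (WithLp.toLp 2 y) :=
    fun h => (hmp.lintegral_comp_emb (MeasurableEquiv.measurableEmbedding _) h).symm
  have hgm : Measurable (fun y : Fin N → ℝ => g (WithLp.toLp 2 y)) :=
    hg.comp (MeasurableEquiv.toLp 2 (Fin N → ℝ)).measurable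
  have hprod : ∀ y : Fin N → ℝ, ‖W (WithLp.toLp 2 y)‖ₑ ^ p
      = ∏ _i : Fin N, ‖W (WithLp.toLp 2 y)‖ₑ ^ (1 / ((N : ℝ) - 1)) := by
    intro y
    rw [Finset.prod_const, Finset.card_univ, Fintype.card_fin, ← ENNReal.rpow_natCast,
      ← ENNReal.rpow_mul, hp.conjugate_eq, one_div_mul_eq_div]
  rw [htoLp, htoLp]
  calc ∫⁻ y : Fin N → ℝ, ‖W (WithLp.toLp 2 y)‖ₑ ^ p
      ≤ ∫⁻ y : Fin N → ℝ, ∏ i, (∫⁻ t, g (WithLp.toLp 2 (Function.update y i t)))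
          ^ (1 / ((N : ℝ) - 1)) := by
        refine lintegral_mono fun y => (hprod y).trans_le (Finset.prod_le_prod' fun i _ => ?_)
        exact ENNReal.rpow_le_rpow (enorm_le_lintegral_update hD hle y i)
          (one_div_nonneg.2 (sub_nonneg.2 hp.lt.le))
    _ ≤ (∫⁻ y : Fin N → ℝ, g (WithLp.toLp 2 y)) ^ p := by
        simpa [volume_pi] using lintegral_prod_lintegral_pow_le
          (fun _ : Fin N => (volume : Measure ℝ)) (by simpa using hp) hgm

end GagliardoNirenberg

namespace MemH1

variable {N : ℕ} {v : ℝ × EN N → ℝ}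

lemma continuous_slice (hv : MemH1 v) {x : ℝ} (hx : 0 < x) : Continuous (fun y => v (x, y)) :=
  hv.contOn.comp_continuous (f := fun y : EN N => (x, y)) (by fun_prop) fun _ => hx.le

lemma exists_lintegral_slice_sq_le (hv : MemH1 v) : ∃ S : ℝ≥0∞, S ≠ ⊤ ∧
    ∀ x > 0, ∫⁻ y, ‖v (x, y) ^ 2‖ₑ ≤ S := by
  have hint := hv.integrableOn_fderiv_sq hv.integrableOn_sq_fderiv_ex
  set h : ℝ × EN N → ℝ≥0∞ := fun p => ‖v p ^ 2‖ₑ + ‖fderiv ℝ (fun q => v q ^ 2) p (ex N)‖ₑ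
  have hfin : ∫⁻ p in upperHalf N, h p ≠ ⊤ := by
    rw [lintegral_add_left' hv.memL2.1.enorm]
    exact ENNReal.add_ne_top.2 ⟨hv.memL2.2.ne, hint.2.ne⟩
  have hm : AEMeasurable h (volume.restrict (upperHalf N)) := hv.memL2.1.enorm.add hint.1.enorm
  refine ⟨_, hfin, fun x hx => ?_⟩
  rw [volume_restrict_upperHalf] at hm ⊢
  rw [lintegral_prod_symm _ hm]
  refine lintegral_mono fun y => ?_
  exact (enorm_le_lintegral_add_deriv fun t ht =>
    hasDerivAt_slice_fst ((hv.diff (t, y) (hx.trans_le ht)).fun_pow 2)).trans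
      (lintegral_mono_set (Ioi_subset_Ioi hx.le))

/-- Controls both `|v|` and the tangential part of `|∇(v²)| / |v|`. -/
def slope (v : ℝ × EN N → ℝ) (p : ℝ × EN N) : ℝ := |v p| + 2 * √(gradSq v p)

lemma slope_nonneg (v : ℝ × EN N → ℝ) (p : ℝ × EN N) : 0 ≤ slope v p := by
  unfold slope; positivity

lemma integrableOn_slope_sq (hv : MemH1 v) :
    IntegrableOn (fun p => slope v p ^ 2) (upperHalf N) := by
  refine ((hv.memL2.const_mul 2).add (hv.gradL2.const_mul 8)).mono'
    ((hv.aestronglyMeasurable.norm.add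
      ((measurable_gradSq v).sqrt.const_mul 2).aestronglyMeasurable).pow 2)
    (Eventually.of_forall fun p => ?_)
  have hg := Real.sq_sqrt (gradSq_nonneg v p)
  have hv2 := sq_abs (v p)
  simp only [norm_pow, Real.norm_eq_abs, sq_abs, Pi.add_apply, slope]
  nlinarith [sq_nonneg (|v p| - 2 * √(gradSq v p))]

lemma lintegral_slice_pow_four_le {v : ℝ × EN 2 → ℝ} (hv : MemH1 v) {x : ℝ} (hx : 0 < x) :
    ∫⁻ y, ‖v (x, y) ^ 4‖ₑ ≤ (∫⁻ y, ‖v (x, y) ^ 2‖ₑ) * ∫⁻ y, ‖slope v (x, y) ^ 2‖ₑ := by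
  have hvm : Measurable (fun y => v (x, y)) := (hv.continuous_slice hx).measurable
  have hbm : Measurable (fun y => slope v (x, y)) :=
    hvm.norm.add ((((measurable_gradSq v).comp measurable_prodMk_left).sqrt).const_mul 2)
  have hbound : ∀ (i : Fin 2) (y : EN 2), ‖v (x, y) ^ 2‖ₑ
      + ‖fderiv ℝ (fun q => v q ^ 2) (x, y) (ey i)‖ₑ ≤ ‖v (x, y)‖ₑ * ‖slope v (x, y)‖ₑ := by
    intro i y
    have h : |fderiv ℝ v (x, y) (ey i)| ≤ √(gradSq v (x, y)) :=
      Real.abs_le_sqrt (sq_fderiv_ey_le_gradSq v _ i)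
    rw [hv.fderiv_sq_apply hx]
    simp only [← ofReal_norm]
    rw [← ENNReal.ofReal_add (norm_nonneg _) (norm_nonneg _),
      ← ENNReal.ofReal_mul (norm_nonneg _)]
    apply ENNReal.ofReal_le_ofReal
    simp only [Real.norm_eq_abs, abs_pow, abs_mul, abs_of_nonneg (slope_nonneg v (x, y)), abs_two]
    simp only [slope]
    nlinarith [mul_le_mul_of_nonneg_left h (abs_nonneg (v (x, y)))]
  have hGN := lintegral_enorm_rpow_le (W := fun y => v (x, y) ^ 2)
    (by simpa using Real.HolderConjugate.two_two)
    (fun i y => hasLineDerivAt_slice_snd _ ((hv.diff (x, y) hx).fun_pow 2))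
    (hvm.enorm.mul hbm.enorm) hbound
  simp only [ENNReal.rpow_two] at hGN
  calc ∫⁻ y, ‖v (x, y) ^ 4‖ₑ = ∫⁻ y, ‖v (x, y) ^ 2‖ₑ ^ 2 := by
        simp only [← enorm_pow, ← pow_mul]
    _ ≤ (∫⁻ y, ‖v (x, y)‖ₑ * ‖slope v (x, y)‖ₑ) ^ 2 := hGN
    _ ≤ (∫⁻ y, ‖v (x, y)‖ₑ ^ 2) * ∫⁻ y, ‖slope v (x, y)‖ₑ ^ 2 :=
        sq_lintegral_mul_le hvm.enorm.aemeasurable hbm.enorm.aemeasurable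
    _ = _ := by simp only [enorm_pow]

lemma integrableOn_pow_four {v : ℝ × EN 2 → ℝ} (hv : MemH1 v) :
    IntegrableOn (fun p => v p ^ 4) (upperHalf 2) := by
  obtain ⟨S, hS, hSle⟩ := hv.exists_lintegral_slice_sq_le
  have hm : AEStronglyMeasurable (fun p => v p ^ 4) (volume.restrict (upperHalf 2)) :=
    hv.aestronglyMeasurable.pow 4
  have hslope := hv.integrableOn_slope_sq
  have hfin := hslope.2
  refine ⟨hm, ?_⟩
  rw [HasFiniteIntegral] at hfin ⊢
  rw [volume_restrict_upperHalf] at hfin ⊢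
  rw [lintegral_prod _ (by rw [← volume_restrict_upperHalf]; exact hslope.1.enorm)] at hfin
  rw [lintegral_prod _ (by rw [← volume_restrict_upperHalf]; exact hm.enorm)]
  calc ∫⁻ x in Ioi 0, ∫⁻ y, ‖v (x, y) ^ 4‖ₑ
      ≤ ∫⁻ x in Ioi 0, S * ∫⁻ y, ‖slope v (x, y) ^ 2‖ₑ :=
        setLIntegral_mono' measurableSet_Ioi fun x hx =>
          (hv.lintegral_slice_pow_four_le hx).trans (by gcongr; exact hSle x hx)
    _ = S * ∫⁻ x in Ioi 0, ∫⁻ y, ‖slope v (x, y) ^ 2‖ₑ := lintegral_const_mul' _ _ hS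
    _ < ⊤ := ENNReal.mul_lt_top hS.lt_top hfin

lemma integrable_trace_pow_three {v : ℝ × EN 2 → ℝ} (hv : MemH1 v) :
    Integrable (fun y => v (0, y) ^ 3) := by
  have h4 := hv.integrableOn_pow_four
  refine (integral_fderiv_ex_upperHalf (hv.contOn.pow 3) (fun p hp => (hv.diff p hp).pow 3)
    ?_ ?_).1
  · refine (hv.memL2.add h4).mono' (hv.aestronglyMeasurable.pow 3)
      (Eventually.of_forall fun p => ?_)
    have h4 : v p ^ 4 = |v p| ^ 4 := (Even.pow_abs (by decide) _).symm
    simp only [Pi.add_apply, Pi.pow_apply, norm_pow, Real.norm_eq_abs, h4, ← sq_abs (v p)]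
    nlinarith [mul_nonneg (sq_nonneg (|v p|)) (sq_nonneg (|v p| - 1 / 2)), sq_nonneg (|v p|)]
  · have hint : IntegrableOn (fun p => v p ^ 2 * fderiv ℝ v p (ex 2)) (upperHalf 2) :=
      integrable_mul_of_integrable_sq (hv.aestronglyMeasurable.pow 2)
        (measurable_fderiv_apply_const ℝ v _).aestronglyMeasurable
        (by simpa [← pow_mul, IntegrableOn] using h4) hv.integrableOn_sq_fderiv_ex
    refine IntegrableOn.congr_fun (hint.const_mul 3) (fun p hp => ?_) (measurableSet_upperHalf 2)
    simp [fderiv_pow 3 (hv.diff p hp), mul_assoc]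

/-- A power at least the critical trace exponent `(N + 1) / (N - 1)`, which is at most `2` unless
`N = 2`. -/
lemma exists_integrable_trace_pow (hN : 2 ≤ N) (hv : MemH1 v) :
    ∃ n : ℕ, ((N : ℝ) + 1) / (N - 1) ≤ n ∧ Integrable (fun y => v (0, y) ^ n) := by
  rcases hN.eq_or_lt with rfl | hN3
  · exact ⟨3, by norm_num, hv.integrable_trace_pow_three⟩
  · refine ⟨2, ?_, hv.integrable_trace_sq⟩
    have : (3 : ℝ) ≤ N := by exact_mod_cast hN3
    rw [div_le_iff₀ (by linarith)]; push_cast; linarith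

end MemH1

/-! ### Bessel-type integrals -/

lemma exists_exp_neg_le_inv_pow {c : ℝ} (hc : 0 < c) (k : ℕ) :
    ∃ C : ℝ, 0 < C ∧ ∀ s : ℝ, 0 ≤ s → exp (-(c * s)) ≤ C / (1 + s) ^ k := by
  refine ⟨k.factorial * (c ^ k)⁻¹ * exp c, by positivity, fun s hs => ?_⟩
  have h := Real.pow_div_factorial_le_exp (c * (1 + s)) (by positivity) k
  rw [mul_pow, mul_add, mul_one, exp_add, div_le_iff₀ (by positivity)] at h
  rw [le_div_iff₀ (by positivity), exp_neg, inv_mul_le_iff₀ (exp_pos _)]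
  have hck : 0 < c ^ k := by positivity
  rw [show exp (c * s) * (k.factorial * (c ^ k)⁻¹ * exp c)
    = (exp c * exp (c * s) * k.factorial) / c ^ k by field_simp, le_div_iff₀ hck]
  linarith

lemma integral_lt_integral_of_ae_lt {α : Type*} [MeasurableSpace α] {ν : Measure α} (hν : ν ≠ 0)
    {f g : α → ℝ} (hf : Integrable f ν) (hg : Integrable g ν) (hlt : ∀ᵐ x ∂ν, f x < g x) :
    ∫ x, f x ∂ν < ∫ x, g x ∂ν := by
  rw [← sub_pos, ← integral_sub hg hf,
    integral_pos_iff_support_of_nonneg_ae (hlt.mono fun x hx => (sub_pos.2 hx).le) (hg.sub hf)]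
  have hsupp : (Function.support fun x => g x - f x) =ᵐ[ν] univ :=
    eventuallyEq_univ.2 (hlt.mono fun x hx => (sub_pos.2 hx).ne')
  rwa [measure_congr hsupp, Measure.measure_univ_pos]

lemma setIntegral_Ioi_lt_setIntegral_Ioi {f g : ℝ → ℝ} {c : ℝ} (hf : IntegrableOn f (Ioi c))
    (hg : IntegrableOn g (Ioi c)) (hlt : ∀ r > c, f r < g r) :
    ∫ r in Ioi c, f r < ∫ r in Ioi c, g r :=
  integral_lt_integral_of_ae_lt (by simp) hf hg (ae_restrict_of_forall_mem measurableSet_Ioi hlt)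

/-- The integrand of `besselInt`. -/
def besselFn (β μ t r : ℝ) : ℝ := r ^ β * exp (-(μ / r)) * exp (-(r * t))

/-- The integral `∫₀^∞ r^β exp(-μ/r - r t) dr`, which equals
`2 (μ/t)^((β+1)/2) K_{β+1}(2 √(μ t))` for the modified Bessel function `K` of the second kind.
It produces the Green function of `m² - Δ` on the half-space as a superposition of Gaussians. -/
def besselInt (β μ t : ℝ) : ℝ := ∫ r in Ioi (0 : ℝ), besselFn β μ t r

section Bessel

variable {β μ s t r : ℝ}

lemma besselFn_pos (β μ t : ℝ) (hr : 0 < r) : 0 < besselFn β μ t r := by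
  unfold besselFn; have := rpow_pos_of_pos hr β; positivity

lemma measurable_besselFn (β μ t : ℝ) : Measurable (besselFn β μ t) := by
  unfold besselFn; fun_prop

lemma integrableOn_besselFn_zero (hβ : -1 < β) (ht : 0 < t) :
    IntegrableOn (besselFn β 0 t) (Ioi 0) :=
  (integrableOn_rpow_mul_exp_neg_mul_rpow hβ one_pos ht).congr_fun
    (fun r _ => by simp [besselFn, mul_comm t]) measurableSet_Ioi

lemma integrableOn_besselFn (β : ℝ) (hμ : 0 < μ) (ht : 0 < t) :
    IntegrableOn (besselFn β μ t) (Ioi 0) := by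
  obtain ⟨k, hk⟩ := exists_nat_gt (-1 - β)
  obtain ⟨C, hC, hCle⟩ := exists_exp_neg_le_inv_pow hμ k
  refine ((integrableOn_besselFn_zero (β := β + k) (by linarith) ht).const_mul C).mono'
    (measurable_besselFn β μ t).aestronglyMeasurable ?_
  filter_upwards [ae_restrict_mem measurableSet_Ioi] with r hr
  have hr0 : 0 < r := hr
  have := rpow_pos_of_pos hr0 β
  have hexp : exp (-(μ / r)) ≤ C * r ^ k := calc
    exp (-(μ / r)) ≤ C / (1 + r⁻¹) ^ k := by simpa [div_eq_mul_inv] using hCle r⁻¹ (by positivity)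
    _ ≤ C / (r⁻¹) ^ k := by gcongr; linarith
    _ = C * r ^ k := by rw [inv_pow, div_inv_eq_mul]
  rw [Real.norm_of_nonneg (besselFn_pos β μ t hr0).le]
  calc r ^ β * exp (-(μ / r)) * exp (-(r * t)) ≤ r ^ β * (C * r ^ k) * exp (-(r * t)) := by gcongr
    _ = C * besselFn (β + k) 0 t r := by
        rw [besselFn, rpow_add hr0, rpow_natCast, zero_div, neg_zero, exp_zero]; ring

lemma besselInt_pos (β : ℝ) (hμ : 0 < μ) (ht : 0 < t) : 0 < besselInt β μ t := by
  simpa only [besselInt, integral_zero] using setIntegral_Ioi_lt_setIntegral_Ioi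
    integrableOn_zero (integrableOn_besselFn β hμ ht) fun _ hr => besselFn_pos β μ t hr

lemma besselInt_nonneg (β μ t : ℝ) : 0 ≤ besselInt β μ t :=
  setIntegral_nonneg measurableSet_Ioi fun _ hr => (besselFn_pos β μ t hr).le

lemma besselInt_strictAntiOn (β : ℝ) (hμ : 0 < μ) : StrictAntiOn (besselInt β μ) (Ioi 0) := by
  intro s hs t ht hst
  refine setIntegral_Ioi_lt_setIntegral_Ioi (integrableOn_besselFn β hμ ht)
    (integrableOn_besselFn β hμ hs) fun r hr => ?_
  have := rpow_pos_of_pos hr β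
  unfold besselFn
  gcongr

lemma besselInt_lt_zero (hβ : -1 < β) (hμ : 0 < μ) (ht : 0 < t) :
    besselInt β μ t < besselInt β 0 t := by
  refine setIntegral_Ioi_lt_setIntegral_Ioi (integrableOn_besselFn β hμ ht)
    (integrableOn_besselFn_zero hβ ht) fun r hr => ?_
  have := rpow_pos_of_pos hr β
  unfold besselFn
  have : 0 < r := hr
  gcongr

lemma besselInt_zero (hβ : -1 < β) (ht : 0 < t) :
    besselInt β 0 t = Gamma (β + 1) * t ^ (-(β + 1)) := by
  have h := Real.integral_rpow_mul_exp_neg_mul_Ioi (a := β + 1) (by linarith) ht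
  simp only [add_sub_cancel_right, mul_comm t] at h
  simp only [besselInt, besselFn, zero_div, neg_zero, exp_zero, mul_one]
  rw [h, one_div, inv_rpow ht.le, rpow_neg ht.le, mul_comm]

lemma besselInt_smul_sq {a : ℝ} (ha : 0 < a) :
    besselInt β μ (a ^ 2 * t) = (a ^ 2) ^ (-(β + 1)) * besselInt β (μ * a ^ 2) t := by
  have ha2 : 0 < a ^ 2 := by positivity
  have := rpow_pos_of_pos ha2 β
  have hsubst := integral_comp_mul_left_Ioi (fun r => besselFn β (μ * a ^ 2) t r) 0 ha2
  have hscale : ∫ r in Ioi (0 : ℝ), besselFn β (μ * a ^ 2) t (a ^ 2 * r)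
      = (a ^ 2) ^ β * besselInt β μ (a ^ 2 * t) := by
    rw [besselInt, ← integral_const_mul]
    refine setIntegral_congr_fun measurableSet_Ioi fun r hr => ?_
    have hr0 : 0 < r := hr
    simp only [besselFn]
    rw [mul_rpow ha2.le hr0.le, show μ * a ^ 2 / (a ^ 2 * r) = μ / r by field_simp,
      show a ^ 2 * r * t = r * (a ^ 2 * t) by ring]
    ring
  rw [mul_zero, smul_eq_mul, hscale] at hsubst
  rw [besselInt.eq_def β (μ * a ^ 2), neg_add, rpow_add ha2, rpow_neg ha2.le, rpow_neg_one,
    mul_assoc, ← hsubst]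
  field_simp

lemma measurable_besselInt (β μ : ℝ) : Measurable (besselInt β μ) := by
  have h : Measurable fun q : ℝ × ℝ => besselFn β μ q.1 q.2 := by unfold besselFn; fun_prop
  exact (h.stronglyMeasurable.integral_prod_right (ν := volume.restrict (Ioi 0))).measurable

lemma besselInt_le_zero (hβ : -1 < β) (hμ : 0 ≤ μ) (ht : 0 < t) :
    besselInt β μ t ≤ besselInt β 0 t :=
  hμ.eq_or_lt.elim (fun h => h ▸ le_rfl) fun h => (besselInt_lt_zero hβ h ht).le

lemma tendsto_besselInt_mul_sq (hβ : -1 < β) (hμ : 0 ≤ μ) (ht : 0 < t) :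
    Tendsto (fun a : ℝ => besselInt β (μ * a ^ 2) t) (𝓝 0) (𝓝 (besselInt β 0 t)) := by
  unfold besselInt
  refine tendsto_integral_filter_of_dominated_convergence (besselFn β 0 t)
    (Eventually.of_forall fun a => (measurable_besselFn _ _ _).aestronglyMeasurable)
    (Eventually.of_forall fun a => ?_) (integrableOn_besselFn_zero hβ ht) ?_
  · filter_upwards [ae_restrict_mem measurableSet_Ioi] with r (hr : 0 < r)
    rw [Real.norm_of_nonneg (besselFn_pos _ _ _ hr).le]
    have := rpow_pos_of_pos hr β
    unfold besselFn
    gcongr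
    positivity
  · refine Eventually.of_forall fun r => ?_
    have hcont : Continuous fun a : ℝ => besselFn β (μ * a ^ 2) t r := by
      unfold besselFn; fun_prop
    simpa using hcont.tendsto 0

lemma hasDerivAt_besselInt (β : ℝ) (hμ : 0 < μ) (ht : 0 < t) :
    HasDerivAt (besselInt β μ) (-besselInt (β + 1) μ t) t := by
  have hball : Metric.ball t (t / 2) ∈ 𝓝 t := Metric.ball_mem_nhds t (by linarith)
  have h := (hasDerivAt_integral_of_dominated_loc_of_deriv_le
    (μ := volume.restrict (Ioi (0 : ℝ))) (F := fun s r => besselFn β μ s r)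
    (F' := fun s r => -besselFn (β + 1) μ s r) (x₀ := t) (s := Metric.ball t (t / 2))
    (bound := besselFn (β + 1) μ (t / 2)) hball
    (Eventually.of_forall fun s => (measurable_besselFn β μ s).aestronglyMeasurable)
    (integrableOn_besselFn β hμ ht)
    (measurable_besselFn (β + 1) μ t).neg.aestronglyMeasurable ?_
    (integrableOn_besselFn (β + 1) hμ (by linarith)) ?_).2
  · exact h.congr_deriv (integral_neg _)
  · filter_upwards [ae_restrict_mem measurableSet_Ioi] with r hr s hs
    have hr0 : 0 < r := hr
    rw [norm_neg, Real.norm_of_nonneg (besselFn_pos _ μ s hr0).le]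
    have hs_lower : t / 2 ≤ s := by
      rw [Metric.mem_ball, Real.dist_eq, abs_lt] at hs; linarith
    have := rpow_pos_of_pos hr0 (β + 1)
    unfold besselFn
    gcongr
  · filter_upwards [ae_restrict_mem measurableSet_Ioi] with r hr s _
    refine (((hasDerivAt_id s).const_mul r).neg.exp.const_mul
      (r ^ β * exp (-(μ / r)))).congr_deriv ?_
    rw [besselFn, rpow_add_one (ne_of_gt hr)]
    simp only [Pi.neg_apply, id]
    ring

lemma continuousOn_besselInt (β : ℝ) (hμ : 0 < μ) : ContinuousOn (besselInt β μ) (Ioi 0) :=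
  fun _ ht => (hasDerivAt_besselInt β hμ ht).continuousAt.continuousWithinAt

lemma exists_exp_neg_div_mul_exp_neg_le (hμ : 0 < μ) (k : ℕ) :
    ∃ C : ℝ, 0 < C ∧ ∀ r s : ℝ, 0 < r → 0 ≤ s →
      exp (-(μ / r)) * exp (-(r * s)) ≤ C / (1 + s) ^ k := by
  obtain ⟨C, hC, hCle⟩ := exists_exp_neg_le_inv_pow hμ k
  obtain ⟨D, hD, hDle⟩ := exists_exp_neg_le_inv_pow one_pos k
  refine ⟨C * D, by positivity, fun r s hr hs => ?_⟩
  have hfactor : 1 + s ≤ (1 + r⁻¹) * (1 + r * s) := by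
    have : (1 + r⁻¹) * (1 + r * s) = 1 + s + (r * s + r⁻¹) := by field_simp; ring
    have : 0 ≤ r * s + r⁻¹ := by positivity
    linarith
  calc exp (-(μ / r)) * exp (-(r * s))
      ≤ C / (1 + r⁻¹) ^ k * (D / (1 + r * s) ^ k) := by
        rw [div_eq_mul_inv, ← one_mul (r * s)]
        gcongr
        · exact hCle _ (by positivity)
        · simpa only [one_mul] using hDle (r * s) (by positivity)
    _ = C * D / ((1 + r⁻¹) * (1 + r * s)) ^ k := by rw [div_mul_div_comm, mul_pow]
    _ ≤ C * D / (1 + s) ^ k := by gcongr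

lemma exists_besselInt_le (β : ℝ) {t₀ : ℝ} (hμ : 0 < μ) (ht₀ : 0 < t₀) (k : ℕ) :
    ∃ C : ℝ, 0 < C ∧ ∀ t, t₀ ≤ t → besselInt β μ t ≤ C / (1 + t) ^ k := by
  obtain ⟨C, hC, hCle⟩ := exists_exp_neg_div_mul_exp_neg_le (half_pos hμ) k
  have hI : 0 < besselInt β (μ / 2) (t₀ / 2) := besselInt_pos β (half_pos hμ) (half_pos ht₀)
  refine ⟨2 ^ k * C * besselInt β (μ / 2) (t₀ / 2), by positivity, fun t ht => ?_⟩
  have ht0 : 0 < t := ht₀.trans_le ht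
  have hpoint : ∀ r > 0, besselFn β μ t r
      ≤ 2 ^ k * C / (1 + t) ^ k * besselFn β (μ / 2) (t₀ / 2) r := fun r hr => by
    have := rpow_pos_of_pos hr β
    calc besselFn β μ t r
        = (exp (-(μ / 2 / r)) * exp (-(r * (t / 2)))) * besselFn β (μ / 2) (t / 2) r := by
          have hμr : -(μ / r) = -(μ / 2 / r) + -(μ / 2 / r) := by field_simp; ring
          have hrt : -(r * t) = -(r * (t / 2)) + -(r * (t / 2)) := by ring
          rw [besselFn, hμr, hrt, exp_add, exp_add, besselFn]
          ring
      _ ≤ C / (1 + t / 2) ^ k * besselFn β (μ / 2) (t₀ / 2) r := by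
          have hmono : besselFn β (μ / 2) (t / 2) r ≤ besselFn β (μ / 2) (t₀ / 2) r := by
            unfold besselFn; gcongr
          exact mul_le_mul (hCle r _ hr (by positivity)) hmono (besselFn_pos _ _ _ hr).le
            (by positivity)
      _ ≤ 2 ^ k * C / (1 + t) ^ k * besselFn β (μ / 2) (t₀ / 2) r := by
          refine mul_le_mul_of_nonneg_right ?_ (besselFn_pos _ _ _ hr).le
          rw [div_le_div_iff₀ (by positivity) (by positivity), mul_right_comm, mul_comm C,
            ← mul_pow]
          gcongr
          linarith
  rw [mul_div_right_comm, besselInt, besselInt, ← integral_const_mul]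
  exact setIntegral_mono_on (integrableOn_besselFn β hμ ht0)
    ((integrableOn_besselFn β (half_pos hμ) (half_pos ht₀)).const_mul _) measurableSet_Ioi hpoint

lemma hasDerivAt_besselFn (β μ t : ℝ) (hr : 0 < r) :
    HasDerivAt (besselFn (β + 2) μ t)
      ((β + 2) * besselFn (β + 1) μ t r + μ * besselFn β μ t r - t * besselFn (β + 2) μ t r) r := by
  have hpow : HasDerivAt (fun r : ℝ => r ^ (β + 2)) ((β + 2) * r ^ (β + 2 - 1)) r :=
    hasDerivAt_rpow_const (Or.inl hr.ne')
  have hdiv : HasDerivAt (fun r : ℝ => -(μ / r)) (μ / r ^ 2) r :=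
    ((hasDerivAt_const r μ).div (hasDerivAt_id r) hr.ne').neg.congr_deriv (by simp; ring)
  have hlin : HasDerivAt (fun r : ℝ => -(r * t)) (-t) r :=
    ((hasDerivAt_id r).mul_const t).neg.congr_deriv (by simp)
  refine ((hpow.mul hdiv.exp).mul hlin.exp).congr_deriv ?_
  simp only [besselFn, Pi.mul_apply]
  rw [show β + 2 - 1 = β + 1 by ring, show β + 2 = β + (2 : ℕ) by norm_num,
    rpow_add_natCast hr.ne', rpow_add_one hr.ne']
  field_simp
  push_cast
  ring

lemma continuousWithinAt_besselFn_zero (hβ : 0 < β) (hμ : 0 ≤ μ) (ht : 0 ≤ t) :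
    ContinuousWithinAt (besselFn β μ t) (Ici 0) 0 := by
  have hpow : Tendsto (fun r : ℝ => r ^ β) (𝓝[≥] 0) (𝓝 0) := by
    simpa only [zero_rpow hβ.ne'] using
      (continuousAt_rpow_const 0 β (Or.inr hβ.le)).tendsto.mono_left nhdsWithin_le_nhds
  rw [ContinuousWithinAt, show besselFn β μ t 0 = 0 by simp [besselFn, zero_rpow hβ.ne']]
  refine squeeze_zero' ?_ ?_ hpow <;> filter_upwards [self_mem_nhdsWithin] with r (hr : 0 ≤ r)
  · have := rpow_nonneg hr β
    unfold besselFn; positivity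
  · have hexp₁ : exp (-(μ / r)) ≤ 1 := exp_le_one_iff.2 (neg_nonpos.2 (by positivity))
    have hexp₂ : exp (-(r * t)) ≤ 1 := exp_le_one_iff.2 (neg_nonpos.2 (by positivity))
    have := rpow_nonneg hr β
    calc r ^ β * exp (-(μ / r)) * exp (-(r * t)) ≤ r ^ β * 1 * 1 := by gcongr
      _ = r ^ β := by rw [mul_one, mul_one]

lemma besselInt_recurrence (hβ : -2 < β) (hμ : 0 < μ) (ht : 0 < t) :
    t * besselInt (β + 2) μ t = (β + 2) * besselInt (β + 1) μ t + μ * besselInt β μ t := by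
  have hint₀ := (integrableOn_besselFn β hμ ht).const_mul μ
  have hint₁ := (integrableOn_besselFn (β + 1) hμ ht).const_mul (β + 2)
  have hint₂ := integrableOn_besselFn (β + 2) hμ ht
  have hderiv := fun r (hr : r ∈ Ioi (0 : ℝ)) => hasDerivAt_besselFn β μ t hr
  have hint₁₀ : IntegrableOn (fun r => (β + 2) * besselFn (β + 1) μ t r + μ * besselFn β μ t r)
      (Ioi 0) := hint₁.add hint₀
  have hint := hint₁₀.sub (hint₂.const_mul t)
  have h := integral_Ioi_of_hasDerivAt_of_tendsto
    (continuousWithinAt_besselFn_zero (by linarith) hμ.le ht.le) hderiv hint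
    (tendsto_zero_of_hasDerivAt_of_integrableOn_Ioi hderiv hint hint₂)
  rw [integral_sub hint₁₀ (hint₂.const_mul t), integral_add hint₁ hint₀,
    integral_const_mul, integral_const_mul, integral_const_mul, besselFn,
    zero_rpow (by linarith)] at h
  unfold besselInt
  linarith

end Bessel

/-! ### Green's formula and Bessel test functions -/

section Green

variable {N : ℕ} {u v φ : ℝ × EN N → ℝ}

lemma MemH1.fderiv_mul_apply (hu : MemH1 u) (hv : MemH1 v) {p : ℝ × EN N} (hp : p ∈ upperHalf N)
    (e : ℝ × EN N) :
    fderiv ℝ (fun q => u q * v q) p e = fderiv ℝ u p e * v p + u p * fderiv ℝ v p e := by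
  rw [fderiv_fun_mul (hu.diff p hp) (hv.diff p hp)]
  simp only [add_apply, smul_apply, smul_eq_mul]
  ring

lemma MemH1.integrableOn_fderiv_mul_add (hu : MemH1 u) (hv : MemH1 v) {e : ℝ × EN N}
    (hue : IntegrableOn (fun p => fderiv ℝ u p e ^ 2) (upperHalf N))
    (hve : IntegrableOn (fun p => fderiv ℝ v p e ^ 2) (upperHalf N)) :
    IntegrableOn (fun p => fderiv ℝ u p e * v p + u p * fderiv ℝ v p e) (upperHalf N) :=
  ((hv.integrableOn_mul_fderiv hue).congr (Eventually.of_forall fun _ => mul_comm _ _)).add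
    (hu.integrableOn_mul_fderiv hve)

lemma MemH1.integral_fderiv_ex_mul_add (hu : MemH1 u) (hv : MemH1 v) :
    ∫ p in upperHalf N, (fderiv ℝ u p (ex N) * v p + u p * fderiv ℝ v p (ex N))
      = -∫ y, u (0, y) * v (0, y) := by
  rw [← setIntegral_congr_fun (measurableSet_upperHalf N)
    fun p hp => hu.fderiv_mul_apply hv hp (ex N)]
  exact (integral_fderiv_ex_upperHalf (hu.contOn.mul hv.contOn)
    (fun p hp => (hu.diff p hp).mul (hv.diff p hp)) (hu.integrableOn_mul hv)
    ((hu.integrableOn_fderiv_mul_add hv hu.integrableOn_sq_fderiv_ex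
      hv.integrableOn_sq_fderiv_ex).congr_fun (fun p hp => (hu.fderiv_mul_apply hv hp _).symm)
      (measurableSet_upperHalf N))).2

lemma MemH1.integral_fderiv_ey_mul_add (hu : MemH1 u) (hv : MemH1 v) (i : Fin N) :
    ∫ p in upperHalf N, (fderiv ℝ u p (ey i) * v p + u p * fderiv ℝ v p (ey i)) = 0 := by
  rw [← setIntegral_congr_fun (measurableSet_upperHalf N)
    fun p hp => hu.fderiv_mul_apply hv hp (ey i)]
  exact integral_fderiv_snd_upperHalf _ (fun p hp => (hu.diff p hp).mul (hv.diff p hp))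
    (hu.integrableOn_mul hv) ((hu.integrableOn_fderiv_mul_add hv (hu.integrableOn_sq_fderiv_ey i)
      (hv.integrableOn_sq_fderiv_ey i)).congr_fun
      (fun p hp => (hu.fderiv_mul_apply hv hp _).symm) (measurableSet_upperHalf N))

lemma MemH1.integral_gradDot_add_mul_lap (hv : MemH1 v)
    (hx : MemH1 fun q => fderiv ℝ φ q (ex N)) (hy : ∀ i, MemH1 fun q => fderiv ℝ φ q (ey i)) :
    ∫ p in upperHalf N, (gradDot v φ p + v p * lap φ p)
      = -∫ y, v (0, y) * fderiv ℝ φ (0, y) (ex N) := by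
  have hsplit : ∀ p, gradDot v φ p + v p * lap φ p
      = (fderiv ℝ v p (ex N) * fderiv ℝ φ p (ex N)
          + v p * fderiv ℝ (fun q => fderiv ℝ φ q (ex N)) p (ex N))
        + ∑ i, (fderiv ℝ v p (ey i) * fderiv ℝ φ p (ey i)
          + v p * fderiv ℝ (fun q => fderiv ℝ φ q (ey i)) p (ey i)) := fun p => by
    rw [gradDot, lap, mul_add, Finset.mul_sum, Finset.sum_add_distrib]; ring
  have hintx := hv.integrableOn_fderiv_mul_add hx hv.integrableOn_sq_fderiv_ex
    hx.integrableOn_sq_fderiv_ex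
  have hinty := fun i => hv.integrableOn_fderiv_mul_add (hy i) (hv.integrableOn_sq_fderiv_ey i)
    ((hy i).integrableOn_sq_fderiv_ey i)
  simp only [hsplit]
  rw [integral_add hintx (integrable_finsetSum _ fun i _ => hinty i),
    integral_finsetSum _ fun i _ => hinty i, hv.integral_fderiv_ex_mul_add hx,
    Finset.sum_eq_zero fun i _ => hv.integral_fderiv_ey_mul_add (hy i) i, add_zero]

lemma IsWeakSolution.integral_comp_trace_mul_of_lap_eq {m : ℝ} {f : ℝ → ℝ}
    (hv : IsWeakSolution m f v) (hφ : MemH1 φ) (hx : MemH1 fun q => fderiv ℝ φ q (ex N))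
    (hy : ∀ i, MemH1 fun q => fderiv ℝ φ q (ey i))
    (hlap : ∀ p ∈ upperHalf N, lap φ p = m ^ 2 * φ p) :
    ∫ y, f (v (0, y)) * φ (0, y) = -∫ y, v (0, y) * fderiv ℝ φ (0, y) (ex N) := by
  rw [← hv.2 φ hφ, ← hv.1.integral_gradDot_add_mul_lap hx hy]
  refine setIntegral_congr_fun (measurableSet_upperHalf N) fun p hp => ?_
  simp only [hlap p hp]
  ring

end Green

section BesselTest

open Asymptotics

variable {N : ℕ}

lemma integrable_inv_one_add_sqDist (a : ℝ) (z : EN N) :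
    Integrable (fun p => 1 / (1 + sqDist a z p) ^ (N + 2)) := by
  have : (volume : Measure (ℝ × EN N)).IsAddHaarMeasure := by
    rw [Measure.volume_eq_prod]; infer_instance
  have hs : ∀ p, 0 ≤ sqDist a z p := sqDist_nonneg a z
  have hnorm : ∀ p, ‖p - (-a, z)‖ ^ 2 ≤ sqDist a z p := fun p => by
    rw [Prod.norm_def]
    rcases max_choice ‖(p - (-a, z)).1‖ ‖(p - (-a, z)).2‖ with h | h <;> rw [h] <;>
      simp [sqDist, sq_nonneg]
  have hint := integrable_rpow_neg_one_add_norm_sq (E := ℝ × EN N) (μ := volume)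
    (r := 2 * ((N + 2 : ℕ) : ℝ)) (by simp; linarith)
  refine (hint.comp_sub_right ((-a, z) : ℝ × EN N)).mono' ?_ (Eventually.of_forall fun p => ?_)
  · exact (continuous_const.div ((continuous_const.add (continuous_sqDist a z)).pow _)
      fun p => (pow_pos (add_pos_of_pos_of_nonneg one_pos (hs p)) _).ne').aestronglyMeasurable
  · have := hs p
    have := hnorm p
    rw [Real.norm_of_nonneg (by positivity), show -(2 * ((N + 2 : ℕ) : ℝ)) / 2
      = -((N + 2 : ℕ) : ℝ) by ring, rpow_neg (by positivity), rpow_natCast, one_div]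
    gcongr

lemma integrableOn_sq_of_isBigO_inv_one_add_sqDist {a : ℝ} {z : EN N} {Φ : ℝ × EN N → ℝ}
    (hm : AEStronglyMeasurable Φ (volume.restrict (upperHalf N)))
    (hO : Φ =O[𝓟 (upperHalf N)] fun p => 1 / (1 + sqDist a z p) ^ (N + 2)) :
    IntegrableOn (fun p => Φ p ^ 2) (upperHalf N) := by
  obtain ⟨C, hC⟩ := isBigO_principal.1 hO
  refine ((integrable_inv_one_add_sqDist a z).integrableOn.const_mul (C ^ 2)).mono'
    (hm.pow 2) (ae_restrict_of_forall_mem (measurableSet_upperHalf N) fun p hp => ?_)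
  have hs : 0 < 1 + sqDist a z p := by linarith [sqDist_nonneg a z p]
  have hle : 1 / (1 + sqDist a z p) ^ (N + 2) ≤ 1 :=
    div_le_one_of_le₀ (one_le_pow₀ (by linarith [sqDist_nonneg a z p])) (by positivity)
  calc ‖Φ p ^ 2‖ = ‖Φ p‖ ^ 2 := norm_pow _ _
    _ ≤ (C * ‖1 / (1 + sqDist a z p) ^ (N + 2)‖) ^ 2 := by gcongr; exact hC p hp
    _ = C ^ 2 * (1 / (1 + sqDist a z p) ^ (N + 2) * (1 / (1 + sqDist a z p) ^ (N + 2))) := by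
        rw [Real.norm_of_nonneg (by positivity)]; ring
    _ ≤ C ^ 2 * (1 / (1 + sqDist a z p) ^ (N + 2)) := by
        gcongr
        exact mul_le_of_le_one_left (by positivity) hle

lemma memH1_of_isBigO_inv_one_add_sqDist {a : ℝ} {z : EN N} {Φ : ℝ × EN N → ℝ}
    (hc : ContinuousOn Φ (closedHalf N)) (hd : ∀ p ∈ upperHalf N, DifferentiableAt ℝ Φ p)
    (hO : Φ =O[𝓟 (upperHalf N)] fun p => 1 / (1 + sqDist a z p) ^ (N + 2))
    (hO' : ∀ w, (fun p => fderiv ℝ Φ p w) =O[𝓟 (upperHalf N)]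
      fun p => 1 / (1 + sqDist a z p) ^ (N + 2)) :
    MemH1 Φ where
  contOn := hc
  diff := hd
  memL2 := integrableOn_sq_of_isBigO_inv_one_add_sqDist
    ((hc.mono (upperHalf_subset_closedHalf N)).aestronglyMeasurable (measurableSet_upperHalf N)) hO
  gradL2 := by
    have hint : ∀ w, Integrable (fun p => fderiv ℝ Φ p w ^ 2) (volume.restrict (upperHalf N)) :=
      fun w => integrableOn_sq_of_isBigO_inv_one_add_sqDist
        (measurable_fderiv_apply_const ℝ Φ w).aestronglyMeasurable (hO' w)
    simp only [gradSq, gradDot, ← sq]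
    exact (hint _).add (integrable_finsetSum _ fun i _ => hint _)

variable (β μ a : ℝ) (z : EN N) (p w w' : ℝ × EN N)

lemma hasFDerivAt_dispForm_apply :
    HasFDerivAt (fun q => dispForm a z q w) (dispForm 0 0 w) p := by
  refine (((hasFDerivAt_fst.add_const a).mul_const w.1).add
    ((hasFDerivAt_snd.sub_const z).inner ℝ (hasFDerivAt_const w.2 p))).congr_fderiv ?_
  ext w'
  · simp [dispForm_apply]
  · simp [dispForm_apply, real_inner_comm]

lemma isBigO_const_pow_zero (c : ℝ) (s : Set (ℝ × EN N)) :
    (fun _ => c) =O[𝓟 s] fun p => (1 + sqDist a z p) ^ 0 := by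
  simpa only [pow_zero] using isBigO_const_const c one_ne_zero _

lemma isBigO_dispForm (s : Set (ℝ × EN N)) :
    (fun p => dispForm a z p w) =O[𝓟 s] fun p => (1 + sqDist a z p) ^ 1 :=
  isBigO_principal.2 ⟨sqDist 0 0 w + 1, fun p _ => by
    have hs := sqDist_nonneg a z p
    have hw := sq_dispForm_le a z p w
    rw [pow_one, Real.norm_eq_abs, Real.norm_of_nonneg (by linarith)]
    simp only [sqDist, add_zero, sub_zero] at hs hw ⊢
    nlinarith [sq_nonneg (|dispForm a z p w| - 1), sq_abs (dispForm a z p w), sq_nonneg w.1,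
      sq_nonneg ‖w.2‖]⟩

lemma hasFDerivAt_besselInt_sqDist {μ : ℝ} (hμ : 0 < μ) {p : ℝ × EN N}
    (hp : 0 < sqDist a z p) :
    HasFDerivAt (fun q => besselInt β μ (sqDist a z q))
      ((-2 * besselInt (β + 1) μ (sqDist a z p)) • dispForm a z p) p := by
  refine ((hasDerivAt_besselInt β hμ hp).comp_hasFDerivAt p (hasFDerivAt_sqDist a z p)).congr_fderiv
    ?_
  rw [smul_smul]
  ring_nf

lemma fderiv_besselInt_sqDist_apply {μ : ℝ} (hμ : 0 < μ) {p : ℝ × EN N}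
    (hp : 0 < sqDist a z p) :
    fderiv ℝ (fun q => besselInt β μ (sqDist a z q)) p w
      = -2 * (dispForm a z p w * besselInt (β + 1) μ (sqDist a z p)) := by
  rw [(hasFDerivAt_besselInt_sqDist β a z hμ hp).fderiv, smul_apply, smul_eq_mul]
  ring

lemma hasFDerivAt_fderiv_besselInt_sqDist_apply {μ : ℝ} (hμ : 0 < μ) {p : ℝ × EN N}
    (hp : 0 < sqDist a z p) :
    HasFDerivAt (fun q => fderiv ℝ (fun q => besselInt β μ (sqDist a z q)) q w)
      ((4 * dispForm a z p w * besselInt (β + 2) μ (sqDist a z p)) • dispForm a z p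
        - (2 * besselInt (β + 1) μ (sqDist a z p)) • dispForm 0 0 w) p := by
  have heq : (fun q => fderiv ℝ (fun q => besselInt β μ (sqDist a z q)) q w)
      =ᶠ[𝓝 p] fun q => -2 * (dispForm a z q w * besselInt (β + 1) μ (sqDist a z q)) :=
    ((isOpen_lt continuous_const (continuous_sqDist a z)).eventually_mem hp).mono
      fun q hq => fderiv_besselInt_sqDist_apply β a z w hμ hq
  refine ((((hasFDerivAt_dispForm_apply a z p w).fun_mul
    (hasFDerivAt_besselInt_sqDist (β + 1) a z hμ hp)).const_mul (-2)).congr_of_eventuallyEq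
    heq).congr_fderiv ?_
  rw [add_assoc, one_add_one_eq_two]
  ext e <;> simp only [ContinuousLinearMap.comp_apply, add_apply, sub_apply, smul_apply,
    smul_eq_mul] <;> ring

lemma fderiv_fderiv_besselInt_sqDist_apply {μ : ℝ} (hμ : 0 < μ) {p : ℝ × EN N}
    (hp : 0 < sqDist a z p) :
    fderiv ℝ (fun q => fderiv ℝ (fun q => besselInt β μ (sqDist a z q)) q w) p w'
      = 4 * (dispForm a z p w * dispForm a z p w' * besselInt (β + 2) μ (sqDist a z p))
        - 2 * (dispForm 0 0 w w' * besselInt (β + 1) μ (sqDist a z p)) := by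
  rw [(hasFDerivAt_fderiv_besselInt_sqDist_apply β a z w hμ hp).fderiv]
  simp only [sub_apply, smul_apply, smul_eq_mul]
  ring

lemma lap_besselInt_sqDist {μ : ℝ} (hμ : 0 < μ) {p : ℝ × EN N} (hp : 0 < sqDist a z p) :
    lap (fun q => besselInt β μ (sqDist a z q)) p
      = 4 * (sqDist a z p * besselInt (β + 2) μ (sqDist a z p))
        - 2 * (N + 1) * besselInt (β + 1) μ (sqDist a z p) := by
  have hx : dispForm 0 0 (ex N) (ex N) = 1 := by rw [dispForm_ex]; simp [ex]
  have hy : ∀ i : Fin N, dispForm 0 0 (ey i) (ey i) = 1 := fun i => by rw [dispForm_ey]; simp [ey]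
  simp only [lap, fderiv_fderiv_besselInt_sqDist_apply β a z _ _ hμ hp, hx, hy, ← Finset.sum_mul,
    ← Finset.mul_sum, Finset.sum_sub_distrib, Finset.sum_const, Finset.card_univ,
    Fintype.card_fin, nsmul_eq_mul, ← sq]
  linear_combination 4 * besselInt (β + 2) μ (sqDist a z p) * sq_dispForm_ex_add_sum a z p

lemma lap_besselInt_sqDist_eq {μ : ℝ} (hμ : 0 < μ) {p : ℝ × EN N} (hp : 0 < sqDist a z p) :
    lap (fun q => besselInt (((N : ℝ) - 3) / 2) μ (sqDist a z q)) p
      = 4 * μ * besselInt (((N : ℝ) - 3) / 2) μ (sqDist a z p) := by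
  have hrec := besselInt_recurrence (β := ((N : ℝ) - 3) / 2)
    (by linarith [N.cast_nonneg (α := ℝ)]) hμ hp
  rw [lap_besselInt_sqDist _ a z hμ hp, hrec]
  ring

variable {μ a}

lemma sq_le_sqDist (ha : 0 ≤ a) {p : ℝ × EN N} (hp : p ∈ closedHalf N) : a ^ 2 ≤ sqDist a z p := by
  have hp0 : 0 ≤ p.1 := hp
  unfold sqDist
  nlinarith [sq_nonneg ‖p.2 - z‖]

lemma sqDist_pos (ha : 0 < a) {p : ℝ × EN N} (hp : p ∈ closedHalf N) : 0 < sqDist a z p :=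
  (pow_pos ha 2).trans_le (sq_le_sqDist z ha.le hp)

lemma isBigO_mul_besselInt_sqDist (hμ : 0 < μ) (ha : 0 < a) {g : ℝ × EN N → ℝ} {j : ℕ}
    (hg : g =O[𝓟 (upperHalf N)] fun p => (1 + sqDist a z p) ^ j) :
    (fun p => g p * besselInt β μ (sqDist a z p))
      =O[𝓟 (upperHalf N)] fun p => 1 / (1 + sqDist a z p) ^ (N + 2) := by
  obtain ⟨C, -, hCle⟩ := exists_besselInt_le β hμ (pow_pos ha 2) (j + (N + 2))
  have hB : (fun p => besselInt β μ (sqDist a z p))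
      =O[𝓟 (upperHalf N)] fun p => 1 / (1 + sqDist a z p) ^ (j + (N + 2)) :=
    isBigO_principal.2 ⟨C, fun p hp => by
      have hs := sqDist_nonneg a z p
      rw [Real.norm_of_nonneg (besselInt_nonneg _ _ _), Real.norm_of_nonneg (by positivity),
        mul_one_div]
      exact hCle _ (sq_le_sqDist z ha.le (upperHalf_subset_closedHalf N hp))⟩
  refine (hg.mul hB).congr_right fun p => ?_
  have hs := sqDist_nonneg a z p
  rw [pow_add]
  field_simp

lemma memH1_besselInt_sqDist (hμ : 0 < μ) (ha : 0 < a) :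
    MemH1 fun q => besselInt β μ (sqDist a z q) := by
  have hsub := upperHalf_subset_closedHalf N
  have hderiv := fun p (hp : p ∈ closedHalf N) =>
    hasFDerivAt_besselInt_sqDist β a z hμ (sqDist_pos z ha hp)
  refine memH1_of_isBigO_inv_one_add_sqDist (a := a) (z := z)
    (fun p hp => (hderiv p hp).continuousAt.continuousWithinAt)
    (fun p hp => (hderiv p (hsub hp)).differentiableAt) ?_ fun w => ?_
  · simpa only [one_mul] using
      isBigO_mul_besselInt_sqDist β z hμ ha (isBigO_const_pow_zero a z 1 _)
  · refine ((isBigO_mul_besselInt_sqDist (β + 1) z hμ ha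
      (isBigO_dispForm a z w _)).const_mul_left (-2)).congr' ?_ EventuallyEq.rfl
    exact eventually_principal.2 fun p hp =>
      (fderiv_besselInt_sqDist_apply β a z w hμ (sqDist_pos z ha (hsub hp))).symm

lemma memH1_fderiv_besselInt_sqDist_apply (hμ : 0 < μ) (ha : 0 < a) :
    MemH1 fun q => fderiv ℝ (fun q => besselInt β μ (sqDist a z q)) q w := by
  have hsub := upperHalf_subset_closedHalf N
  have hderiv := fun p (hp : p ∈ closedHalf N) =>
    hasFDerivAt_fderiv_besselInt_sqDist_apply β a z w hμ (sqDist_pos z ha hp)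
  refine memH1_of_isBigO_inv_one_add_sqDist (a := a) (z := z)
    (fun p hp => (hderiv p hp).continuousAt.continuousWithinAt)
    (fun p hp => (hderiv p (hsub hp)).differentiableAt) ?_ fun w' => ?_
  · refine ((isBigO_mul_besselInt_sqDist (β + 1) z hμ ha
      (isBigO_dispForm a z w _)).const_mul_left (-2)).congr' ?_ EventuallyEq.rfl
    exact eventually_principal.2 fun p hp =>
      (fderiv_besselInt_sqDist_apply β a z w hμ (sqDist_pos z ha (hsub hp))).symm
  · have hquad : (fun p => dispForm a z p w * dispForm a z p w')
        =O[𝓟 (upperHalf N)] fun p => (1 + sqDist a z p) ^ 2 := by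
      simpa only [← pow_add] using (isBigO_dispForm a z w _).mul (isBigO_dispForm a z w' _)
    refine (((isBigO_mul_besselInt_sqDist (β + 2) z hμ ha hquad).const_mul_left 4).sub
      ((isBigO_mul_besselInt_sqDist (β + 1) z hμ ha
        (isBigO_const_pow_zero a z (dispForm 0 0 w w') _)).const_mul_left 2)).congr' ?_
      EventuallyEq.rfl
    exact eventually_principal.2 fun p hp =>
      (fderiv_fderiv_besselInt_sqDist_apply β a z w w' hμ (sqDist_pos z ha (hsub hp))).symm

end BesselTest

/-- The Poisson kernel of `m² - Δ` on the half-space, up to a constant factor, at height `a`. -/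
def poissonKer (N : ℕ) (m a : ℝ) (η : EN N) : ℝ :=
  2 * a * besselInt (((N : ℝ) - 3) / 2 + 1) (m ^ 2 / 4) (a ^ 2 + ‖η‖ ^ 2)

/-- The Neumann kernel of `m² - Δ` on the half-space, with the same constant factor as
`poissonKer`, at height `a`. -/
def neumannKer (N : ℕ) (m a : ℝ) (η : EN N) : ℝ :=
  besselInt (((N : ℝ) - 3) / 2) (m ^ 2 / 4) (a ^ 2 + ‖η‖ ^ 2)

lemma IsWeakSolution.integral_trace_mul_poissonKer {N : ℕ} {m a : ℝ} {f : ℝ → ℝ}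
    {v : ℝ × EN N → ℝ} (hv : IsWeakSolution m f v) (hm : 0 < m) (ha : 0 < a) (z : EN N) :
    ∫ y, v (0, y) * poissonKer N m a (y - z)
      = ∫ y, f (v (0, y)) * neumannKer N m a (y - z) := by
  have hμ : 0 < m ^ 2 / 4 := by positivity
  have hs : ∀ y : EN N, sqDist a z (0, y) = a ^ 2 + ‖y - z‖ ^ 2 := fun y => by
    rw [sqDist, zero_add]
  have h := hv.integral_comp_trace_mul_of_lap_eq
    (memH1_besselInt_sqDist (((N : ℝ) - 3) / 2) z hμ ha)
    (memH1_fderiv_besselInt_sqDist_apply _ z _ hμ ha)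
    (fun i => memH1_fderiv_besselInt_sqDist_apply _ z _ hμ ha) fun p hp => by
      rw [lap_besselInt_sqDist_eq a z hμ (sqDist_pos z ha (upperHalf_subset_closedHalf N hp))]
      ring
  simp only [hs] at h
  simp only [neumannKer, h, ← integral_neg]
  refine integral_congr_ae (Eventually.of_forall fun y => ?_)
  simp only [fderiv_besselInt_sqDist_apply _ a z _ hμ (sqDist_pos z ha (zero_mk_mem_closedHalf y)),
    dispForm_ex, hs, poissonKer]
  ring

lemma integrable_inv_one_add_norm_sq (N : ℕ) :
    Integrable fun y : EN N => 1 / (1 + ‖y‖ ^ 2) ^ (N + 1) := by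
  refine (integrable_rpow_neg_one_add_norm_sq (E := EN N) (μ := volume)
    (r := 2 * ((N + 1 : ℕ) : ℝ)) (by simp; linarith [N.cast_nonneg (α := ℝ)])).congr
    (Eventually.of_forall fun y => ?_)
  simp only
  rw [show -(2 * ((N + 1 : ℕ) : ℝ)) / 2 = -((N + 1 : ℕ) : ℝ) by ring, rpow_neg (by positivity),
    rpow_natCast, one_div]

lemma ae_ne {α : Type*} [MeasureSpace α] [NullSingletonClass (volume : Measure α)] (z : α) :
    ∀ᵐ y, y ≠ z :=
  (countable_singleton z).ae_notMem volume

section Kernels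

variable {N : ℕ} {β μ t₀ m a : ℝ}

lemma continuous_besselInt_add_norm_sq (β : ℝ) (hμ : 0 < μ) (ht₀ : 0 < t₀) :
    Continuous fun η : EN N => besselInt β μ (t₀ + ‖η‖ ^ 2) :=
  (continuousOn_besselInt β hμ).comp_continuous (by fun_prop) fun η =>
    add_pos_of_pos_of_nonneg ht₀ (sq_nonneg _)

lemma besselInt_add_norm_sq_le (β : ℝ) (hμ : 0 < μ) (ht₀ : 0 < t₀) (η : EN N) :
    besselInt β μ (t₀ + ‖η‖ ^ 2) ≤ besselInt β μ t₀ :=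
  (besselInt_strictAntiOn β hμ).antitoneOn ht₀ (add_pos_of_pos_of_nonneg ht₀ (sq_nonneg _))
    (le_add_of_nonneg_right (sq_nonneg _))

lemma integrable_besselInt_add_norm_sq (β : ℝ) (hμ : 0 < μ) (ht₀ : 0 < t₀) :
    Integrable fun η : EN N => besselInt β μ (t₀ + ‖η‖ ^ 2) := by
  obtain ⟨C, hC, hle⟩ := exists_besselInt_le β hμ ht₀ (N + 1)
  refine ((integrable_inv_one_add_norm_sq N).const_mul C).mono'
    (continuous_besselInt_add_norm_sq β hμ ht₀).aestronglyMeasurable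
    (Eventually.of_forall fun η => ?_)
  rw [Real.norm_of_nonneg (besselInt_nonneg _ _ _), mul_one_div]
  refine (hle _ (le_add_of_nonneg_right (sq_nonneg ‖η‖))).trans ?_
  gcongr
  linarith

lemma poissonKer_nonneg (m : ℝ) (ha : 0 ≤ a) (η : EN N) : 0 ≤ poissonKer N m a η :=
  mul_nonneg (by positivity) (besselInt_nonneg _ _ _)

lemma neumannKer_nonneg (m a : ℝ) (η : EN N) : 0 ≤ neumannKer N m a η :=
  besselInt_nonneg _ _ _

lemma measurable_neumannKer (N : ℕ) (m a : ℝ) : Measurable (neumannKer N m a) :=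
  (measurable_besselInt _ _).comp (by fun_prop)

lemma neumannKer_neg (m a : ℝ) (η : EN N) : neumannKer N m a (-η) = neumannKer N m a η := by
  simp only [neumannKer, norm_neg]

lemma neumannKer_le_neumannKer_zero (hm : 0 < m) (a : ℝ) {η : EN N} (hη : η ≠ 0) :
    neumannKer N m a η ≤ neumannKer N m 0 η := by
  have hη2 : 0 < ‖η‖ ^ 2 := pow_pos (norm_pos_iff.2 hη) 2
  refine (besselInt_strictAntiOn _ (by positivity)).antitoneOn ?_ ?_ ?_
  · simpa using hη2
  · exact add_pos_of_nonneg_of_pos (sq_nonneg a) hη2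
  · gcongr ?_ + _
    simpa using sq_nonneg a

lemma integrable_poissonKer (hm : 0 < m) (ha : 0 < a) : Integrable (poissonKer N m a) :=
  (integrable_besselInt_add_norm_sq _ (by positivity) (by positivity)).const_mul (2 * a)

lemma integrable_mul_of_abs_le_mul_one_add {α : Type*} [MeasurableSpace α] {ν : Measure α}
    {g h w : α → ℝ} {A C : ℝ} (hg : AEStronglyMeasurable g ν) (hw : Integrable w ν)
    (hwC : ∀ y, |w y| ≤ C) (hh : Integrable h ν) (hle : ∀ y, |g y| ≤ A * (1 + |h y|)) :
    Integrable (fun y => g y * w y) ν := by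
  have hhw : Integrable (fun y => h y * w y) ν :=
    hh.mul_bdd hw.aestronglyMeasurable (Eventually.of_forall hwC)
  refine ((hw.norm.add hhw.norm).const_mul A).mono' (hg.mul hw.aestronglyMeasurable)
    (Eventually.of_forall fun y => ?_)
  simp only [Pi.add_apply, Real.norm_eq_abs, abs_mul]
  calc |g y| * |w y| ≤ A * (1 + |h y|) * |w y| := by gcongr; exact hle y
    _ = A * (|w y| + |h y| * |w y|) := by ring

lemma MemH1.integrable_trace_mul_poissonKer {v : ℝ × EN N → ℝ} (hv : MemH1 v) (hm : 0 < m)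
    (ha : 0 < a) (z : EN N) : Integrable fun y => v (0, y) * poissonKer N m a (y - z) := by
  have hle (y : EN N) : |poissonKer N m a (y - z)|
      ≤ 2 * a * besselInt (((N : ℝ) - 3) / 2 + 1) (m ^ 2 / 4) (a ^ 2) := by
    rw [abs_of_nonneg (poissonKer_nonneg m ha.le _), poissonKer]
    gcongr
    exact besselInt_add_norm_sq_le _ (by positivity) (by positivity) _
  refine integrable_mul_of_abs_le_mul_one_add (A := 1) hv.continuous_trace.aestronglyMeasurable
    ((integrable_poissonKer hm ha).comp_sub_right z) hle hv.integrable_trace_sq fun y => ?_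
  rw [abs_sq, one_mul, ← sq_abs]
  nlinarith [sq_nonneg (|v (0, y)| - 1)]

end Kernels

section Nonlinearity

variable {N : ℕ} {f : ℝ → ℝ}

lemma exists_abs_le_of_mem_Icc (hf : Continuous f) (M : ℝ) :
    ∃ C, 0 ≤ C ∧ ∀ t ∈ Icc 0 M, |f t| ≤ C := by
  obtain ⟨C, hC⟩ := (isCompact_Icc (a := (0 : ℝ)) (b := M)).exists_bound_of_continuousOn
    hf.continuousOn
  exact ⟨max C 0, le_max_right _ _, fun t ht => (hC t ht).trans (le_max_left _ _)⟩

namespace HypF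

lemma continuous (hf : HypF N f) : Continuous f := hf.smooth.continuous

lemma exists_abs_le_rpow (hf : HypF N f) : ∃ p M : ℝ, 1 < p ∧
    p < ((N : ℝ) + 1) / ((N : ℝ) - 1) ∧ 1 ≤ M ∧ ∀ t, M ≤ t → |f t| ≤ t ^ p := by
  obtain ⟨p, hp1, hp2, hlim⟩ := hf.f2
  have hlt : ∀ᶠ t in atTop, |f t / t ^ p| < 1 := by
    simpa only [abs_zero] using hlim.abs.eventually_lt_const (by simp)
  obtain ⟨M, hM⟩ := eventually_atTop.1 hlt
  refine ⟨p, max M 1, hp1, hp2, le_max_right _ _, fun t ht => ?_⟩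
  have hpos : 0 < t ^ p := rpow_pos_of_pos (one_pos.trans_le ((le_max_right _ _).trans ht)) p
  have hMt := hM t ((le_max_left _ _).trans ht)
  rw [abs_div, abs_of_pos hpos, div_lt_one hpos] at hMt
  exact hMt.le

lemma exists_abs_le_one_add_abs_pow (hf : HypF N f) {n : ℕ}
    (hn : ((N : ℝ) + 1) / ((N : ℝ) - 1) ≤ n) : ∃ A, ∀ t, |f t| ≤ A * (1 + |t ^ n|) := by
  obtain ⟨p, M, -, hp, hM, hfp⟩ := hf.exists_abs_le_rpow
  obtain ⟨C, hC, hfC⟩ := exists_abs_le_of_mem_Icc hf.continuous M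
  refine ⟨C + 1, fun t => ?_⟩
  rcases le_total t 0 with ht | ht
  · rw [hf.nonpos t ht, abs_zero]
    positivity
  have htn : 0 ≤ t ^ n := by positivity
  rw [abs_of_nonneg htn]
  rcases le_total t M with htM | htM
  · nlinarith [hfC t ⟨ht, htM⟩]
  · have hpn : t ^ p ≤ t ^ n := by
      rw [← rpow_natCast t n]
      exact rpow_le_rpow_of_exponent_le (hM.trans htM) (hp.le.trans hn)
    nlinarith [hfp t htM]

end HypF

lemma MemH1.integrable_comp_trace_mul_neumannKer (hN : 2 ≤ N) {v : ℝ × EN N → ℝ} (hv : MemH1 v)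
    (hf : HypF N f) {m a : ℝ} (hm : 0 < m) (ha : 0 < a) (z : EN N) :
    Integrable fun y => f (v (0, y)) * neumannKer N m a (y - z) := by
  obtain ⟨n, hn, hvn⟩ := hv.exists_integrable_trace_pow hN
  obtain ⟨A, hA⟩ := hf.exists_abs_le_one_add_abs_pow hn
  have hle (y : EN N) : |neumannKer N m a (y - z)|
      ≤ besselInt (((N : ℝ) - 3) / 2) (m ^ 2 / 4) (a ^ 2) := by
    rw [abs_of_nonneg (neumannKer_nonneg _ _ _)]
    exact besselInt_add_norm_sq_le _ (by positivity) (by positivity) _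
  exact integrable_mul_of_abs_le_mul_one_add
    (hf.continuous.comp hv.continuous_trace).aestronglyMeasurable
    ((integrable_besselInt_add_norm_sq _ (by positivity) (by positivity)).comp_sub_right z)
    hle hvn fun y => hA _

end Nonlinearity

/-! ### The Poisson kernel is an approximate identity -/

/-- The limit of the total mass of `poissonKer N m a` as `a → 0`. -/
def poissonConst (N : ℕ) : ℝ :=
  ∫ ξ : EN N, 2 * besselInt (((N : ℝ) - 3) / 2 + 1) 0 (1 + ‖ξ‖ ^ 2)

section ApproximateIdentity

variable {N : ℕ} {m a : ℝ}

lemma neg_one_lt_poissonIndex (N : ℕ) : -1 < ((N : ℝ) - 3) / 2 + 1 := by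
  linarith [N.cast_nonneg (α := ℝ)]

lemma integrable_besselInt_zero_one_add_norm_sq (N : ℕ) :
    Integrable fun ξ : EN N => 2 * besselInt (((N : ℝ) - 3) / 2 + 1) 0 (1 + ‖ξ‖ ^ 2) := by
  refine (((integrable_rpow_neg_one_add_norm_sq (E := EN N) (μ := volume) (r := (N : ℝ) + 1)
    (by simp)).const_mul (Gamma (((N : ℝ) - 3) / 2 + 1 + 1))).const_mul 2).congr
    (Eventually.of_forall fun ξ => ?_)
  simp only
  rw [besselInt_zero (neg_one_lt_poissonIndex N) (by positivity)]
  congr 3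
  ring

lemma poissonConst_pos (N : ℕ) : 0 < poissonConst N := by
  have h := integral_lt_integral_of_ae_lt (ν := (volume : Measure (EN N))) (NeZero.ne _)
    (integrable_zero _ ℝ _) (integrable_besselInt_zero_one_add_norm_sq N)
    (Eventually.of_forall fun ξ => by
      have hΓ : 0 < Gamma (((N : ℝ) - 3) / 2 + 1 + 1) :=
        Gamma_pos_of_pos (by linarith [neg_one_lt_poissonIndex N])
      rw [besselInt_zero (neg_one_lt_poissonIndex N) (by positivity), Pi.zero_apply]
      positivity)
  simpa only [poissonConst, Pi.zero_apply, integral_zero] using h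

lemma poissonKer_smul (ha : 0 < a) (ξ : EN N) :
    a ^ N * poissonKer N m a (a • ξ)
      = 2 * besselInt (((N : ℝ) - 3) / 2 + 1) (m ^ 2 / 4 * a ^ 2) (1 + ‖ξ‖ ^ 2) := by
  have hnorm : a ^ 2 + ‖a • ξ‖ ^ 2 = a ^ 2 * (1 + ‖ξ‖ ^ 2) := by
    rw [norm_smul, Real.norm_of_nonneg ha.le]; ring
  have hpow : (a ^ 2) ^ (-(((N : ℝ) - 3) / 2 + 1 + 1)) = (a ^ N * a)⁻¹ := by
    rw [← rpow_natCast a 2, ← rpow_mul ha.le, ← pow_succ, ← rpow_natCast a (N + 1),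
      ← rpow_neg ha.le]
    congr 1
    push_cast
    ring
  rw [poissonKer, hnorm, besselInt_smul_sq ha, hpow]
  field_simp

lemma integral_mul_poissonKer (ha : 0 < a) (w : EN N → ℝ) (z : EN N) :
    ∫ y, w y * poissonKer N m a (y - z) = ∫ ξ, w (z + a • ξ) *
      (2 * besselInt (((N : ℝ) - 3) / 2 + 1) (m ^ 2 / 4 * a ^ 2) (1 + ‖ξ‖ ^ 2)) := by
  have hscale := Measure.integral_comp_smul (volume : Measure (EN N))
    (fun y => w (z + y) * poissonKer N m a y) a
  rw [finrank_euclideanSpace_fin, abs_of_pos (by positivity), smul_eq_mul,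
    eq_inv_mul_iff_mul_eq₀ (by positivity)] at hscale
  calc ∫ y, w y * poissonKer N m a (y - z)
      = ∫ y, w (z + y) * poissonKer N m a y := by
        rw [← integral_add_left_eq_self _ z]
        simp only [add_sub_cancel_left]
    _ = ∫ ξ, w (z + a • ξ) * (a ^ N * poissonKer N m a (a • ξ)) := by
        rw [← hscale, ← integral_const_mul]
        simp only [mul_left_comm]
    _ = _ := by simp only [poissonKer_smul ha]

lemma integral_poissonKer_lt (hm : 0 < m) (ha : 0 < a) :
    ∫ η, poissonKer N m a η < poissonConst N := by
  have hμ : 0 < m ^ 2 / 4 * a ^ 2 := by positivity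
  have h := integral_mul_poissonKer (m := m) ha (fun _ : EN N => (1 : ℝ)) 0
  simp only [one_mul, sub_zero] at h
  rw [h, poissonConst]
  refine integral_lt_integral_of_ae_lt (NeZero.ne _)
    ((integrable_besselInt_add_norm_sq _ hμ one_pos).const_mul 2)
    (integrable_besselInt_zero_one_add_norm_sq N) (Eventually.of_forall fun ξ => ?_)
  gcongr
  exact besselInt_lt_zero (neg_one_lt_poissonIndex N) hμ (by positivity)

lemma tendsto_integral_mul_poissonKer (hm : 0 < m) {w : EN N → ℝ} (hw : Continuous w) {B : ℝ}
    (hB : ∀ y, |w y| ≤ B) (z : EN N) :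
    Tendsto (fun a => ∫ y, w y * poissonKer N m a (y - z)) (𝓝[>] 0)
      (𝓝 (poissonConst N * w z)) := by
  have hpos : ∀ᶠ a : ℝ in 𝓝[>] 0, 0 < a := self_mem_nhdsWithin
  have hβ := neg_one_lt_poissonIndex N
  rw [mul_comm, poissonConst, ← integral_const_mul]
  refine Tendsto.congr' (hpos.mono fun a ha => (integral_mul_poissonKer ha w z).symm) ?_
  refine tendsto_integral_filter_of_dominated_convergence
    (fun ξ => B * (2 * besselInt (((N : ℝ) - 3) / 2 + 1) 0 (1 + ‖ξ‖ ^ 2))) ?_ ?_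
    ((integrable_besselInt_zero_one_add_norm_sq N).const_mul B) ?_
  · filter_upwards [hpos] with a ha
    exact ((hw.comp (by fun_prop)).mul (continuous_const.mul
      (continuous_besselInt_add_norm_sq _ (by positivity) one_pos))).aestronglyMeasurable
  · refine Eventually.of_forall fun a => Eventually.of_forall fun ξ => ?_
    have hJ := besselInt_nonneg (((N : ℝ) - 3) / 2 + 1) (m ^ 2 / 4 * a ^ 2) (1 + ‖ξ‖ ^ 2)
    rw [norm_mul, Real.norm_of_nonneg (mul_nonneg zero_le_two hJ), Real.norm_eq_abs]
    gcongr
    · exact (abs_nonneg _).trans (hB z)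
    · exact hB _
    · exact besselInt_le_zero hβ (by positivity) (by positivity)
  · refine Eventually.of_forall fun ξ => Tendsto.mul ?_
      (((tendsto_besselInt_mul_sq hβ (by positivity) (by positivity)).mono_left
        nhdsWithin_le_nhds).const_mul 2)
    have hcont : Continuous fun a : ℝ => w (z + a • ξ) := by fun_prop
    simpa only [zero_smul, add_zero] using (hcont.tendsto 0).mono_left nhdsWithin_le_nhds

end ApproximateIdentity

/-! ### Boundedness of the trace -/

section NeumannKernelBounds

variable {N : ℕ} {m : ℝ}

lemma integrable_indicator_Iio_norm_rpow [NeZero N] {s : ℝ} (hs : s < N) :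
    Integrable fun η : EN N => (Iio (1 : ℝ)).indicator (fun r => r ^ (-s)) ‖η‖ := by
  rw [integrable_fun_norm_addHaar volume (f := (Iio (1 : ℝ)).indicator (fun r => r ^ (-s))),
    finrank_euclideanSpace_fin]
  have hball : IntegrableOn (fun r : ℝ => r ^ ((N : ℝ) - 1 - s)) (Ioo 0 1) :=
    (intervalIntegral.integrableOn_Ioo_rpow_iff one_pos).2 (by linarith)
  have hind : IntegrableOn ((Iio (1 : ℝ)).indicator fun r : ℝ => r ^ ((N : ℝ) - 1 - s))
      (Ioi 0) := by
    rw [IntegrableOn, integrable_indicator_iff measurableSet_Iio, IntegrableOn,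
      Measure.restrict_restrict measurableSet_Iio, inter_comm]
    exact hball
  refine hind.congr_fun (fun r hr => ?_) measurableSet_Ioi
  have hr' : 0 < r := hr
  by_cases h : r < 1
  · simp only [mem_Iio, h, indicator_of_mem, smul_eq_mul]
    rw [← rpow_natCast, ← rpow_add hr', Nat.cast_sub NeZero.one_le]
    congr 1
    push_cast
    ring
  · simp only [mem_Iio, h, not_false_eq_true, indicator_of_notMem, smul_zero]

lemma neumannKer_zero_le_rpow (hN : 2 ≤ N) (hm : 0 < m) {η : EN N} (hη : η ≠ 0) :
    neumannKer N m 0 η ≤ Gamma (((N : ℝ) - 3) / 2 + 1) * ‖η‖ ^ (-((N : ℝ) - 1)) := by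
  have hN' : (2 : ℝ) ≤ N := by exact_mod_cast hN
  have hη' : 0 < ‖η‖ := norm_pos_iff.2 hη
  have hβ : -1 < ((N : ℝ) - 3) / 2 := by linarith
  rw [neumannKer, zero_pow two_ne_zero, zero_add]
  refine (besselInt_lt_zero hβ (by positivity) (by positivity)).le.trans_eq ?_
  rw [besselInt_zero hβ (by positivity), ← rpow_natCast ‖η‖ 2, ← rpow_mul hη'.le]
  congr 2
  push_cast
  ring

lemma exists_neumannKer_zero_le (hN : 2 ≤ N) (hm : 0 < m) :
    ∃ c, 0 < c ∧ ∀ η : EN N, η ≠ 0 → neumannKer N m 0 η ≤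
      c * ((Iio (1 : ℝ)).indicator (fun r => r ^ (-((N : ℝ) - 1))) ‖η‖
        + 1 / (1 + ‖η‖ ^ 2) ^ (N + 1)) := by
  obtain ⟨C, hC, hle⟩ := exists_besselInt_le (((N : ℝ) - 3) / 2) (μ := m ^ 2 / 4)
    (t₀ := 1) (by positivity) one_pos (N + 1)
  set Γ := Gamma (((N : ℝ) - 3) / 2 + 1)
  refine ⟨max C Γ, lt_max_of_lt_left hC, fun η hη => ?_⟩
  have htail : 0 ≤ 1 / (1 + ‖η‖ ^ 2) ^ (N + 1) := by positivity
  by_cases h : ‖η‖ < 1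
  · simp only [mem_Iio, h, indicator_of_mem]
    calc neumannKer N m 0 η ≤ Γ * ‖η‖ ^ (-((N : ℝ) - 1)) := neumannKer_zero_le_rpow hN hm hη
      _ ≤ max C Γ * (‖η‖ ^ (-((N : ℝ) - 1)) + 1 / (1 + ‖η‖ ^ 2) ^ (N + 1)) := by
        gcongr
        · exact le_max_right _ _
        · linarith
  · simp only [mem_Iio, h, not_false_eq_true, indicator_of_notMem, zero_add]
    rw [neumannKer, zero_pow two_ne_zero, zero_add]
    calc _ ≤ C / (1 + ‖η‖ ^ 2) ^ (N + 1) := hle _ (one_le_pow₀ (not_lt.1 h))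
      _ ≤ _ := by
        rw [mul_one_div]
        gcongr
        exact le_max_left _ _

lemma integrable_neumannKer_zero (hN : 2 ≤ N) (hm : 0 < m) : Integrable (neumannKer N m 0) := by
  have : NeZero N := ⟨by lia⟩
  obtain ⟨c, -, hle⟩ := exists_neumannKer_zero_le hN hm
  refine (((integrable_indicator_Iio_norm_rpow (s := (N : ℝ) - 1) (by linarith)).add
    (integrable_inv_one_add_norm_sq N)).const_mul c).mono'
    (measurable_neumannKer N m 0).aestronglyMeasurable ?_
  filter_upwards [ae_ne 0] with η hη
  rw [Real.norm_of_nonneg (neumannKer_nonneg _ _ _)]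
  exact hle η hη

end NeumannKernelBounds

-- Young's inequality with exponents `1 / θ` and `1 / (1 - θ)`.
lemma rpow_neg_mul_rpow_le {d r t θ : ℝ} (hθ : 0 < θ) (hθ1 : θ < 1) (hr : 0 < r) (ht : 0 ≤ t) :
    r ^ (-d) * t ^ (2 * θ) ≤ t ^ 2 / r + r ^ (-((d - θ) / (1 - θ))) := by
  have hprod : (t ^ 2 / r) ^ θ * (r ^ (-((d - θ) / (1 - θ)))) ^ (1 - θ)
      = r ^ (-d) * t ^ (2 * θ) := by
    rw [div_rpow (by positivity) hr.le, ← rpow_natCast t 2, ← rpow_mul ht, ← rpow_mul hr.le,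
      div_mul_eq_mul_div, mul_div_assoc, ← rpow_sub hr, mul_comm]
    congr 2
    have : 1 - θ ≠ 0 := by linarith
    field_simp
    ring
  have hX : 0 ≤ t ^ 2 / r := by positivity
  have hY : 0 ≤ r ^ (-((d - θ) / (1 - θ))) := by positivity
  calc r ^ (-d) * t ^ (2 * θ)
      ≤ θ * (t ^ 2 / r) + (1 - θ) * r ^ (-((d - θ) / (1 - θ))) :=
        hprod ▸ geom_mean_le_arith_mean2_weighted hθ.le (by linarith) hX hY (by ring)
    _ ≤ _ := by nlinarith

section SuperlevelPow

variable {α : Type*} {u : α → ℝ} {M q q' : ℝ}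

/-- The power `u ^ q` restricted to the superlevel set `{M < u}`: the unbounded part of the
potential `f(u) / u` is dominated by such a function. -/
def superlevelPow (u : α → ℝ) (M q : ℝ) : α → ℝ≥0∞ :=
  {x | M < u x}.indicator fun x => ENNReal.ofReal (u x ^ q)

lemma measurable_superlevelPow [MeasurableSpace α] (hu : Measurable u) (M q : ℝ) :
    Measurable (superlevelPow u M q) :=
  (hu.pow_const q).ennreal_ofReal.indicator (measurableSet_lt measurable_const hu)

lemma superlevelPow_mul_self_le (hM : 1 ≤ M) {n : ℕ} (hq : q + 1 ≤ n) (x : α) :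
    superlevelPow u M q x * ENNReal.ofReal (u x) ≤ ENNReal.ofReal (u x ^ n) := by
  by_cases hx : M < u x
  · have hux : 0 < u x := by linarith
    simp only [superlevelPow, mem_ofPred_eq, hx, indicator_of_mem]
    rw [← ENNReal.ofReal_mul (by positivity), ← rpow_add_one hux.ne', ← rpow_natCast]
    exact ENNReal.ofReal_le_ofReal
      (rpow_le_rpow_of_exponent_le (hM.trans hx.le) hq)
  · simp [superlevelPow, hx]

lemma superlevelPow_le_mul (hM : 1 ≤ M) (hq : q ≤ q') (x : α) :
    superlevelPow u M q x ≤ ENNReal.ofReal (M ^ (-(q' - q))) * superlevelPow u 1 q' x := by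
  by_cases hx : M < u x
  · have hM0 : 0 < M := by linarith
    have hux : 0 < u x := by linarith
    simp only [superlevelPow, mem_ofPred_eq, hx, hM.trans_lt hx, indicator_of_mem]
    rw [← ENNReal.ofReal_mul (by positivity)]
    refine ENNReal.ofReal_le_ofReal ?_
    calc u x ^ q = u x ^ (-(q' - q)) * u x ^ q' := by rw [← rpow_add hux]; congr 1; ring
      _ ≤ M ^ (-(q' - q)) * u x ^ q' := mul_le_mul_of_nonneg_right
        (rpow_le_rpow_of_nonpos hM0 hx.le (by linarith)) (by positivity)
  · simp [superlevelPow, hx]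

lemma ofReal_comp_le_add_superlevelPow_mul {f : ℝ → ℝ} {B p : ℝ} (hM : 0 ≤ M)
    (hB : ∀ t ∈ Icc 0 M, |f t| ≤ B) (hfp : ∀ t, M ≤ t → |f t| ≤ t ^ p) {x : α} (hx : 0 ≤ u x) :
    ENNReal.ofReal (f (u x)) ≤
      ENNReal.ofReal B + superlevelPow u M (p - 1) x * ENNReal.ofReal (u x) := by
  by_cases hMx : M < u x
  · have hux : 0 < u x := hM.trans_lt hMx
    simp only [superlevelPow, mem_ofPred_eq, hMx, indicator_of_mem]
    rw [← ENNReal.ofReal_mul (by positivity), ← rpow_add_one hux.ne', sub_add_cancel]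
    exact le_add_left (ENNReal.ofReal_le_ofReal ((le_abs_self _).trans (hfp _ hMx.le)))
  · exact le_add_right (ENNReal.ofReal_le_ofReal
      ((le_abs_self _).trans (hB _ ⟨hx, not_lt.1 hMx⟩)))

end SuperlevelPow

section Potential

variable {α : Type*} [MeasurableSpace α] {ν : Measure α} [SFinite ν] {κ : α → α → ℝ≥0∞}
  {D U V W : α → ℝ≥0∞} {b c : ℝ≥0∞}

lemma lintegral_mul_lintegral_comm (hκ : Measurable (Function.uncurry κ))
    (hsymm : ∀ x y, κ x y = κ y x) (hV : Measurable V) (hW : Measurable W) :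
    ∫⁻ z, V z * ∫⁻ y, κ z y * W y ∂ν ∂ν = ∫⁻ y, W y * ∫⁻ z, κ y z * V z ∂ν ∂ν := by
  have hκz (z : α) : Measurable (κ z) := hκ.of_uncurry_left
  calc ∫⁻ z, V z * ∫⁻ y, κ z y * W y ∂ν ∂ν
      = ∫⁻ z, ∫⁻ y, V z * (κ z y * W y) ∂ν ∂ν :=
        lintegral_congr fun z => (lintegral_const_mul _ ((hκz z).mul hW)).symm
    _ = ∫⁻ y, ∫⁻ z, V z * (κ z y * W y) ∂ν ∂ν :=
        lintegral_lintegral_swap ((hV.comp measurable_fst).mul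
          (hκ.mul (hW.comp measurable_snd))).aemeasurable
    _ = ∫⁻ y, ∫⁻ z, W y * (κ y z * V z) ∂ν ∂ν := by
        congr! 4 with y z
        rw [hsymm z y]
        ring
    _ = _ := lintegral_congr fun y => lintegral_const_mul _ ((hκz y).mul hV)

lemma eq_zero_of_mul_le_potential (hκ : Measurable (Function.uncurry κ))
    (hsymm : ∀ x y, κ x y = κ y x) (hD : Measurable D) (hV : Measurable V) (hc : c ≠ 0)
    (hc' : c ≠ ∞) (hfin : ∫⁻ y, V y * D y ∂ν ≠ ∞)
    (hsmall : ∀ z, ∫⁻ y, κ z y * V y ∂ν ≤ c / 2)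
    (hle : ∀ z, c * D z ≤ ∫⁻ y, κ z y * (V y * D y) ∂ν) (z : α) : D z = 0 := by
  have hVD : Measurable fun y => V y * D y := hV.mul hD
  set T := ∫⁻ y, V y * D y ∂ν with hT
  have hTle : c * T ≤ c / 2 * T := by
    calc c * T = ∫⁻ z, V z * (c * D z) ∂ν := by
          rw [hT, ← lintegral_const_mul _ hVD]
          simp only [mul_left_comm]
      _ ≤ ∫⁻ z, V z * ∫⁻ y, κ z y * (V y * D y) ∂ν ∂ν := by
          gcongr with z
          exact hle z
      _ = ∫⁻ y, V y * D y * ∫⁻ z, κ y z * V z ∂ν ∂ν :=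
          lintegral_mul_lintegral_comm hκ hsymm hV hVD
      _ ≤ ∫⁻ y, V y * D y * (c / 2) ∂ν := by
          gcongr with y
          exact hsmall y
      _ = c / 2 * T := by rw [lintegral_mul_const _ hVD, mul_comm]
  have hT0 : T = 0 := by
    by_contra hne
    exact (ENNReal.half_lt_self hc hc').not_ge ((ENNReal.mul_le_mul_iff_left hne hfin).1 hTle)
  have hVD0 : ∀ᵐ y ∂ν, κ z y * (V y * D y) = 0 :=
    ((lintegral_eq_zero_iff hVD).1 hT0).mono fun y (hy : V y * D y = 0) => by
      rw [hy, mul_zero]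
  have hDz := hle z
  rw [lintegral_congr_ae hVD0, lintegral_zero, nonpos_iff_eq_zero, mul_eq_zero] at hDz
  exact hDz.resolve_left hc

-- The level `H = 2b/c` solves `b + H c/2 = c H`, so `U - H` satisfies the homogeneous inequality.
lemma exists_bound_of_mul_le_add_potential (hκ : Measurable (Function.uncurry κ))
    (hsymm : ∀ x y, κ x y = κ y x) (hU : Measurable U) (hV : Measurable V) (hc : c ≠ 0)
    (hc' : c ≠ ∞) (hb : b ≠ ∞) (hfin : ∫⁻ y, V y * U y ∂ν ≠ ∞)
    (hsmall : ∀ z, ∫⁻ y, κ z y * V y ∂ν ≤ c / 2)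
    (hle : ∀ z, c * U z ≤ b + ∫⁻ y, κ z y * (V y * U y) ∂ν) :
    ∃ H, H ≠ ∞ ∧ ∀ z, U z ≤ H := by
  set H := 2 * b / c with hH
  have hcH : b + H * (c / 2) = c * H := by
    have h2b : c * H = 2 * b := by rw [hH, ENNReal.mul_div_cancel hc hc']
    rw [← mul_div_assoc, mul_comm H c, h2b, mul_comm 2 b,
      ENNReal.mul_div_cancel_right two_ne_zero ENNReal.ofNat_ne_top, mul_two]
  have hDm : Measurable fun y => U y - H := hU.sub measurable_const
  have hκz (z : α) : Measurable (κ z) := hκ.of_uncurry_left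
  have hDle (z : α) : c * (U z - H) ≤ ∫⁻ y, κ z y * (V y * (U y - H)) ∂ν := by
    rw [ENNReal.mul_sub fun _ _ => hc', tsub_le_iff_right]
    calc c * U z ≤ b + ∫⁻ y, κ z y * (V y * U y) ∂ν := hle z
      _ ≤ b + ∫⁻ y, (κ z y * (V y * (U y - H)) + H * (κ z y * V y)) ∂ν := by
        gcongr with y
        calc κ z y * (V y * U y) ≤ κ z y * (V y * (U y - H + H)) := by
              gcongr
              exact le_tsub_add
          _ = _ := by ring
      _ = b + (∫⁻ y, κ z y * (V y * (U y - H)) ∂ν + H * ∫⁻ y, κ z y * V y ∂ν) := by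
        rw [lintegral_add_left (by fun_prop), lintegral_const_mul _ (by fun_prop)]
      _ ≤ b + (∫⁻ y, κ z y * (V y * (U y - H)) ∂ν + H * (c / 2)) := by
        gcongr
        exact hsmall z
      _ = ∫⁻ y, κ z y * (V y * (U y - H)) ∂ν + c * H := by rw [← hcH]; ring
  refine ⟨H, ENNReal.div_ne_top (ENNReal.mul_ne_top ENNReal.ofNat_ne_top hb) hc, fun z =>
    tsub_eq_zero_iff_le.1 (eq_zero_of_mul_le_potential hκ hsymm hDm hV hc hc' ?_ hsmall hDle z)⟩
  refine ne_top_of_le_ne_top hfin (lintegral_mono fun y => ?_)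
  gcongr
  exact tsub_le_self

end Potential

section TraceBound

variable {N : ℕ} {m : ℝ} {f : ℝ → ℝ} {v : ℝ × EN N → ℝ}

lemma IsWeakSolution.ofReal_trace_le (hN : 2 ≤ N) (hm : 0 < m) (hf : HypF N f)
    (hv : IsWeakSolution m f v) (hv0 : ∀ y, 0 ≤ v (0, y)) (z : EN N) :
    ENNReal.ofReal (poissonConst N * v (0, z)) ≤
      ∫⁻ y, ENNReal.ofReal (neumannKer N m 0 (y - z)) * ENNReal.ofReal (f (v (0, y))) := by
  have : NeZero N := ⟨by lia⟩
  have hlim := tendsto_integral_mul_poissonKer hm (w := fun y => min (v (0, y)) (v (0, z)))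
    (hv.1.continuous_trace.min continuous_const) (B := v (0, z)) (fun y => by
      rw [abs_of_nonneg (le_min (hv0 y) (hv0 z))]
      exact min_le_right _ _) z
  simp only [min_self] at hlim
  refine le_of_tendsto ((ENNReal.continuous_ofReal.tendsto _).comp hlim) ?_
  filter_upwards [self_mem_nhdsWithin] with a (ha : 0 < a)
  have hint := hv.1.integrable_comp_trace_mul_neumannKer hN hf hm ha z
  have hpos : Integrable fun y => max (f (v (0, y)) * neumannKer N m a (y - z)) 0 := hint.pos_part
  have hP (y : EN N) : 0 ≤ poissonKer N m a (y - z) := poissonKer_nonneg m ha.le _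
  have hle : ∫ y, min (v (0, y)) (v (0, z)) * poissonKer N m a (y - z)
      ≤ ∫ y, max (f (v (0, y)) * neumannKer N m a (y - z)) 0 :=
    calc _ ≤ ∫ y, v (0, y) * poissonKer N m a (y - z) :=
          integral_mono_of_nonneg
            (Eventually.of_forall fun y => mul_nonneg (le_min (hv0 y) (hv0 z)) (hP y))
            (hv.1.integrable_trace_mul_poissonKer hm ha z)
            (Eventually.of_forall fun y => mul_le_mul_of_nonneg_right (min_le_left _ _) (hP y))
      _ = ∫ y, f (v (0, y)) * neumannKer N m a (y - z) :=
          hv.integral_trace_mul_poissonKer hm ha z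
      _ ≤ _ := integral_mono hint hpos fun y => le_max_left _ _
  refine (ENNReal.ofReal_le_ofReal hle).trans ?_
  rw [ofReal_integral_eq_lintegral_ofReal hpos (Eventually.of_forall fun y => le_max_right _ _)]
  refine lintegral_mono_ae ?_
  filter_upwards [ae_ne z] with y hy
  rw [ENNReal.ofReal_max, ENNReal.ofReal_zero, max_eq_left zero_le,
    ENNReal.ofReal_mul' (neumannKer_nonneg _ _ _), mul_comm]
  gcongr
  exact neumannKer_le_neumannKer_zero hm a (sub_ne_zero.2 hy)

lemma neumannKer_mul_rpow_le {c θ t : ℝ} {η : EN N} (hc : 0 ≤ c)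
    (hle : neumannKer N m 0 η ≤ c * ((Iio (1 : ℝ)).indicator (fun r => r ^ (-((N : ℝ) - 1))) ‖η‖
      + 1 / (1 + ‖η‖ ^ 2) ^ (N + 1))) (hη : η ≠ 0) (hθ : 0 < θ) (hθ1 : θ < 1) (ht : 1 ≤ t) :
    neumannKer N m 0 η * t ^ (2 * θ) ≤ c * (t ^ 2 / ‖η‖
      + (Iio (1 : ℝ)).indicator (fun r => r ^ (-(((N : ℝ) - 1 - θ) / (1 - θ)))) ‖η‖ + t ^ 2) := by
  have ht0 : 0 ≤ t := zero_le_one.trans ht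
  have hη' : 0 < ‖η‖ := norm_pos_iff.2 hη
  have hnear : (Iio (1 : ℝ)).indicator (fun r => r ^ (-((N : ℝ) - 1))) ‖η‖ * t ^ (2 * θ)
      ≤ t ^ 2 / ‖η‖
        + (Iio (1 : ℝ)).indicator (fun r => r ^ (-(((N : ℝ) - 1 - θ) / (1 - θ)))) ‖η‖ := by
    by_cases h : ‖η‖ < 1
    · simp only [mem_Iio, h, indicator_of_mem]
      exact rpow_neg_mul_rpow_le hθ hθ1 hη' ht0
    · simp only [mem_Iio, h, not_false_eq_true, indicator_of_notMem, zero_mul, add_zero]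
      positivity
  have hfar : 1 / (1 + ‖η‖ ^ 2) ^ (N + 1) * t ^ (2 * θ) ≤ t ^ 2 := by
    refine (mul_le_of_le_one_left (by positivity) ?_).trans ?_
    · exact div_le_one_of_le₀ (one_le_pow₀ (le_add_of_nonneg_right (sq_nonneg _))) (by positivity)
    · rw [← rpow_natCast t 2]
      exact rpow_le_rpow_of_exponent_le ht (by push_cast; linarith)
  calc neumannKer N m 0 η * t ^ (2 * θ)
      ≤ c * ((Iio (1 : ℝ)).indicator (fun r => r ^ (-((N : ℝ) - 1))) ‖η‖
        + 1 / (1 + ‖η‖ ^ 2) ^ (N + 1)) * t ^ (2 * θ) := by gcongr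
    _ ≤ _ := by
      rw [mul_assoc, add_mul]
      gcongr

lemma ofReal_neumannKer_mul_superlevelPow_le {c θ : ℝ} {η : EN N} (hc : 0 ≤ c)
    (hle : neumannKer N m 0 η ≤ c * ((Iio (1 : ℝ)).indicator (fun r => r ^ (-((N : ℝ) - 1))) ‖η‖
      + 1 / (1 + ‖η‖ ^ 2) ^ (N + 1))) (hη : η ≠ 0) (hθ : 0 < θ) (hθ1 : θ < 1) {α : Type*}
    (u : α → ℝ) (y : α) :
    ENNReal.ofReal (neumannKer N m 0 η) * superlevelPow u 1 (2 * θ) y ≤ ENNReal.ofReal c *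
      (ENNReal.ofReal (u y ^ 2 / ‖η‖) + ENNReal.ofReal ((Iio (1 : ℝ)).indicator
        (fun r => r ^ (-(((N : ℝ) - 1 - θ) / (1 - θ)))) ‖η‖) + ENNReal.ofReal (u y ^ 2)) := by
  have hind : 0 ≤ (Iio (1 : ℝ)).indicator (fun r => r ^ (-(((N : ℝ) - 1 - θ) / (1 - θ)))) ‖η‖ :=
    indicator_apply_nonneg fun _ => by positivity
  by_cases h : 1 < u y
  · simp only [superlevelPow, mem_ofPred_eq, h, indicator_of_mem]
    rw [← ENNReal.ofReal_add (by positivity) hind,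
      ← ENNReal.ofReal_add (add_nonneg (by positivity) hind) (by positivity),
      ← ENNReal.ofReal_mul hc, ← ENNReal.ofReal_mul (neumannKer_nonneg _ _ _)]
    exact ENNReal.ofReal_le_ofReal (neumannKer_mul_rpow_le hc hle hη hθ hθ1 h.le)
  · simp [superlevelPow, h]

lemma MemH1.exists_lintegral_neumannKer_mul_superlevelPow_le (hN : 2 ≤ N) (hm : 0 < m)
    (hv : MemH1 v) {θ : ℝ} (hθ : 0 < θ) (hθN : θ * ((N : ℝ) - 1) < 1) :
    ∃ A, A ≠ ∞ ∧ ∀ z, ∫⁻ y, ENNReal.ofReal (neumannKer N m 0 (y - z)) *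
      superlevelPow (fun y => v (0, y)) 1 (2 * θ) y ≤ A := by
  have : NeZero N := ⟨by lia⟩
  have hN' : (2 : ℝ) ≤ N := by exact_mod_cast hN
  have hθ1 : θ < 1 := by nlinarith
  obtain ⟨c, hc, hle⟩ := exists_neumannKer_zero_le hN hm
  set s := ((N : ℝ) - 1 - θ) / (1 - θ) with hs
  have hsN : s < N := by
    rw [hs, div_lt_iff₀ (by linarith)]
    nlinarith
  set g : ℝ → ℝ := (Iio (1 : ℝ)).indicator fun r => r ^ (-s)
  refine ⟨ENNReal.ofReal c * (ENNReal.ofReal (9 * ∫ q in upperHalf N, gradSq v q)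
    + (∫⁻ η : EN N, ENNReal.ofReal (g ‖η‖)) + ∫⁻ y, ENNReal.ofReal (v (0, y) ^ 2)), ?_, fun z => ?_⟩
  · exact ENNReal.mul_ne_top ENNReal.ofReal_ne_top (ENNReal.add_ne_top.2
      ⟨ENNReal.add_ne_top.2 ⟨ENNReal.ofReal_ne_top,
        (integrable_indicator_Iio_norm_rpow hsN).lintegral_lt_top.ne⟩,
        hv.integrable_trace_sq.lintegral_lt_top.ne⟩)
  have hpointwise : ∀ᵐ y, ENNReal.ofReal (neumannKer N m 0 (y - z)) *
      superlevelPow (fun y => v (0, y)) 1 (2 * θ) y ≤ ENNReal.ofReal c *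
        (ENNReal.ofReal (v (0, y) ^ 2 / ‖y - z‖) + ENNReal.ofReal (g ‖y - z‖)
          + ENNReal.ofReal (v (0, y) ^ 2)) := by
    filter_upwards [ae_ne z] with y hy
    exact ofReal_neumannKer_mul_superlevelPow_le hc.le (hle _ (sub_ne_zero.2 hy))
      (sub_ne_zero.2 hy) hθ hθ1 _ y
  have hum : Measurable fun y => v (0, y) ^ 2 := hv.continuous_trace.measurable.pow_const 2
  have hsq : Measurable fun y => ENNReal.ofReal (v (0, y) ^ 2) := hum.ennreal_ofReal
  have hHardy : Measurable fun y => ENNReal.ofReal (v (0, y) ^ 2 / ‖y - z‖) :=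
    (hum.div (by fun_prop)).ennreal_ofReal
  calc _ ≤ ∫⁻ y, ENNReal.ofReal c *
        (ENNReal.ofReal (v (0, y) ^ 2 / ‖y - z‖) + ENNReal.ofReal (g ‖y - z‖)
          + ENNReal.ofReal (v (0, y) ^ 2)) := lintegral_mono_ae hpointwise
    _ = ENNReal.ofReal c * ((∫⁻ y, ENNReal.ofReal (v (0, y) ^ 2 / ‖y - z‖))
          + (∫⁻ y, ENNReal.ofReal (g ‖y - z‖)) + ∫⁻ y, ENNReal.ofReal (v (0, y) ^ 2)) := by
      rw [lintegral_const_mul' _ _ ENNReal.ofReal_ne_top,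
        lintegral_add_right _ hsq, lintegral_add_left hHardy]
    _ ≤ _ := by
      rw [lintegral_sub_right_eq_self (fun η => ENNReal.ofReal (g ‖η‖)) z]
      gcongr
      exact hv.hardy_trace hN z

lemma MemH1.exists_lintegral_neumannKer_mul_superlevelPow_le_half (hN : 2 ≤ N) (hm : 0 < m)
    (hv : MemH1 v) {p : ℝ} (hp1 : 1 < p) (hpN : p < ((N : ℝ) + 1) / ((N : ℝ) - 1)) (M₀ : ℝ)
    {c : ℝ≥0∞} (hc : c ≠ 0) : ∃ M, M₀ ≤ M ∧
      ∀ z, ∫⁻ y, ENNReal.ofReal (neumannKer N m 0 (y - z)) *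
        superlevelPow (fun y => v (0, y)) M (p - 1) y ≤ c / 2 := by
  have hN' : 0 < (N : ℝ) - 1 := by
    have : (2 : ℝ) ≤ N := by exact_mod_cast hN
    linarith
  obtain ⟨p', hpp', hp'N⟩ := exists_between hpN
  rw [lt_div_iff₀ hN'] at hp'N
  obtain ⟨A, hA, hle⟩ := hv.exists_lintegral_neumannKer_mul_superlevelPow_le hN hm
    (θ := (p' - 1) / 2) (by linarith) (by linarith)
  rw [mul_div_cancel₀ _ two_ne_zero] at hle
  have hlim : Tendsto (fun M : ℝ => ENNReal.ofReal (M ^ (-(p' - 1 - (p - 1)))) * A) atTop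
      (𝓝 0) := by
    simpa using ENNReal.Tendsto.mul_const (ENNReal.tendsto_ofReal
      (tendsto_rpow_neg_atTop (y := p' - 1 - (p - 1)) (by linarith))) (Or.inr hA)
  obtain ⟨M, hMA, hM₀, hM1⟩ := ((hlim.eventually_le_const (ENNReal.half_pos hc)).and
    ((eventually_ge_atTop M₀).and (eventually_ge_atTop 1))).exists
  refine ⟨M, hM₀, fun z => ?_⟩
  calc _ ≤ ∫⁻ y, ENNReal.ofReal (M ^ (-(p' - 1 - (p - 1)))) *
        (ENNReal.ofReal (neumannKer N m 0 (y - z)) *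
          superlevelPow (fun y => v (0, y)) 1 (p' - 1) y) := by
        refine lintegral_mono fun y => ?_
        rw [mul_left_comm]
        gcongr
        exact superlevelPow_le_mul hM1 (by linarith) y
    _ ≤ ENNReal.ofReal (M ^ (-(p' - 1 - (p - 1)))) * A := by
        rw [lintegral_const_mul' _ _ ENNReal.ofReal_ne_top]
        gcongr
        exact hle z
    _ ≤ c / 2 := hMA

lemma IsWeakSolution.exists_trace_le (hN : 2 ≤ N) (hm : 0 < m) (hf : HypF N f)
    (hv : IsWeakSolution m f v) (hv0 : ∀ y, 0 ≤ v (0, y)) : ∃ B, ∀ y, v (0, y) ≤ B := by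
  have hC := poissonConst_pos N
  obtain ⟨p, M₀, hp1, hpN, hM₀, hfp⟩ := hf.exists_abs_le_rpow
  obtain ⟨n, hn, hvn⟩ := hv.1.exists_integrable_trace_pow hN
  obtain ⟨M, hM, hsmall⟩ := hv.1.exists_lintegral_neumannKer_mul_superlevelPow_le_half hN hm hp1
    hpN M₀ (ENNReal.ofReal_pos.2 hC).ne'
  obtain ⟨B, -, hB⟩ := exists_abs_le_of_mem_Icc hf.continuous M
  have hΓ : Measurable (neumannKer N m 0) := measurable_neumannKer N m 0
  have hum : Measurable fun y => v (0, y) := hv.1.continuous_trace.measurable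
  set V := superlevelPow (fun y => v (0, y)) M (p - 1)
  have hle (z : EN N) : ENNReal.ofReal (poissonConst N) * ENNReal.ofReal (v (0, z)) ≤
      ENNReal.ofReal B * (∫⁻ η, ENNReal.ofReal (neumannKer N m 0 η)) +
      ∫⁻ y, ENNReal.ofReal (neumannKer N m 0 (y - z)) * (V y * ENNReal.ofReal (v (0, y))) := by
    rw [← ENNReal.ofReal_mul hC.le,
      ← lintegral_sub_right_eq_self (fun η => ENNReal.ofReal (neumannKer N m 0 η)) z,
      ← lintegral_const_mul _ (by fun_prop), ← lintegral_add_left (by fun_prop)]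
    refine (hv.ofReal_trace_le hN hm hf hv0 z).trans (lintegral_mono fun y => ?_)
    rw [mul_comm (ENNReal.ofReal B), ← mul_add]
    gcongr
    exact ofReal_comp_le_add_superlevelPow_mul (by linarith) hB
      (fun t ht => hfp t (hM.trans ht)) (hv0 y)
  obtain ⟨H, hH, hvH⟩ := exists_bound_of_mul_le_add_potential (ν := (volume : Measure (EN N)))
    (κ := fun z y => ENNReal.ofReal (neumannKer N m 0 (y - z)))
    (by unfold Function.uncurry; fun_prop) (fun z y => by rw [← neumannKer_neg, neg_sub])
    hum.ennreal_ofReal (measurable_superlevelPow hum M (p - 1)) (ENNReal.ofReal_pos.2 hC).ne'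
    ENNReal.ofReal_ne_top
    (ENNReal.mul_ne_top ENNReal.ofReal_ne_top
      (integrable_neumannKer_zero hN hm).lintegral_lt_top.ne)
    (ne_top_of_le_ne_top hvn.lintegral_lt_top.ne (lintegral_mono fun y =>
      superlevelPow_mul_self_le (hM₀.trans hM) (by linarith) y)) hsmall hle
  exact ⟨H.toReal, fun y => (ENNReal.ofReal_le_iff_le_toReal hH).1 (hvH y)⟩

end TraceBound

/-! ### The resolvent kernel -/

/-- The kernel of the resolvent `(K + √(-Δ + m²))⁻¹` on `ℝ^N`, times `poissonConst N`, written
as the Laplace transform of the Poisson semigroup. -/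
def greenKer (N : ℕ) (m K : ℝ) (η : EN N) : ℝ :=
  ∫ a in Ioi (0 : ℝ), exp (-K * a) * poissonKer N m a η

section GreenKernel

variable {N : ℕ} {m K : ℝ}

lemma measurable_exp_mul_poissonKer_prod (N : ℕ) (m K : ℝ) :
    Measurable fun q : ℝ × EN N => exp (-K * q.1) * poissonKer N m q.1 q.2 := by
  have := measurable_besselInt (((N : ℝ) - 3) / 2 + 1) (m ^ 2 / 4)
  unfold poissonKer
  fun_prop

lemma measurable_neumannKer_prod (N : ℕ) (m : ℝ) :
    Measurable fun q : ℝ × EN N => neumannKer N m q.1 q.2 :=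
  (measurable_besselInt _ _).comp (by fun_prop)

lemma integrableOn_exp_neg_mul (hK : 0 < K) : IntegrableOn (fun a => exp (-K * a)) (Ioi 0) :=
  integrableOn_exp_mul_Ioi (neg_lt_zero.2 hK) 0

lemma integrable_exp_mul_poissonKer_prod (hm : 0 < m) (hK : 0 < K) :
    Integrable (fun q : ℝ × EN N => exp (-K * q.1) * poissonKer N m q.1 q.2)
      ((volume.restrict (Ioi (0 : ℝ))).prod volume) := by
  have hmeas := (measurable_exp_mul_poissonKer_prod N m K).aestronglyMeasurable
    (μ := (volume.restrict (Ioi (0 : ℝ))).prod volume)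
  refine (integrable_prod_iff hmeas).2 ⟨?_, ?_⟩
  · filter_upwards [ae_restrict_mem measurableSet_Ioi] with a ha
    exact (integrable_poissonKer hm ha).const_mul _
  · refine ((integrableOn_exp_neg_mul hK).mul_const (poissonConst N)).mono'
      hmeas.norm.integral_prod_right' ?_
    filter_upwards [ae_restrict_mem measurableSet_Ioi] with a (ha : 0 < a)
    rw [Real.norm_of_nonneg (integral_nonneg fun y => norm_nonneg _)]
    simp only [norm_mul, Real.norm_of_nonneg (exp_pos _).le,
      Real.norm_of_nonneg (poissonKer_nonneg m ha.le _), integral_const_mul]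
    gcongr
    exact (integral_poissonKer_lt hm ha).le

lemma integrable_greenKer (hm : 0 < m) (hK : 0 < K) : Integrable (greenKer N m K) :=
  (integrable_exp_mul_poissonKer_prod hm hK).integral_prod_right

lemma greenKer_congr (m K : ℝ) {η η' : EN N} (h : ‖η‖ = ‖η'‖) :
    greenKer N m K η = greenKer N m K η' := by
  simp only [greenKer, poissonKer, h]

lemma greenKer_nonneg (m K : ℝ) (η : EN N) : 0 ≤ greenKer N m K η :=
  setIntegral_nonneg measurableSet_Ioi fun _ ha =>
    mul_nonneg (exp_pos _).le (poissonKer_nonneg m (le_of_lt ha) η)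

lemma mul_integral_greenKer_lt (hm : 0 < m) (hK : 0 < K) :
    K * ∫ η, greenKer N m K η < poissonConst N := by
  have hint := integrable_exp_mul_poissonKer_prod (N := N) hm hK
  calc K * ∫ η, greenKer N m K η
      = K * ∫ a in Ioi (0 : ℝ), ∫ η, exp (-K * a) * poissonKer N m a η := by
        rw [integral_integral_swap hint]
        rfl
    _ < K * ∫ a in Ioi (0 : ℝ), exp (-K * a) * poissonConst N := by
        gcongr 1
        refine setIntegral_Ioi_lt_setIntegral_Ioi hint.integral_prod_left
          ((integrableOn_exp_neg_mul hK).mul_const _) fun a ha => ?_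
        rw [integral_const_mul]
        exact mul_lt_mul_of_pos_left (integral_poissonKer_lt hm ha) (exp_pos _)
    _ = poissonConst N := by
        rw [integral_mul_const, integral_exp_mul_Ioi (neg_lt_zero.2 hK)]
        simp only [mul_zero, exp_zero]
        field_simp

lemma integrableOn_exp_mul_poissonKer (hm : 0 < m) (hK : 0 < K) {η : EN N} (hη : η ≠ 0) :
    IntegrableOn (fun a => exp (-K * a) * poissonKer N m a η) (Ioi 0) := by
  have hη2 : 0 < ‖η‖ ^ 2 := pow_pos (norm_pos_iff.2 hη) 2
  have hexp : IntegrableOn (fun a : ℝ => a * exp (-K * a)) (Ioi 0) := by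
    simpa only [rpow_one] using integrableOn_rpow_mul_exp_neg_mul_rpow (p := 1) (s := 1) (b := K)
      (by norm_num) one_pos hK
  refine (hexp.mul_const (2 * besselInt (((N : ℝ) - 3) / 2 + 1) (m ^ 2 / 4) (‖η‖ ^ 2))).mono'
    ((measurable_exp_mul_poissonKer_prod N m K).comp
      measurable_prodMk_right).aestronglyMeasurable ?_
  filter_upwards [ae_restrict_mem measurableSet_Ioi] with a (ha : 0 < a)
  rw [Real.norm_of_nonneg (mul_nonneg (exp_pos _).le (poissonKer_nonneg m ha.le η))]
  have hle : besselInt (((N : ℝ) - 3) / 2 + 1) (m ^ 2 / 4) (a ^ 2 + ‖η‖ ^ 2)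
      ≤ besselInt (((N : ℝ) - 3) / 2 + 1) (m ^ 2 / 4) (‖η‖ ^ 2) :=
    (besselInt_strictAntiOn _ (by positivity)).antitoneOn hη2
      (add_pos_of_nonneg_of_pos (sq_nonneg a) hη2) (le_add_of_nonneg_left (sq_nonneg a))
  calc exp (-K * a) * (2 * a * besselInt (((N : ℝ) - 3) / 2 + 1) (m ^ 2 / 4) (a ^ 2 + ‖η‖ ^ 2))
      ≤ exp (-K * a) * (2 * a * besselInt (((N : ℝ) - 3) / 2 + 1) (m ^ 2 / 4) (‖η‖ ^ 2)) := by
        gcongr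
    _ = _ := by ring

lemma greenKer_lt_greenKer (hm : 0 < m) (hK : 0 < K) {η η' : EN N} (hη : η ≠ 0)
    (h : ‖η‖ < ‖η'‖) : greenKer N m K η' < greenKer N m K η := by
  have hη' : η' ≠ 0 := norm_pos_iff.1 ((norm_nonneg _).trans_lt h)
  refine setIntegral_Ioi_lt_setIntegral_Ioi (integrableOn_exp_mul_poissonKer hm hK hη')
    (integrableOn_exp_mul_poissonKer hm hK hη) fun a (ha : 0 < a) => ?_
  have hpos (ζ : EN N) : 0 < a ^ 2 + ‖ζ‖ ^ 2 := by positivity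
  have hlt : besselInt (((N : ℝ) - 3) / 2 + 1) (m ^ 2 / 4) (a ^ 2 + ‖η'‖ ^ 2)
      < besselInt (((N : ℝ) - 3) / 2 + 1) (m ^ 2 / 4) (a ^ 2 + ‖η‖ ^ 2) :=
    besselInt_strictAntiOn _ (by positivity) (hpos η) (hpos η') (by gcongr)
  unfold poissonKer
  gcongr

lemma hasDerivAt_neumannKer (hm : 0 < m) {η : EN N} (hη : η ≠ 0) (a : ℝ) :
    HasDerivAt (fun a => neumannKer N m a η) (-poissonKer N m a η) a := by
  have hinner : HasDerivAt (fun a : ℝ => a ^ 2 + ‖η‖ ^ 2) (2 * a) a := by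
    simpa using ((hasDerivAt_id a).pow 2).add_const (‖η‖ ^ 2)
  refine ((hasDerivAt_besselInt (((N : ℝ) - 3) / 2) (by positivity)
    (by positivity)).comp a hinner).congr_deriv ?_
  rw [poissonKer]
  ring

lemma integrableOn_exp_mul_neumannKer (hm : 0 < m) (hK : 0 < K) {η : EN N} (hη : η ≠ 0) :
    IntegrableOn (fun a => exp (-K * a) * neumannKer N m a η) (Ioi 0) :=
  (integrableOn_exp_neg_mul hK).mul_bdd
    ((measurable_neumannKer_prod N m).comp measurable_prodMk_right).aestronglyMeasurable
    (Eventually.of_forall fun a => by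
      rw [Real.norm_of_nonneg (neumannKer_nonneg m a η)]
      exact neumannKer_le_neumannKer_zero hm a hη)

lemma integrable_exp_mul_neumannKer_prod (hN : 2 ≤ N) (hm : 0 < m) (hK : 0 < K) :
    Integrable (fun q : ℝ × EN N => exp (-K * q.1) * neumannKer N m q.1 q.2)
      ((volume.restrict (Ioi (0 : ℝ))).prod volume) := by
  have : NeZero N := ⟨by lia⟩
  have hexp : Measurable fun q : ℝ × EN N => exp (-K * q.1) := by fun_prop
  refine ((integrableOn_exp_neg_mul hK).mul_prod (integrable_neumannKer_zero hN hm)).mono'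
    (hexp.mul (measurable_neumannKer_prod N m)).aestronglyMeasurable ?_
  filter_upwards [Measure.quasiMeasurePreserving_snd.ae (ae_ne 0)] with q hq
  rw [norm_mul, Real.norm_of_nonneg (exp_pos _).le, Real.norm_of_nonneg (neumannKer_nonneg _ _ _)]
  gcongr
  exact neumannKer_le_neumannKer_zero hm q.1 hq

lemma integral_exp_mul_neumannKer (hm : 0 < m) (hK : 0 < K) {η : EN N} (hη : η ≠ 0) :
    K * ∫ a in Ioi (0 : ℝ), exp (-K * a) * neumannKer N m a η
      = neumannKer N m 0 η - greenKer N m K η := by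
  have hderiv (a : ℝ) : HasDerivAt (fun a => -(exp (-K * a) * neumannKer N m a η))
      (K * (exp (-K * a) * neumannKer N m a η) + exp (-K * a) * poissonKer N m a η) a := by
    have hexp : HasDerivAt (fun a => exp (-K * a)) (exp (-K * a) * -K) a := by
      simpa using ((hasDerivAt_id a).const_mul (-K)).exp
    refine (hexp.mul (hasDerivAt_neumannKer hm hη a)).neg.congr_deriv ?_
    ring
  have hN := integrableOn_exp_mul_neumannKer hm hK hη
  have hP := integrableOn_exp_mul_poissonKer hm hK hη
  have hNP : IntegrableOn (fun a => K * (exp (-K * a) * neumannKer N m a η)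
      + exp (-K * a) * poissonKer N m a η) (Ioi 0) := (hN.const_mul K).add hP
  have hFTC := integral_Ioi_of_hasDerivAt_of_tendsto (hderiv 0).continuousAt.continuousWithinAt
    (fun a _ => hderiv a) hNP
    (tendsto_zero_of_hasDerivAt_of_integrableOn_Ioi (fun a _ => hderiv a) hNP hN.neg)
  rw [integral_add (hN.const_mul K) hP, integral_const_mul] at hFTC
  simp only [mul_zero, exp_zero, one_mul, zero_sub, neg_neg] at hFTC
  rw [greenKer]
  linarith

end GreenKernel

section ResolventEquation

variable {N : ℕ} {m K Bu Bw : ℝ} {u w : EN N → ℝ}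

lemma integrable_mul_comp_sub {E : Type*} [NormedAddCommGroup E] [InnerProductSpace ℝ E]
    [FiniteDimensional ℝ E] [MeasurableSpace E] [BorelSpace E] {G w : E → ℝ} (hG : Integrable G)
    (hw : Continuous w) (hwB : ∀ y, |w y| ≤ Bw) (z : E) : Integrable fun y => w y * G (y - z) :=
  (hG.comp_sub_right z).bdd_mul hw.aestronglyMeasurable (Eventually.of_forall hwB)

lemma tendsto_integral_mul_neumannKer (hN : 2 ≤ N) (hm : 0 < m) (hw : Continuous w)
    (hwB : ∀ y, |w y| ≤ Bw) (z : EN N) :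
    Tendsto (fun a => ∫ y, w y * neumannKer N m a (y - z)) (𝓝 0)
      (𝓝 (∫ y, w y * neumannKer N m 0 (y - z))) := by
  have : NeZero N := ⟨by lia⟩
  refine tendsto_integral_filter_of_dominated_convergence
    (fun y => Bw * neumannKer N m 0 (y - z)) (Eventually.of_forall fun a => ?_)
    (Eventually.of_forall fun a => ?_)
    (((integrable_neumannKer_zero hN hm).comp_sub_right z).const_mul Bw) ?_
  · exact hw.aestronglyMeasurable.mul
      ((measurable_neumannKer N m a).comp (measurable_id.sub_const z)).aestronglyMeasurable
  · filter_upwards [ae_ne z] with y hy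
    rw [norm_mul, Real.norm_of_nonneg (neumannKer_nonneg _ _ _)]
    exact mul_le_mul (hwB y) (neumannKer_le_neumannKer_zero hm a (sub_ne_zero.2 hy))
      (neumannKer_nonneg _ _ _) ((abs_nonneg _).trans (hwB y))
  · filter_upwards [ae_ne z] with y hy
    exact (hasDerivAt_neumannKer hm (sub_ne_zero.2 hy) 0).continuousAt.tendsto.const_mul _

lemma integral_exp_mul_integral_swap {k : ℝ → EN N → ℝ}
    (hk : Integrable (fun q : ℝ × EN N => exp (-K * q.1) * k q.1 q.2)
      ((volume.restrict (Ioi (0 : ℝ))).prod volume))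
    (hw : Continuous w) (hwB : ∀ y, |w y| ≤ Bw) (z : EN N) :
    ∫ a in Ioi (0 : ℝ), exp (-K * a) * ∫ y, w y * k a (y - z)
      = ∫ y, w y * ∫ a in Ioi (0 : ℝ), exp (-K * a) * k a (y - z) := by
  have hmp : MeasurePreserving (fun q : ℝ × EN N => (q.1, q.2 - z))
      ((volume.restrict (Ioi (0 : ℝ))).prod volume)
      ((volume.restrict (Ioi (0 : ℝ))).prod volume) :=
    (MeasurePreserving.id _).prod (measurePreserving_sub_right volume z)
  have hint : Integrable (fun q : ℝ × EN N => w q.2 * (exp (-K * q.1) * k q.1 (q.2 - z)))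
      ((volume.restrict (Ioi (0 : ℝ))).prod volume) :=
    (hmp.integrable_comp_of_integrable hk).bdd_mul
      (hw.comp continuous_snd).aestronglyMeasurable (Eventually.of_forall fun q => hwB q.2)
  calc ∫ a in Ioi (0 : ℝ), exp (-K * a) * ∫ y, w y * k a (y - z)
      = ∫ a in Ioi (0 : ℝ), ∫ y, w y * (exp (-K * a) * k a (y - z)) := by
        simp only [← integral_const_mul, mul_left_comm]
    _ = ∫ y, ∫ a in Ioi (0 : ℝ), w y * (exp (-K * a) * k a (y - z)) :=
        integral_integral_swap hint
    _ = _ := by simp only [integral_const_mul]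

lemma integral_exp_mul_integral_neumannKer (hN : 2 ≤ N) (hm : 0 < m) (hK : 0 < K)
    (hw : Continuous w) (hwB : ∀ y, |w y| ≤ Bw) (z : EN N) :
    K * ∫ a in Ioi (0 : ℝ), exp (-K * a) * ∫ y, w y * neumannKer N m a (y - z)
      = ∫ y, w y * (neumannKer N m 0 (y - z) - greenKer N m K (y - z)) := by
  have : NeZero N := ⟨by lia⟩
  rw [integral_exp_mul_integral_swap (integrable_exp_mul_neumannKer_prod hN hm hK) hw hwB z,
    ← integral_const_mul]
  refine integral_congr_ae ?_
  filter_upwards [ae_ne z] with y hy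
  rw [← integral_exp_mul_neumannKer hm hK (sub_ne_zero.2 hy), mul_left_comm]

-- If `u` and `w` have the same Poisson and Neumann potentials, then `√(-Δ + m²) u = w`.
lemma poissonConst_mul_eq_integral_greenKer (hN : 2 ≤ N) (hm : 0 < m) (hK : 0 < K)
    (hu : Continuous u) (huB : ∀ y, |u y| ≤ Bu) (hw : Continuous w) (hwB : ∀ y, |w y| ≤ Bw)
    (z : EN N) (huw : ∀ a, 0 < a → ∫ y, u y * poissonKer N m a (y - z)
      = ∫ y, w y * neumannKer N m a (y - z)) :
    poissonConst N * u z = ∫ y, (w y + K * u y) * greenKer N m K (y - z) := by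
  have hG := integrable_greenKer (N := N) hm hK
  have hlim : poissonConst N * u z = ∫ y, w y * neumannKer N m 0 (y - z) :=
    tendsto_nhds_unique (tendsto_integral_mul_poissonKer hm hu huB z)
      (((tendsto_integral_mul_neumannKer hN hm hw hwB z).mono_left nhdsWithin_le_nhds).congr'
        (eventually_nhdsWithin_of_forall fun a ha => (huw a ha).symm))
  have hlaplace : K * ∫ y, u y * greenKer N m K (y - z)
      = ∫ y, w y * (neumannKer N m 0 (y - z) - greenKer N m K (y - z)) := by
    rw [← integral_exp_mul_integral_neumannKer hN hm hK hw hwB z,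
      setIntegral_congr_fun measurableSet_Ioi fun a ha => by rw [← huw a ha],
      integral_exp_mul_integral_swap (integrable_exp_mul_poissonKer_prod hm hK) hu huB z]
    rfl
  simp only [mul_sub, add_mul, mul_assoc] at hlaplace ⊢
  rw [integral_sub (integrable_mul_comp_sub (integrable_neumannKer_zero hN hm) hw hwB z)
    (integrable_mul_comp_sub hG hw hwB z)] at hlaplace
  rw [integral_add (integrable_mul_comp_sub hG hw hwB z)
    ((integrable_mul_comp_sub hG hu huB z).const_mul K), integral_const_mul, hlaplace, hlim]
  ring

lemma IsWeakSolution.poissonConst_mul_trace_eq (hN : 2 ≤ N) (hm : 0 < m) {f : ℝ → ℝ}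
    (hf : Continuous f) {v : ℝ × EN N → ℝ} (hv : IsWeakSolution m f v) (hv0 : ∀ y, 0 ≤ v (0, y))
    {B : ℝ} (hB : ∀ y, v (0, y) ≤ B) (hK : 0 < K) (z : EN N) :
    poissonConst N * v (0, z) =
      ∫ y, (f (v (0, y)) + K * v (0, y)) * greenKer N m K (y - z) := by
  obtain ⟨Bf, -, hBf⟩ := exists_abs_le_of_mem_Icc hf B
  refine poissonConst_mul_eq_integral_greenKer hN hm hK hv.1.continuous_trace (Bu := B)
    (fun y => ?_) (hf.comp hv.1.continuous_trace) (fun y => hBf _ ⟨hv0 y, hB y⟩) z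
    fun a ha => hv.integral_trace_mul_poissonKer hm ha z
  rw [abs_of_nonneg (hv0 y)]
  exact hB y

end ResolventEquation

/-! ### Reflections across hyperplanes -/

section PlaneReflection

variable {E : Type*} [NormedAddCommGroup E] [InnerProductSpace ℝ E] {e : E}

/-- Reflection across the hyperplane `⟪y, e⟫ = l`, for a unit vector `e`. -/
def planeRefl (e : E) (l : ℝ) (y : E) : E := y - (2 * (inner ℝ y e - l)) • e

/-- The open half-space `⟪y, e⟫ > l`. -/
def openHalfSpace (e : E) (l : ℝ) : Set E := {y | l < inner ℝ y e}

lemma isOpen_openHalfSpace (e : E) (l : ℝ) : IsOpen (openHalfSpace e l) :=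
  isOpen_lt (by fun_prop) (by fun_prop)

@[fun_prop]
lemma continuous_planeRefl (e : E) (l : ℝ) : Continuous (planeRefl e l) := by
  unfold planeRefl
  fun_prop

lemma continuous_planeRefl_left (e y : E) : Continuous fun l => planeRefl e l y := by
  unfold planeRefl
  fun_prop

lemma planeRefl_of_inner_eq {l : ℝ} {y : E} (h : inner ℝ y e = l) : planeRefl e l y = y := by
  simp [planeRefl, h]

lemma inner_planeRefl (he : ‖e‖ = 1) (l : ℝ) (y : E) :
    inner ℝ (planeRefl e l y) e = 2 * l - inner ℝ y e := by
  simp only [planeRefl, inner_sub_left, real_inner_smul_left, real_inner_self_eq_norm_sq, he]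
  ring

lemma planeRefl_planeRefl (he : ‖e‖ = 1) (l : ℝ) (y : E) :
    planeRefl e l (planeRefl e l y) = y := by
  conv_lhs => rw [planeRefl, inner_planeRefl he, planeRefl]
  module

lemma planeRefl_mem_openHalfSpace (he : ‖e‖ = 1) {l : ℝ} {y : E} :
    planeRefl e l y ∈ openHalfSpace e l ↔ inner ℝ y e < l := by
  rw [openHalfSpace, mem_ofPred_eq, inner_planeRefl he]
  constructor <;> intro h <;> linarith

lemma planeRefl_eq_reflection_add (he : ‖e‖ = 1) (l : ℝ) (y : E) :
    planeRefl e l y = (ℝ ∙ e)ᗮ.reflection y + (2 * l) • e := by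
  rw [Submodule.reflection_orthogonal_apply, Submodule.reflection_singleton_apply, he, planeRefl,
    real_inner_comm, RCLike.ofReal_one, one_pow, div_one]
  module

lemma norm_planeRefl_sub (he : ‖e‖ = 1) (l : ℝ) (y z : E) :
    ‖planeRefl e l y - z‖ = ‖y - planeRefl e l z‖ := by
  conv_rhs => rw [← planeRefl_planeRefl he l y]
  rw [planeRefl_eq_reflection_add he l (planeRefl e l y), planeRefl_eq_reflection_add he l z,
    add_sub_add_right_eq_sub, ← map_sub, LinearIsometryEquiv.norm_map]

lemma norm_sub_planeRefl_sq (he : ‖e‖ = 1) (l : ℝ) (y z : E) :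
    ‖y - planeRefl e l z‖ ^ 2 = ‖y - z‖ ^ 2 + 4 * (inner ℝ y e - l) * (inner ℝ z e - l) := by
  have h : y - planeRefl e l z = (y - z) + (2 * (inner ℝ z e - l)) • e := by
    rw [planeRefl]
    module
  rw [h, norm_add_sq_real, real_inner_smul_right, norm_smul, he, inner_sub_left, mul_pow,
    Real.norm_eq_abs, sq_abs]
  ring

lemma norm_sub_lt_norm_sub_planeRefl (he : ‖e‖ = 1) {l : ℝ} {y z : E}
    (hy : y ∈ openHalfSpace e l) (hz : z ∈ openHalfSpace e l) :
    ‖y - z‖ < ‖y - planeRefl e l z‖ := by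
  refine lt_of_pow_lt_pow_left₀ 2 (norm_nonneg _) ?_
  rw [norm_sub_planeRefl_sq he]
  have hpos : 0 < (inner ℝ y e - l) * (inner ℝ z e - l) :=
    mul_pos (sub_pos.2 hy) (sub_pos.2 hz)
  linarith

lemma exists_planeRefl_eq {y y' c : E} (h : ‖y - c‖ = ‖y' - c‖) (hne : y ≠ y') :
    ∃ e : E, ‖e‖ = 1 ∧ planeRefl e (inner ℝ c e) y = y' := by
  have hnorm : ‖y - y'‖ ≠ 0 := norm_ne_zero_iff.2 (sub_ne_zero.2 hne)
  refine ⟨‖y - y'‖⁻¹ • (y - y'), by rw [norm_smul, norm_inv, norm_norm, inv_mul_cancel₀ hnorm], ?_⟩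
  have hinner : 2 * inner ℝ (y - c) (y - y') = ‖y - y'‖ ^ 2 := by
    have hsub : y - y' = (y - c) - (y' - c) := by abel
    rw [hsub, norm_sub_sq_real, ← h, inner_sub_right, real_inner_self_eq_norm_sq]
    ring
  have hcoef : 2 * (‖y - y'‖⁻¹ * inner ℝ (y - c) (y - y')) * ‖y - y'‖⁻¹ = 1 := by
    field_simp
    linarith
  rw [planeRefl, ← inner_sub_left, real_inner_smul_right, smul_smul, hcoef]
  module

lemma apply_planeRefl_eq_of_openHalfSpace {u : E → ℝ} (he : ‖e‖ = 1) {l : ℝ}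
    (h : ∀ y ∈ openHalfSpace e l, u (planeRefl e l y) = u y) (y : E) :
    u (planeRefl e l y) = u y := by
  rcases lt_trichotomy l (inner ℝ y e) with hy | hy | hy
  · exact h y hy
  · rw [planeRefl_of_inner_eq hy.symm]
  · have := h _ ((planeRefl_mem_openHalfSpace he).2 hy)
    rwa [planeRefl_planeRefl he, eq_comm] at this

/-- `u` is at most its reflection throughout the half-space `⟪y, e⟫ > l`. -/
def ReflDominates (u : E → ℝ) (e : E) (l : ℝ) : Prop :=
  ∀ z ∈ openHalfSpace e l, u z ≤ u (planeRefl e l z)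

lemma ReflDominates.of_forall_gt {u : E → ℝ} (hu : Continuous u) {l : ℝ}
    (h : ∀ μ > l, ReflDominates u e μ) : ReflDominates u e l := by
  intro z hz
  have hlim := (hu.comp (continuous_planeRefl_left e z)).tendsto l
  refine ge_of_tendsto (hlim.mono_left (nhdsWithin_le_nhds (s := Ioi l))) ?_
  filter_upwards [self_mem_nhdsWithin, nhdsWithin_le_nhds (gt_mem_nhds hz)] with μ hμ hμz
  exact h μ hμ z hμz

lemma apply_two_smul_sub_eq_of_orthonormalBasis {ι : Type*} [Fintype ι]
    (b : OrthonormalBasis ι ℝ E) {l : ι → ℝ} {u : E → ℝ}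
    (h : ∀ i y, u (planeRefl (b i) (l i) y) = u y) (y : E) :
    u ((2 : ℝ) • ∑ i, l i • b i - y) = u y := by
  classical
  set a : ι → E := fun i => (2 * (inner ℝ y (b i) - l i)) • b i
  have hflip : ∀ s : Finset ι, u (y - ∑ i ∈ s, a i) = u y := by
    intro s
    induction s using Finset.induction_on with
    | empty => rw [Finset.sum_empty, sub_zero]
    | insert i s hi ih =>
      have horth : inner ℝ (∑ j ∈ s, a j) (b i) = 0 := by
        rw [sum_inner]
        refine Finset.sum_eq_zero fun j hj => ?_
        rw [real_inner_smul_left, b.orthonormal.2 (ne_of_mem_of_not_mem hj hi), mul_zero]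
      have hrefl : planeRefl (b i) (l i) (y - ∑ j ∈ s, a j) = y - ∑ j ∈ insert i s, a j := by
        rw [planeRefl, inner_sub_left, horth, sub_zero, sub_sub, Finset.sum_insert hi, add_comm]
      rw [← hrefl, h, ih]
  have hsum : ∑ i, a i = (2 : ℝ) • y - (2 : ℝ) • ∑ i, l i • b i := by
    conv_rhs => rw [← b.sum_repr' y]
    rw [Finset.smul_sum, Finset.smul_sum, ← Finset.sum_sub_distrib]
    refine Finset.sum_congr rfl fun i _ => ?_
    rw [real_inner_comm]
    module
  rw [← hflip Finset.univ, hsum]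
  congr 1
  module

lemma periodic_of_symmetric {u : E → ℝ} {c : E} (hc : ∀ y, u ((2 : ℝ) • c - y) = u y)
    (he : ‖e‖ = 1) {l : ℝ} (hl : ∀ y, u (planeRefl e l y) = u y) :
    Function.Periodic u ((4 * (l - inner ℝ c e)) • e) := by
  intro y
  have hcomp : (2 : ℝ) • c - planeRefl e l ((2 : ℝ) • c
      - planeRefl e l (y + (4 * (l - inner ℝ c e)) • e)) = y := by
    conv_lhs => rw [planeRefl, inner_sub_left, inner_planeRefl he, planeRefl, inner_add_left]
    simp only [real_inner_smul_left, real_inner_self_eq_norm_sq, he]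
    module
  rw [← hl (y + _), ← hc, ← hl, ← hc, hcomp]

section Measure

variable [FiniteDimensional ℝ E] [MeasurableSpace E] [BorelSpace E]

lemma measurePreserving_planeRefl (he : ‖e‖ = 1) (l : ℝ) :
    MeasurePreserving (planeRefl e l) := by
  have h : planeRefl e l = (fun y => y + (2 * l) • e) ∘ (ℝ ∙ e)ᗮ.reflection :=
    funext fun y => planeRefl_eq_reflection_add he l y
  rw [h]
  exact (measurePreserving_add_right volume _).comp (LinearIsometryEquiv.measurePreserving _)

lemma measurableEmbedding_planeRefl (he : ‖e‖ = 1) (l : ℝ) :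
    MeasurableEmbedding (planeRefl e l) :=
  (continuous_planeRefl e l).measurableEmbedding
    (Function.LeftInverse.injective (planeRefl_planeRefl he l))

lemma ae_inner_ne (he : ‖e‖ = 1) (l : ℝ) : ∀ᵐ y : E, inner ℝ y e ≠ l := by
  have hmem (y : E) : y ∈ AffineSubspace.mk' (l • e) (ℝ ∙ e)ᗮ ↔ inner ℝ y e = l := by
    rw [AffineSubspace.mem_mk', vsub_eq_sub, Submodule.mem_orthogonal_singleton_iff_inner_left,
      inner_sub_left, real_inner_smul_left, real_inner_self_eq_norm_sq, he, one_pow, mul_one,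
      sub_eq_zero]
  have hne : AffineSubspace.mk' (l • e) (ℝ ∙ e)ᗮ ≠ ⊤ := fun htop => by
    have := (hmem ((l + 1) • e)).1 (htop ▸ AffineSubspace.mem_top ℝ E _)
    rw [real_inner_smul_left, real_inner_self_eq_norm_sq, he] at this
    linarith
  simpa only [ne_eq, SetLike.mem_coe, hmem]
    using measure_eq_zero_iff_ae_notMem.1 (Measure.addHaar_affineSubspace volume _ hne)

lemma integral_eq_setIntegral_openHalfSpace_add (he : ‖e‖ = 1) (l : ℝ) {F : E → ℝ}
    (hF : Integrable F) :
    ∫ y, F y = ∫ y in openHalfSpace e l, (F y + F (planeRefl e l y)) := by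
  have hmp := measurePreserving_planeRefl he l
  have hcompl : ((openHalfSpace e l)ᶜ : Set E) =ᵐ[volume] planeRefl e l ⁻¹' openHalfSpace e l := by
    filter_upwards [ae_inner_ne he l] with y hy
    refine propext (Iff.trans ?_ (planeRefl_mem_openHalfSpace he).symm)
    exact not_lt.trans (le_iff_lt_or_eq.trans (or_iff_left hy))
  have hswap : ∫ y in (openHalfSpace e l)ᶜ, F y
      = ∫ y in openHalfSpace e l, F (planeRefl e l y) := by
    rw [setIntegral_congr_set hcompl,
      ← hmp.setIntegral_preimage_emb (measurableEmbedding_planeRefl he l)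
        (fun y => F (planeRefl e l y)) (openHalfSpace e l)]
    simp only [planeRefl_planeRefl he]
  rw [← integral_add_compl (isOpen_openHalfSpace e l).measurableSet hF, hswap]
  exact (integral_add hF.integrableOn (hmp.integrable_comp_of_integrable hF).integrableOn).symm

end Measure

end PlaneReflection

/-! ### Moving planes for integral equations -/

section MovingPlanes

variable {E : Type*} [NormedAddCommGroup E] [InnerProductSpace ℝ E] [FiniteDimensional ℝ E]
  [MeasurableSpace E] [BorelSpace E] {G u : E → ℝ} {g : ℝ → ℝ} {C B δ : ℝ} {κ K : ℝ≥0} {e : E}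

/-- A nonnegative integrable radial function, strictly decreasing in the distance to the origin.
Its value at the origin is arbitrary, as the kernel may be singular there. -/
structure IsDecreasingKernel (G : E → ℝ) : Prop where
  integrable : Integrable G
  nonneg : ∀ η, 0 ≤ G η
  eq_of_norm_eq : ∀ ⦃η η'⦄, ‖η‖ = ‖η'‖ → G η = G η'
  lt_of_norm_lt : ∀ ⦃η η'⦄, η ≠ 0 → ‖η‖ < ‖η'‖ → G η' < G η

lemma IsDecreasingKernel.planeRefl_sub (hG : IsDecreasingKernel G) (he : ‖e‖ = 1) (l : ℝ)
    (y z : E) : G (planeRefl e l y - z) = G (y - planeRefl e l z) :=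
  hG.eq_of_norm_eq (norm_planeRefl_sub he l y z)

lemma IsDecreasingKernel.sub_planeRefl_lt (hG : IsDecreasingKernel G) (he : ‖e‖ = 1) {l : ℝ}
    {y z : E} (hy : y ∈ openHalfSpace e l) (hz : z ∈ openHalfSpace e l) (hyz : y ≠ z) :
    G (y - planeRefl e l z) < G (y - z) :=
  hG.lt_of_norm_lt (sub_ne_zero.2 hyz) (norm_sub_lt_norm_sub_planeRefl he hy hz)

lemma exists_setIntegral_comp_sub_le (hG : Integrable G) (hG0 : ∀ η, 0 ≤ G η) {θ : ℝ}
    (hθ : 0 < θ) : ∃ η : ℝ≥0∞, 0 < η ∧ ∀ A : Set E, volume A < η →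
      ∀ z, ∫ y in A, G (y - z) ≤ θ := by
  obtain ⟨η, hη, hlt⟩ := exists_pos_setLIntegral_lt_of_measure_lt
    hG.lintegral_lt_top.ne (ENNReal.ofReal_pos.2 hθ).ne'
  refine ⟨η, hη, fun A hA z => ?_⟩
  have htranslate : A = (fun y => y - z) ⁻¹' ((fun y => y + z) ⁻¹' A) := by
    ext y
    simp only [mem_preimage, sub_add_cancel]
  rw [htranslate, (measurePreserving_sub_right volume z).setIntegral_preimage_emb
      (measurableEmbedding_subRight z) G,
    integral_eq_lintegral_of_nonneg_ae (Eventually.of_forall hG0) hG.aestronglyMeasurable.restrict]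
  refine ENNReal.toReal_le_of_le_ofReal hθ.le (hlt _ ?_).le
  rwa [measure_preimage_add_right]

lemma measure_gt_lt_top_of_integrable_sq (hu2 : Integrable fun y => u y ^ 2) {c : ℝ} (hc : 0 < c) :
    volume {y | c < u y} < ∞ :=
  (measure_mono fun _ hy => pow_lt_pow_left₀ hy hc.le two_ne_zero).trans_lt
    (hu2.measure_gt_lt_top (pow_pos hc 2))

lemma tendsto_measure_openHalfSpace_inter (e : E) {s : Set E} (hs : MeasurableSet s)
    (hfin : volume s ≠ ∞) :
    Tendsto (fun l => volume (openHalfSpace e l ∩ s)) atTop (𝓝 0) := by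
  have hlim := tendsto_measure_of_ae_tendsto_indicator (μ := volume) atTop (A := ∅)
    MeasurableSet.empty (fun l => (isOpen_openHalfSpace e l).measurableSet.inter hs) hs hfin
    (Eventually.of_forall fun _ => inter_subset_right)
    (Eventually.of_forall fun y => by
      filter_upwards [eventually_ge_atTop (inner ℝ y e)] with l hl
      simp only [openHalfSpace, mem_inter_iff, mem_ofPred_eq, not_lt.2 hl, false_and,
        mem_empty_iff_false])
  rwa [measure_empty] at hlim

lemma exists_forall_ge_exists_add_smul_lt (hu : Continuous u) (hu2 : Integrable fun y => u y ^ 2)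
    {y₀ : E} (hy₀ : 0 < u y₀) (he : ‖e‖ = 1) :
    ∃ T : ℝ, ∀ t ≥ T, ∃ y, u (y + t • e) < u y := by
  set A : Set E := {y | u y₀ / 2 < u y}
  have hA : IsOpen A := isOpen_lt continuous_const hu
  have hfin : volume A < ∞ := measure_gt_lt_top_of_integrable_sq hu2 (half_pos hy₀)
  set l : ℝ := inner ℝ y₀ e - 1
  have hpos : 0 < volume (openHalfSpace e l ∩ A) :=
    ((isOpen_openHalfSpace e l).inter hA).measure_pos volume
      ⟨y₀, sub_one_lt (inner ℝ y₀ e : ℝ), half_lt_self hy₀⟩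
  obtain ⟨T, hT⟩ := eventually_atTop.1
    ((tendsto_measure_openHalfSpace_inter e hA.measurableSet hfin.ne).eventually_lt_const hpos)
  refine ⟨T - l, fun t ht => ?_⟩
  by_contra! hle
  have hsub : openHalfSpace e l ∩ A
      ⊆ (fun y => y + t • e) ⁻¹' (openHalfSpace e (l + t) ∩ A) := fun y hy => by
    refine ⟨?_, lt_of_lt_of_le hy.2 (hle y)⟩
    have hyl : l < inner ℝ y e := hy.1
    rw [openHalfSpace, mem_ofPred_eq, inner_add_left, real_inner_smul_left,
      real_inner_self_eq_norm_sq, he]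
    linarith
  have hmeas := measure_mono (μ := volume) hsub
  rw [measure_preimage_add_right] at hmeas
  exact (hT (l + t) (by linarith)).not_ge hmeas

lemma not_periodic_of_integrable_sq (hu : Continuous u) (hu2 : Integrable fun y => u y ^ 2)
    {y₀ : E} (hy₀ : 0 < u y₀) {p : E} (hp : p ≠ 0) : ¬Function.Periodic u p := by
  intro hper
  have hp0 : 0 < ‖p‖ := norm_pos_iff.2 hp
  obtain ⟨T, hT⟩ := exists_forall_ge_exists_add_smul_lt hu hu2 hy₀ (norm_smul_inv_norm (𝕜 := ℝ) hp)
  obtain ⟨n, hn⟩ := exists_nat_ge (T / ‖p‖)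
  obtain ⟨y, hy⟩ := hT (n * ‖p‖) ((div_le_iff₀ hp0).1 hn)
  rw [smul_smul, RCLike.ofReal_real_eq_id, id, mul_assoc, mul_inv_cancel₀ hp0.ne', mul_one,
    Nat.cast_smul_eq_nsmul, hper.nsmul n] at hy
  exact hy.false

lemma exists_not_reflDominates (hu : Continuous u) (hu2 : Integrable fun y => u y ^ 2)
    {y₀ : E} (hy₀ : 0 < u y₀) (he : ‖e‖ = 1) : ∃ l, ¬ReflDominates u e l := by
  by_contra! hall
  obtain ⟨T, hT⟩ := exists_forall_ge_exists_add_smul_lt hu hu2 hy₀ (norm_neg e ▸ he)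
  obtain ⟨y, hy⟩ := hT (max T 1) (le_max_left T 1)
  have hpos : 0 < max T 1 := lt_max_of_lt_right one_pos
  have hle := hall (inner ℝ y e - max T 1 / 2) y (sub_lt_self _ (half_pos hpos))
  have hrefl : planeRefl e (inner ℝ y e - max T 1 / 2) y = y + max T 1 • -e := by
    rw [planeRefl]
    module
  rw [hrefl] at hle
  exact hle.not_gt hy

/-- A continuous square-integrable solution `u`, with values in `[0, B]`, of the integral equation
`C u = G * g(u)` with a decreasing kernel `G` and an increasing nonlinearity `g`, which is a
contraction relative to `C` for the values of `u` in `[0, δ]`. -/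
structure IsPotentialSolution (G u : E → ℝ) (g : ℝ → ℝ) (C B δ : ℝ) (κ K : ℝ≥0) : Prop where
  kernel : IsDecreasingKernel G
  continuous : Continuous u
  mem_Icc : ∀ y, u y ∈ Icc 0 B
  integrable_sq : Integrable fun y => u y ^ 2
  mul_eq : ∀ z, C * u z = ∫ y, g (u y) * G (y - z)
  strictMonoOn : StrictMonoOn g (Icc 0 B)
  lipschitzOnWith : LipschitzOnWith K g (Icc 0 B)
  lipschitzOnWith_small : LipschitzOnWith κ g (Icc 0 δ)
  delta_pos : 0 < δ
  mul_integral_lt : κ * ∫ η, G η < C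

/-- The integrand over `⟪y, e⟫ > l` representing the difference of `u` and its reflection. -/
def reflDiff (G u : E → ℝ) (g : ℝ → ℝ) (e : E) (l : ℝ) (z y : E) : ℝ :=
  (g (u y) - g (u (planeRefl e l y))) * (G (y - z) - G (y - planeRefl e l z))

/-- The part of the half-space where `u` exceeds both its reflection and the threshold `δ` below
which the nonlinearity is a contraction. -/
def badSet (u : E → ℝ) (δ : ℝ) (e : E) (l : ℝ) : Set E :=
  openHalfSpace e l ∩ {y | δ < u y ∧ u (planeRefl e l y) < u y}

lemma sub_le_mul_sub_of_lipschitzOnWith {s : Set ℝ} (h : LipschitzOnWith K g s) {a b : ℝ}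
    (ha : a ∈ s) (hb : b ∈ s) (hab : a ≤ b) : g b - g a ≤ K * (b - a) := by
  have hdist := h.dist_le_mul b hb a ha
  rw [Real.dist_eq, Real.dist_eq, abs_of_nonneg (sub_nonneg.2 hab)] at hdist
  exact (le_abs_self _).trans hdist

lemma forall_le_zero_of_forall_le_mul {α : Type*} {s : Set α} {w : α → ℝ} {M ρ : ℝ} (hρ0 : 0 ≤ ρ)
    (hρ1 : ρ < 1) (hM : ∀ x ∈ s, w x ≤ M)
    (h : ∀ T, 0 ≤ T → (∀ x ∈ s, w x ≤ T) → ∀ x ∈ s, w x ≤ ρ * T) : ∀ x ∈ s, w x ≤ 0 := by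
  set T := sSup (insert 0 (w '' s))
  have hbdd : BddAbove (insert 0 (w '' s)) :=
    BddAbove.insert 0 ⟨M, forall_mem_image.2 hM⟩
  have hT0 : 0 ≤ T := le_csSup hbdd (mem_insert 0 _)
  have hwT : ∀ x ∈ s, w x ≤ T := fun x hx =>
    le_csSup hbdd (mem_insert_of_mem 0 (mem_image_of_mem w hx))
  have hTρ : T ≤ ρ * T := csSup_le (insert_nonempty 0 _)
    (forall_mem_insert.2 ⟨mul_nonneg hρ0 hT0, forall_mem_image.2 (h T hT0 hwT)⟩)
  exact fun x hx => (hwT x hx).trans (by nlinarith)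

namespace IsPotentialSolution

lemma pos (h : IsPotentialSolution G u g C B δ κ K) : 0 < C :=
  (mul_nonneg κ.2 (integral_nonneg h.kernel.nonneg)).trans_lt h.mul_integral_lt

lemma continuous_comp (h : IsPotentialSolution G u g C B δ κ K) : Continuous fun y => g (u y) :=
  h.lipschitzOnWith.continuousOn.comp_continuous h.continuous h.mem_Icc

lemma integrable_mul_kernel (h : IsPotentialSolution G u g C B δ κ K) (z : E) :
    Integrable fun y => g (u y) * G (y - z) := by
  obtain ⟨M, hM⟩ := isCompact_Icc.exists_bound_of_continuousOn h.lipschitzOnWith.continuousOn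
  exact (h.kernel.integrable.comp_sub_right z).bdd_mul h.continuous_comp.aestronglyMeasurable
    (Eventually.of_forall fun y => hM _ (h.mem_Icc y))

lemma measurableSet_badSet (h : IsPotentialSolution G u g C B δ κ K) (e : E) (l : ℝ) :
    MeasurableSet (badSet u δ e l) :=
  ((isOpen_openHalfSpace e l).inter ((isOpen_lt continuous_const h.continuous).inter
    (isOpen_lt (h.continuous.comp (continuous_planeRefl e l)) h.continuous))).measurableSet

lemma integrable_mul_kernel_sub (h : IsPotentialSolution G u g C B δ κ K) (z z' : E) :
    Integrable fun y => g (u y) * (G (y - z) - G (y - z')) := by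
  simp only [mul_sub]
  exact (h.integrable_mul_kernel z).sub (h.integrable_mul_kernel z')

lemma reflDiff_eq_add (h : IsPotentialSolution G u g C B δ κ K) (he : ‖e‖ = 1) (l : ℝ) (z : E) :
    reflDiff G u g e l z = fun y => g (u y) * (G (y - z) - G (y - planeRefl e l z))
      + g (u (planeRefl e l y))
        * (G (planeRefl e l y - z) - G (planeRefl e l y - planeRefl e l z)) := by
  funext y
  simp only [reflDiff, h.kernel.planeRefl_sub he, planeRefl_planeRefl he]
  ring

lemma integrable_reflDiff (h : IsPotentialSolution G u g C B δ κ K) (he : ‖e‖ = 1) (l : ℝ)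
    (z : E) : Integrable (reflDiff G u g e l z) := by
  have hint := h.integrable_mul_kernel_sub z (planeRefl e l z)
  rw [h.reflDiff_eq_add he]
  exact hint.add ((measurePreserving_planeRefl he l).integrable_comp_of_integrable hint)

lemma mul_sub_eq_setIntegral_reflDiff (h : IsPotentialSolution G u g C B δ κ K) (he : ‖e‖ = 1)
    (l : ℝ) (z : E) :
    C * (u z - u (planeRefl e l z)) = ∫ y in openHalfSpace e l, reflDiff G u g e l z y := by
  rw [mul_sub, h.mul_eq, h.mul_eq,
    ← integral_sub (h.integrable_mul_kernel z) (h.integrable_mul_kernel _), h.reflDiff_eq_add he,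
    ← integral_eq_setIntegral_openHalfSpace_add he l (h.integrable_mul_kernel_sub _ _)]
  simp only [mul_sub]

lemma comp_le_comp (h : IsPotentialSolution G u g C B δ κ K) {y y' : E}
    (hle : u y ≤ u y') : g (u y) ≤ g (u y') :=
  h.strictMonoOn.monotoneOn (h.mem_Icc _) (h.mem_Icc _) hle

lemma sub_le_of_notMem_badSet (h : IsPotentialSolution G u g C B δ κ K) {l T : ℝ} {y : E}
    (hy : y ∈ openHalfSpace e l) (hle : u (planeRefl e l y) ≤ u y)
    (hT : u y - u (planeRefl e l y) ≤ T) (hbad : y ∉ badSet u δ e l) :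
    g (u y) - g (u (planeRefl e l y)) ≤ κ * T := by
  rcases hle.eq_or_lt with heq | hlt
  · rw [heq, sub_self] at hT ⊢
    exact mul_nonneg κ.2 hT
  · have hsmall : u y ≤ δ := not_lt.1 fun hδ => hbad ⟨hy, hδ, hlt⟩
    exact (sub_le_mul_sub_of_lipschitzOnWith h.lipschitzOnWith_small
      ⟨(h.mem_Icc _).1, hle.trans hsmall⟩ ⟨(h.mem_Icc y).1, hsmall⟩ hle).trans
      (mul_le_mul_of_nonneg_left hT κ.2)

lemma reflDiff_le (h : IsPotentialSolution G u g C B δ κ K) (he : ‖e‖ = 1) {l T : ℝ}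
    (hT0 : 0 ≤ T) {y z : E} (hy : y ∈ openHalfSpace e l) (hz : z ∈ openHalfSpace e l)
    (hyz : y ≠ z) (hT : u y - u (planeRefl e l y) ≤ T) :
    reflDiff G u g e l z y
      ≤ (κ * G (y - z) + K * (badSet u δ e l).indicator (fun y => G (y - z)) y) * T := by
  have hker := h.kernel.sub_planeRefl_lt he hy hz hyz
  have hG := h.kernel.nonneg (y - z)
  have hGR := h.kernel.nonneg (y - planeRefl e l z)
  rcases le_total (u y) (u (planeRefl e l y)) with hle | hle
  · have hind := indicator_nonneg (s := badSet u δ e l) (fun y _ => h.kernel.nonneg (y - z)) y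
    exact (mul_nonpos_of_nonpos_of_nonneg (sub_nonpos.2 (h.comp_le_comp hle))
      (sub_nonneg.2 hker.le)).trans (by positivity)
  · have hdrop : reflDiff G u g e l z y ≤ (g (u y) - g (u (planeRefl e l y))) * G (y - z) :=
      mul_le_mul_of_nonneg_left (sub_le_self _ hGR)
        (sub_nonneg.2 (h.comp_le_comp hle))
    refine hdrop.trans ?_
    by_cases hbad : y ∈ badSet u δ e l
    · have hlip := sub_le_mul_sub_of_lipschitzOnWith h.lipschitzOnWith (h.mem_Icc _)
        (h.mem_Icc y) hle
      have hlipT := hlip.trans (mul_le_mul_of_nonneg_left hT K.2)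
      have hκ : 0 ≤ κ * G (y - z) * T := by positivity
      rw [indicator_of_mem hbad]
      linarith [mul_le_mul_of_nonneg_right hlipT hG]
    · have hlipT := h.sub_le_of_notMem_badSet hy hle hT hbad
      rw [indicator_of_notMem hbad]
      linarith [mul_le_mul_of_nonneg_right hlipT hG]

lemma mul_sub_le (h : IsPotentialSolution G u g C B δ κ K) (he : ‖e‖ = 1) {l θ T : ℝ}
    (hθ : ∀ z, ∫ y in badSet u δ e l, G (y - z) ≤ θ) (hT0 : 0 ≤ T)
    (hT : ∀ y ∈ openHalfSpace e l, u y - u (planeRefl e l y) ≤ T) {z : E}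
    (hz : z ∈ openHalfSpace e l) :
    C * (u z - u (planeRefl e l z)) ≤ (κ * (∫ η, G η) + K * θ) * T := by
  set A := badSet u δ e l
  set Q : E → ℝ := fun y => (κ * G (y - z) + K * A.indicator (fun y => G (y - z)) y) * T
  have hA : MeasurableSet A := h.measurableSet_badSet e l
  have hGz := h.kernel.integrable.comp_sub_right z
  have hsum : Integrable fun y => κ * G (y - z) + K * A.indicator (fun y => G (y - z)) y :=
    (hGz.const_mul _).add ((hGz.indicator hA).const_mul _)
  have hQ : Integrable Q := hsum.mul_const T
  have hQ0 : ∀ y, 0 ≤ Q y := fun y => by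
    have hG := h.kernel.nonneg (y - z)
    have hind := indicator_nonneg (s := A) (fun y _ => h.kernel.nonneg (y - z)) y
    positivity
  have hle : ∀ᵐ y, y ∈ openHalfSpace e l → reflDiff G u g e l z y ≤ Q y := by
    filter_upwards [ae_inner_ne he (inner ℝ z e)] with y hne hy
    exact h.reflDiff_le he hT0 hy hz (fun hyz => hne (hyz ▸ rfl)) (hT y hy)
  calc C * (u z - u (planeRefl e l z))
      = ∫ y in openHalfSpace e l, reflDiff G u g e l z y := h.mul_sub_eq_setIntegral_reflDiff he l z
    _ ≤ ∫ y in openHalfSpace e l, Q y :=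
        setIntegral_mono_on_ae (h.integrable_reflDiff he l z).integrableOn hQ.integrableOn
          (isOpen_openHalfSpace e l).measurableSet hle
    _ ≤ ∫ y, Q y := setIntegral_le_integral hQ (Eventually.of_forall hQ0)
    _ = (κ * (∫ η, G η) + K * ∫ y in A, G (y - z)) * T := by
        rw [integral_mul_const, integral_add (hGz.const_mul _) ((hGz.indicator hA).const_mul _),
          integral_const_mul, integral_const_mul, integral_indicator hA,
          integral_sub_right_eq_self G z]
    _ ≤ (κ * (∫ η, G η) + K * θ) * T := by
        gcongr
        exact hθ z

lemma exists_reflDominates_of_measure_lt (h : IsPotentialSolution G u g C B δ κ K) :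
    ∃ η : ℝ≥0∞, 0 < η ∧ ∀ (e : E) (l : ℝ), ‖e‖ = 1 → volume (badSet u δ e l) < η →
      ReflDominates u e l := by
  have hG0 : 0 ≤ ∫ η, G η := integral_nonneg h.kernel.nonneg
  have hC := h.pos
  obtain ⟨θ, hθ, hθC⟩ : ∃ θ > 0, κ * (∫ η, G η) + K * θ < C := by
    obtain ⟨θ, hθ, hlt⟩ := exists_pos_mul_lt (sub_pos.2 h.mul_integral_lt) (K : ℝ)
    exact ⟨θ, hθ, lt_sub_iff_add_lt'.1 hlt⟩
  obtain ⟨η, hη, hsmall⟩ := exists_setIntegral_comp_sub_le h.kernel.integrable h.kernel.nonneg hθ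
  refine ⟨η, hη, fun e l he hA => ?_⟩
  have hzero : ∀ z ∈ openHalfSpace e l, u z - u (planeRefl e l z) ≤ 0 := by
    refine forall_le_zero_of_forall_le_mul (M := B) (ρ := (κ * (∫ η, G η) + K * θ) / C)
      (by positivity) ((div_lt_one hC).2 hθC) (fun z _ => ?_) fun T hT0 hT z hz => ?_
    · linarith [(h.mem_Icc z).2, (h.mem_Icc (planeRefl e l z)).1]
    · rw [div_mul_eq_mul_div, le_div_iff₀' hC]
      exact h.mul_sub_le he (hsmall _ hA) hT0 hT hz
  exact fun z hz => sub_nonpos.1 (hzero z hz)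

lemma exists_forall_ge_reflDominates (h : IsPotentialSolution G u g C B δ κ K) (he : ‖e‖ = 1) :
    ∃ l, ∀ μ ≥ l, ReflDominates u e μ := by
  obtain ⟨η, hη, hdom⟩ := h.exists_reflDominates_of_measure_lt
  have hlim := tendsto_measure_openHalfSpace_inter e
    (isOpen_lt continuous_const h.continuous).measurableSet
    (measure_gt_lt_top_of_integrable_sq h.integrable_sq h.delta_pos).ne
  obtain ⟨l, hl⟩ := eventually_atTop.1 (hlim.eventually_lt_const hη)
  exact ⟨l, fun μ hμ => hdom e μ he
    ((measure_mono (inter_subset_inter_right _ fun _ hy => hy.1)).trans_lt (hl μ hμ))⟩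

lemma lt_planeRefl (h : IsPotentialSolution G u g C B δ κ K) (he : ‖e‖ = 1) {l : ℝ}
    (hdom : ReflDominates u e l) {y₀ : E} (hy₀ : y₀ ∈ openHalfSpace e l)
    (hne : u (planeRefl e l y₀) ≠ u y₀) {z : E} (hz : z ∈ openHalfSpace e l) :
    u z < u (planeRefl e l z) := by
  set U : Set E := openHalfSpace e l ∩ {y | u y < u (planeRefl e l y)}
  have hU : 0 < volume U :=
    ((isOpen_openHalfSpace e l).inter (isOpen_lt h.continuous
      (h.continuous.comp (continuous_planeRefl e l)))).measure_pos volume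
      ⟨y₀, hy₀, (hdom y₀ hy₀).lt_of_ne' hne⟩
  have hae : ∀ᵐ y, y ≠ z := (ae_inner_ne he (inner ℝ z e)).mono fun y hy hyz => hy (hyz ▸ rfl)
  have hnonneg : 0 ≤ᵐ[volume.restrict (openHalfSpace e l)] fun y => -reflDiff G u g e l z y := by
    refine (ae_restrict_iff' (isOpen_openHalfSpace e l).measurableSet).2 ?_
    filter_upwards [hae] with y hyz hy
    exact neg_nonneg.2 (mul_nonpos_of_nonpos_of_nonneg
      (sub_nonpos.2 (h.comp_le_comp (hdom y hy)))
      (sub_pos.2 (h.kernel.sub_planeRefl_lt he hy hz hyz)).le)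
  have hsupp : U ≤ᵐ[volume]
      (Function.support (fun y => -reflDiff G u g e l z y) ∩ openHalfSpace e l : Set E) := by
    filter_upwards [hae] with y hyz hy
    exact ⟨neg_ne_zero.2 (mul_ne_zero
      (sub_neg.2 (h.strictMonoOn (h.mem_Icc _) (h.mem_Icc _) hy.2)).ne
      (sub_pos.2 (h.kernel.sub_planeRefl_lt he hy.1 hz hyz)).ne'), hy.1⟩
  have hpos := (setIntegral_pos_iff_support_of_nonneg_ae hnonneg
    (h.integrable_reflDiff he l z).neg.integrableOn).2 (hU.trans_le (measure_mono_ae hsupp))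
  rw [integral_neg, ← h.mul_sub_eq_setIntegral_reflDiff he] at hpos
  exact sub_neg.1 (neg_of_mul_neg_right (neg_pos.1 hpos) h.pos.le)

lemma eventually_reflDominates (h : IsPotentialSolution G u g C B δ κ K) (he : ‖e‖ = 1) {l : ℝ}
    (hlt : ∀ z ∈ openHalfSpace e l, u z < u (planeRefl e l z)) :
    ∀ᶠ μ in 𝓝[<] l, ReflDominates u e μ := by
  obtain ⟨η, hη, hdom⟩ := h.exists_reflDominates_of_measure_lt
  have hlim := tendsto_measure_of_ae_tendsto_indicator (μ := volume) (𝓝[<] l)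
    (As := fun μ => badSet u δ e μ) (A := ∅) MeasurableSet.empty (h.measurableSet_badSet e)
    (isOpen_lt continuous_const h.continuous).measurableSet
    (measure_gt_lt_top_of_integrable_sq h.integrable_sq h.delta_pos).ne
    (Eventually.of_forall fun _ _ hy => hy.2.1) ?_
  · rw [measure_empty] at hlim
    exact (hlim.eventually_lt_const hη).mono fun μ hμ => hdom e μ he hμ
  · filter_upwards [ae_inner_ne he l] with y hy
    simp only [mem_empty_iff_false, iff_false]
    rcases lt_or_gt_of_ne hy with hyl | hyl
    · filter_upwards [nhdsWithin_le_nhds (lt_mem_nhds hyl)] with μ hμ hbad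
      exact lt_asymm hμ hbad.1
    · have hcont := (h.continuous.comp (continuous_planeRefl_left e y)).tendsto l
      filter_upwards [nhdsWithin_le_nhds (hcont.eventually_const_lt (hlt y hyl))] with μ hμ hbad
      exact lt_asymm hμ hbad.2.2

lemma exists_symmetric (h : IsPotentialSolution G u g C B δ κ K) {y₀ : E} (hy₀ : 0 < u y₀)
    (he : ‖e‖ = 1) : ∃ l, ∀ y, u (planeRefl e l y) = u y := by
  set S : Set ℝ := {l | ∀ μ ≥ l, ReflDominates u e μ}
  have hne : S.Nonempty := h.exists_forall_ge_reflDominates he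
  have hbdd : BddBelow S := by
    obtain ⟨μ, hμ⟩ := exists_not_reflDominates h.continuous h.integrable_sq hy₀ he
    exact ⟨μ, fun l hl => le_of_not_ge fun hlμ => hμ (hl μ hlμ)⟩
  have hgt : ∀ μ > sInf S, ReflDominates u e μ := fun μ hμ => by
    obtain ⟨s, hs, hsμ⟩ := exists_lt_of_csInf_lt hne hμ
    exact hs μ hsμ.le
  have hdom : ReflDominates u e (sInf S) := .of_forall_gt h.continuous hgt
  refine ⟨sInf S, apply_planeRefl_eq_of_openHalfSpace he ?_⟩
  by_contra! ⟨y₁, hy₁, hne₁⟩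
  obtain ⟨a, ha, hIoo⟩ := mem_nhdsLT_iff_exists_Ioo_subset.1
    (h.eventually_reflDominates he fun z hz => h.lt_planeRefl he hdom hy₁ hne₁ hz)
  obtain ⟨b, hab, hb⟩ := exists_between (mem_Iio.1 ha)
  have hbS : b ∈ S := fun μ hμ => by
    rcases lt_trichotomy (sInf S) μ with hlt | rfl | hlt
    · exact hgt μ hlt
    · exact hdom
    · exact hIoo ⟨hab.trans_le hμ, hlt⟩
  exact hb.not_ge (csInf_le hbdd hbS)

end IsPotentialSolution

lemma IsPotentialSolution.exists_center (h : IsPotentialSolution G u g C B δ κ K) {y₀ : E}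
    (hy₀ : 0 < u y₀) : ∃ c : E, ∀ e : E, ‖e‖ = 1 → ∀ y, u (planeRefl e (inner ℝ c e) y) = u y := by
  set b := stdOrthonormalBasis ℝ E
  choose l hl using fun i => h.exists_symmetric hy₀ (b.orthonormal.1 i)
  refine ⟨∑ i, l i • b i, fun e he => ?_⟩
  obtain ⟨μ, hμ⟩ := h.exists_symmetric hy₀ he
  have hper := periodic_of_symmetric (apply_two_smul_sub_eq_of_orthonormalBasis b hl) he hμ
  obtain rfl : μ = inner ℝ (∑ i, l i • b i) e := by
    by_contra hne
    exact not_periodic_of_integrable_sq h.continuous h.integrable_sq hy₀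
      (smul_ne_zero (mul_ne_zero four_ne_zero (sub_ne_zero.2 hne))
        (norm_ne_zero_iff.1 (he ▸ one_ne_zero))) hper
  exact hμ

end MovingPlanes

/-! ### Symmetry of the trace -/

section TraceCenter

variable {N : ℕ} {m K : ℝ} {f : ℝ → ℝ} {v : ℝ × EN N → ℝ}

lemma HypF.deriv_zero (hf : HypF N f) : deriv f 0 = 0 := by
  have hderiv := (hf.smooth.differentiable one_ne_zero 0).hasDerivAt.hasDerivWithinAt (s := Iic 0)
  have hzero : HasDerivWithinAt f 0 (Iic 0) 0 :=
    (hasDerivWithinAt_const 0 (Iic 0) (0 : ℝ)).congr (fun t ht => hf.nonpos t ht)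
      (hf.nonpos 0 le_rfl)
  exact (uniqueDiffWithinAt_Iic 0).eq_deriv _ hderiv hzero

lemma HypF.exists_abs_deriv_le (hf : HypF N f) {ε : ℝ} (hε : 0 < ε) :
    ∃ δ > 0, ∀ t ∈ Icc 0 δ, |deriv f t| ≤ ε := by
  obtain ⟨δ, hδ, hle⟩ :=
    Metric.continuous_iff.1 (hf.smooth.continuous_deriv le_rfl) 0 ε hε
  refine ⟨δ / 2, half_pos hδ, fun t ht => ?_⟩
  have hdist : dist t 0 < δ := by
    rw [Real.dist_eq, sub_zero, abs_of_nonneg ht.1]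
    linarith [ht.2]
  have := (hle t hdist).le
  rwa [hf.deriv_zero, Real.dist_eq, sub_zero] at this

lemma strictMonoOn_add_mul {s : Set ℝ} {L : ℝ} (hf : Differentiable ℝ f) (hs : Convex ℝ s)
    (hL : ∀ t ∈ s, |deriv f t| ≤ L) (hLK : L < K) : StrictMonoOn (fun t => f t + K * t) s := by
  refine strictMonoOn_of_deriv_pos hs
    (hf.continuous.add (continuous_const_mul K)).continuousOn fun t ht => ?_
  have hderiv : HasDerivAt (fun t => f t + K * t) (deriv f t + K * 1) t :=
    (hf t).hasDerivAt.add ((hasDerivAt_id t).const_mul K)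
  rw [hderiv.deriv]
  linarith [(abs_le.1 (hL t (interior_subset ht))).1]

lemma lipschitzOnWith_add_mul {s : Set ℝ} {L K : ℝ≥0} (hf : Differentiable ℝ f)
    (hs : Convex ℝ s) (hL : ∀ t ∈ s, |deriv f t| ≤ L) :
    LipschitzOnWith (L + K) (fun t => f t + K * t) s := by
  have hfL : LipschitzOnWith L f s :=
    hs.lipschitzOnWith_of_nnnorm_deriv_le (fun t _ => hf t) fun t ht => hL t ht
  have hid : LipschitzWith K fun t : ℝ => K * t := by
    simpa using lipschitzWith_smul (K : ℝ) (β := ℝ)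
  exact hfL.add hid.lipschitzOnWith

lemma isDecreasingKernel_greenKer (hm : 0 < m) (hK : 0 < K) :
    IsDecreasingKernel (greenKer N m K) where
  integrable := integrable_greenKer hm hK
  nonneg := greenKer_nonneg m K
  eq_of_norm_eq _ _ h := greenKer_congr m K h
  lt_of_norm_lt _ _ hη h := greenKer_lt_greenKer hm hK hη h

lemma IsWeakSolution.exists_isPotentialSolution (hN : 2 ≤ N) (hm : 0 < m) (hf : HypF N f)
    (hv : IsWeakSolution m f v) (hv0 : ∀ y, 0 ≤ v (0, y)) :
    ∃ (B δ : ℝ) (κ K K' : ℝ≥0), IsPotentialSolution (greenKer N m K) (fun y => v (0, y))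
      (fun t => f t + K * t) (poissonConst N) B δ κ K' := by
  have hd : Differentiable ℝ f := hf.smooth.differentiable one_ne_zero
  obtain ⟨B, hB⟩ := hv.exists_trace_le hN hm hf hv0
  obtain ⟨L, hL0, hL⟩ := exists_abs_le_of_mem_Icc (hf.smooth.continuous_deriv le_rfl) B
  lift L to ℝ≥0 using hL0
  -- The shift makes `t ↦ f t + K * t` increasing. Its Lipschitz constant near zero is close to `K`,
  -- as `deriv f 0 = 0`, and `K * ∫ G < poissonConst N` whatever `K` is.
  set K : ℝ≥0 := L + 1
  have hK : (0 : ℝ) < K := by positivity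
  obtain ⟨ε, hε, hεI⟩ := exists_pos_mul_lt (sub_pos.2 (mul_integral_greenKer_lt (N := N) hm hK))
    (∫ η, greenKer N m K η)
  lift ε to ℝ≥0 using hε.le
  obtain ⟨δ, hδ, hδε⟩ := hf.exists_abs_deriv_le hε
  exact ⟨B, δ, ε + K, K, L + K,
    { kernel := isDecreasingKernel_greenKer hm hK
      continuous := hv.1.continuous_trace
      mem_Icc := fun y => ⟨hv0 y, hB y⟩
      integrable_sq := hv.1.integrable_trace_sq
      mul_eq := hv.poissonConst_mul_trace_eq hN hm hf.continuous hv0 hB hK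
      strictMonoOn := strictMonoOn_add_mul hd (convex_Icc 0 B) hL (by simp [K])
      lipschitzOnWith := lipschitzOnWith_add_mul hd (convex_Icc 0 B) hL
      lipschitzOnWith_small := lipschitzOnWith_add_mul hd (convex_Icc 0 δ) hδε
      delta_pos := hδ
      mul_integral_lt := by
        push_cast at hεI ⊢
        linarith }⟩

lemma IsWeakSolution.exists_trace_center (hN : 2 ≤ N) (hm : 0 < m) (hf : HypF N f)
    (hv : IsWeakSolution m f v) (hv0 : ∀ y, 0 ≤ v (0, y)) {y₀ : EN N} (hy₀ : v (0, y₀) ≠ 0) :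
    ∃ c : EN N, ∀ e : EN N, ‖e‖ = 1 → ∀ y, v (0, planeRefl e (inner ℝ c e) y) = v (0, y) := by
  obtain ⟨_, _, _, _, _, hsol⟩ := hv.exists_isPotentialSolution hN hm hf hv0
  exact hsol.exists_center ((hv0 y₀).lt_of_ne' hy₀)

end TraceCenter

/-! ### From the trace to the half-space -/

section HalfSpaceReflection

variable {N : ℕ} {m : ℝ} {f : ℝ → ℝ} {u v w : ℝ × EN N → ℝ} {p : ℝ × EN N} {e : EN N}

lemma gradDot_sub_left (hu : DifferentiableAt ℝ u p) (hv : DifferentiableAt ℝ v p) :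
    gradDot (fun q => u q - v q) w p = gradDot u w p - gradDot v w p := by
  simp only [gradDot, fderiv_fun_sub hu hv, sub_apply, sub_mul, Finset.sum_sub_distrib]
  ring

lemma gradDot_neg_right (u v : ℝ × EN N → ℝ) (p : ℝ × EN N) :
    gradDot u (fun q => -v q) p = -gradDot u v p := by
  simp only [gradDot, fderiv_fun_neg, neg_apply, mul_neg, Finset.sum_neg_distrib]
  ring

lemma gradSq_sub (hu : DifferentiableAt ℝ u p) (hv : DifferentiableAt ℝ v p) :
    gradSq (fun q => u q - v q) p = gradSq u p + gradSq v p - 2 * gradDot u v p := by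
  simp only [gradSq, gradDot, fderiv_fun_sub hu hv, sub_apply, sub_mul, mul_sub,
    Finset.sum_sub_distrib, mul_comm (fderiv ℝ v p _) (fderiv ℝ u p _)]
  ring

lemma MemH1.sub (hu : MemH1 u) (hv : MemH1 v) : MemH1 fun p => u p - v p where
  contOn := hu.contOn.sub hv.contOn
  diff p hp := (hu.diff p hp).sub (hv.diff p hp)
  memL2 := ((hu.memL2.add hv.memL2).sub ((hu.integrableOn_mul hv).const_mul 2)).congr
    (Eventually.of_forall fun p => by simp only [Pi.sub_apply, Pi.add_apply]; ring)
  gradL2 := by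
    refine ((hu.gradL2.add hv.gradL2).sub ((hu.integrableOn_gradDot hv).const_mul 2)).congr ?_
    filter_upwards [ae_restrict_mem (measurableSet_upperHalf N)] with p hp
    exact (gradSq_sub (hu.diff p hp) (hv.diff p hp)).symm

lemma MemH1.eqOn_zero_of_integral_eq_zero (hm : 0 < m) (hv : MemH1 v)
    (h : ∫ p in upperHalf N, (gradSq v p + m ^ 2 * v p ^ 2) = 0) : EqOn v 0 (upperHalf N) := by
  have hterm (p : ℝ × EN N) : 0 ≤ m ^ 2 * v p ^ 2 := by positivity
  have henergy := (integral_eq_zero_iff_of_nonneg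
    (fun p => add_nonneg (gradSq_nonneg v p) (hterm p))
    (hv.gradL2.add (hv.memL2.const_mul (m ^ 2)))).1 h
  have hae : v =ᵐ[volume.restrict (upperHalf N)] 0 := by
    filter_upwards [henergy] with p hp
    have hsq : m ^ 2 * v p ^ 2 = 0 :=
      ((add_eq_zero_iff_of_nonneg (gradSq_nonneg v p) (hterm p)).1 hp).2
    simpa [hm.ne'] using hsq
  exact Measure.eqOn_open_of_ae_eq hae (isOpen_upperHalf N)
    (hv.contOn.mono (upperHalf_subset_closedHalf N)) continuousOn_const

/-- The reflection of the half-space that fixes `x` and reflects `y` in `{⟪y, e⟫ = l}`. -/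
def halfRefl (e : EN N) (l : ℝ) (p : ℝ × EN N) : ℝ × EN N := (p.1, planeRefl e l p.2)

lemma halfRefl_halfRefl (he : ‖e‖ = 1) (l : ℝ) (p : ℝ × EN N) :
    halfRefl e l (halfRefl e l p) = p := by
  simp only [halfRefl, planeRefl_planeRefl he]

lemma continuous_halfRefl (e : EN N) (l : ℝ) : Continuous (halfRefl e l) :=
  continuous_fst.prodMk ((continuous_planeRefl e l).comp continuous_snd)

lemma measurableEmbedding_halfRefl (he : ‖e‖ = 1) (l : ℝ) :
    MeasurableEmbedding (halfRefl e l) :=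
  (continuous_halfRefl e l).measurableEmbedding
    (Function.LeftInverse.injective (halfRefl_halfRefl he l))

lemma measurePreserving_halfRefl (he : ‖e‖ = 1) (l : ℝ) :
    MeasurePreserving (halfRefl e l) (volume.restrict (upperHalf N))
      (volume.restrict (upperHalf N)) := by
  rw [volume_restrict_upperHalf]
  exact (MeasurePreserving.id _).prod (measurePreserving_planeRefl he l)

lemma sum_apply_mul_apply_isometry {ι F : Type*} [Fintype ι] [NormedAddCommGroup F]
    [InnerProductSpace ℝ F] [CompleteSpace F] (b : OrthonormalBasis ι ℝ F) (φ ψ : F →L[ℝ] ℝ)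
    (s : F ≃ₗᵢ[ℝ] F) : ∑ i, φ (s (b i)) * ψ (s (b i)) = ∑ i, φ (b i) * ψ (b i) := by
  have hsum (b' : OrthonormalBasis ι ℝ F) : ∑ i, φ (b' i) * ψ (b' i) =
      inner ℝ ((InnerProductSpace.toDual ℝ F).symm φ) ((InnerProductSpace.toDual ℝ F).symm ψ) := by
    rw [← b'.sum_inner_mul_inner]
    refine Finset.sum_congr rfl fun i _ => ?_
    rw [InnerProductSpace.toDual_symm_apply, real_inner_comm, InnerProductSpace.toDual_symm_apply]
  simpa only [OrthonormalBasis.map_apply] using (hsum (b.map s)).trans (hsum b).symm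

lemma hasFDerivAt_halfRefl (he : ‖e‖ = 1) (l : ℝ) (p : ℝ × EN N) :
    HasFDerivAt (halfRefl e l)
      ((ContinuousLinearMap.fst ℝ ℝ (EN N)).prod
        (((ℝ ∙ e)ᗮ.reflection : EN N →L[ℝ] EN N).comp (ContinuousLinearMap.snd ℝ ℝ (EN N)))) p := by
  have hrefl : halfRefl e l = fun p => (p.1, (ℝ ∙ e)ᗮ.reflection p.2 + (2 * l) • e) :=
    funext fun p => by rw [halfRefl, planeRefl_eq_reflection_add he]
  rw [hrefl]
  exact hasFDerivAt_fst.prodMk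
    ((((ℝ ∙ e)ᗮ.reflection : EN N →L[ℝ] EN N).hasFDerivAt.comp p hasFDerivAt_snd).add_const _)

lemma gradDot_comp_halfRefl (he : ‖e‖ = 1) (l : ℝ) (hu : DifferentiableAt ℝ u (halfRefl e l p))
    (hv : DifferentiableAt ℝ v (halfRefl e l p)) :
    gradDot (u ∘ halfRefl e l) (v ∘ halfRefl e l) p = gradDot u v (halfRefl e l p) := by
  have hT := hasFDerivAt_halfRefl he l p
  rw [gradDot, gradDot, (hu.hasFDerivAt.comp p hT).fderiv, (hv.hasFDerivAt.comp p hT).fderiv]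
  have hsum := sum_apply_mul_apply_isometry (EuclideanSpace.basisFun (Fin N) ℝ)
    ((fderiv ℝ u (halfRefl e l p)).comp (ContinuousLinearMap.inr ℝ ℝ (EN N)))
    ((fderiv ℝ v (halfRefl e l p)).comp (ContinuousLinearMap.inr ℝ ℝ (EN N)))
    (ℝ ∙ e)ᗮ.reflection
  simp only [EuclideanSpace.basisFun_apply, ContinuousLinearMap.comp_apply,
    ContinuousLinearMap.inr_apply] at hsum
  simp only [ContinuousLinearMap.comp_apply, ContinuousLinearMap.prod_apply,
    ContinuousLinearMap.coe_fst', ContinuousLinearMap.coe_snd', ex, ey, map_zero]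
  exact congrArg _ hsum

lemma MemH1.comp_halfRefl (hv : MemH1 v) (he : ‖e‖ = 1) (l : ℝ) : MemH1 (v ∘ halfRefl e l) where
  contOn := hv.contOn.comp (continuous_halfRefl e l).continuousOn fun _ hp => hp
  diff p hp := (hv.diff (halfRefl e l p) hp).comp p (hasFDerivAt_halfRefl he l p).differentiableAt
  memL2 := (measurePreserving_halfRefl he l).integrable_comp_of_integrable hv.memL2
  gradL2 := by
    refine ((measurePreserving_halfRefl he l).integrable_comp_of_integrable hv.gradL2).congr ?_
    filter_upwards [ae_restrict_mem (measurableSet_upperHalf N)] with p hp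
    exact (gradDot_comp_halfRefl he l (hv.diff _ hp) (hv.diff _ hp)).symm

/-- Twice the part of `v` that is odd under `halfRefl e l`: the test function that detects the
asymmetry of `v`. -/
def reflOdd (v : ℝ × EN N → ℝ) (e : EN N) (l : ℝ) (p : ℝ × EN N) : ℝ :=
  v p - (v ∘ halfRefl e l) p

lemma reflOdd_halfRefl (he : ‖e‖ = 1) (l : ℝ) (p : ℝ × EN N) :
    reflOdd v e l (halfRefl e l p) = -reflOdd v e l p := by
  simp only [reflOdd, Function.comp_apply, halfRefl_halfRefl he, neg_sub]

lemma MemH1.reflOdd (hv : MemH1 v) (he : ‖e‖ = 1) (l : ℝ) : MemH1 (reflOdd v e l) :=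
  hv.sub (hv.comp_halfRefl he l)

lemma gradSq_reflOdd (hv : MemH1 v) (he : ‖e‖ = 1) (l : ℝ) (hp : p ∈ upperHalf N) :
    gradSq (reflOdd v e l) p =
      gradDot v (reflOdd v e l) p + gradDot v (reflOdd v e l) (halfRefl e l p) := by
  have hT : halfRefl e l p ∈ upperHalf N := hp
  have hodd : (fun q => -reflOdd v e l q) ∘ halfRefl e l = reflOdd v e l :=
    funext fun q => by rw [Function.comp_apply, reflOdd_halfRefl he, neg_neg]
  have hcomp : gradDot (v ∘ halfRefl e l) (reflOdd v e l) p
      = -gradDot v (reflOdd v e l) (halfRefl e l p) := by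
    rw [← gradDot_neg_right, ← gradDot_comp_halfRefl he l (hv.diff _ hT)
      ((hv.reflOdd he l).diff _ hT).fun_neg, hodd]
  calc gradSq (reflOdd v e l) p
      = gradDot v (reflOdd v e l) p - gradDot (v ∘ halfRefl e l) (reflOdd v e l) p :=
        gradDot_sub_left (hv.diff p hp) ((hv.comp_halfRefl he l).diff p hp)
    _ = _ := by rw [hcomp, sub_neg_eq_add]

lemma integral_energy_reflOdd (m : ℝ) (hv : MemH1 v) (he : ‖e‖ = 1) (l : ℝ) :
    ∫ p in upperHalf N, (gradSq (reflOdd v e l) p + m ^ 2 * reflOdd v e l p ^ 2) =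
      2 * ∫ p in upperHalf N,
        (gradDot v (reflOdd v e l) p + m ^ 2 * v p * reflOdd v e l p) := by
  set F : ℝ × EN N → ℝ :=
    fun p => gradDot v (reflOdd v e l) p + m ^ 2 * v p * reflOdd v e l p with hF
  have hT := measurePreserving_halfRefl he l
  have hFint : IntegrableOn F (upperHalf N) := by
    simp only [hF, mul_assoc]
    exact (hv.integrableOn_gradDot (hv.reflOdd he l)).add
      ((hv.integrableOn_mul (hv.reflOdd he l)).const_mul (m ^ 2))
  have hsplit : ∀ p ∈ upperHalf N, gradSq (reflOdd v e l) p + m ^ 2 * reflOdd v e l p ^ 2 =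
      F p + F (halfRefl e l p) := fun p hp => by
    simp only [hF, gradSq_reflOdd hv he l hp, reflOdd_halfRefl he]
    simp only [reflOdd, Function.comp_apply]
    ring
  rw [setIntegral_congr_fun (measurableSet_upperHalf N) hsplit,
    integral_add (g := fun p => F (halfRefl e l p)) hFint
      (hT.integrable_comp_of_integrable hFint),
    hT.integral_comp (measurableEmbedding_halfRefl he l) F, two_mul]

lemma IsWeakSolution.apply_planeRefl_eq (hm : 0 < m) (hv : IsWeakSolution m f v) (he : ‖e‖ = 1)
    {l : ℝ} (hsymm : ∀ y, v (0, planeRefl e l y) = v (0, y)) {x : ℝ} (hx : 0 ≤ x) (y : EN N) :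
    v (x, planeRefl e l y) = v (x, y) := by
  rcases hx.eq_or_lt with rfl | hx
  · exact hsymm y
  have htrace (y : EN N) : reflOdd v e l (0, y) = 0 := by
    simp only [reflOdd, Function.comp_apply, halfRefl, hsymm, sub_self]
  have henergy :
      ∫ p in upperHalf N, (gradSq (reflOdd v e l) p + m ^ 2 * reflOdd v e l p ^ 2) = 0 := by
    rw [integral_energy_reflOdd m hv.1 he l, hv.2 _ (hv.1.reflOdd he l)]
    simp only [htrace, mul_zero, integral_zero]
  have hzero : reflOdd v e l (x, y) = 0 :=
    (hv.1.reflOdd he l).eqOn_zero_of_integral_eq_zero hm henergy hx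
  exact (sub_eq_zero.1 hzero).symm

end HalfSpaceReflection

/-- Under (f1)–(f2), any nonnegative nontrivial weak solution `v` of (P)
is radially symmetric in the `y`-variable with respect to some `y₀ ∈ ℝ^N`. -/
theorem stmt3 (N : ℕ) (hN : 2 ≤ N) (m : ℝ) (hm : 0 < m) (f : ℝ → ℝ) (hf : HypF N f)
    (v : ℝ × EN N → ℝ) (hv : IsWeakSolution m f v)
    (hnonneg : ∀ p ∈ closedHalf N, 0 ≤ v p) (hnt : ∃ y : EN N, v (0, y) ≠ 0) :
    ∃ y₀ : EN N, ∀ x : ℝ, 0 ≤ x → ∀ y y' : EN N,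
      ‖y - y₀‖ = ‖y' - y₀‖ → v (x, y) = v (x, y') := by
  obtain ⟨y₁, hy₁⟩ := hnt
  obtain ⟨c, hc⟩ := hv.exists_trace_center hN hm hf
    (fun y => hnonneg _ (zero_mk_mem_closedHalf y)) hy₁
  refine ⟨c, fun x hx y y' h => ?_⟩
  rcases eq_or_ne y y' with rfl | hne
  · rfl
  obtain ⟨e, he, rfl⟩ := exists_planeRefl_eq h hne
  exact (hv.apply_planeRefl_eq hm he (hc e he) hx y).symm
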